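/- For n ≥ 1, if G ∈ G_{n,n+3} is not a weak subdivision of K_{3,3}, then there exists a bridgeless graph H ∈ G_{n,n+3} such that d_2(H) ≤ d_2(G), d_3(H) < d_3(G) and d_4(H) < d_4(G). Hence, for every p ∈ (0,1), any p-optimal (n,n+3)-graph is a weak subdivision of K_{3,3}. -/

import Mathlib

open Classical Finset

noncomputable section

/-- A finite multigraph: edges carry two (possibly equal) endpoints. -/
structure Multigraph where
  V : Type
  E : Type
  [fintV : Fintype V]
  [fintE : Fintype E]
  src : E → V
  tgt : E → V

attribute [instance] Multigraph.fintV Multigraph.fintE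

namespace Multigraph

variable (G : Multigraph)

/-- Number of vertices. -/
def nV : ℕ := Fintype.card G.V

/-- Number of edges (with multiplicity). -/
def nE : ℕ := Fintype.card G.E

/-- One step along an edge belonging to the edge set `S`. -/
def stepOn (S : Finset G.E) (u v : G.V) : Prop :=
  ∃ e ∈ S, (G.src e = u ∧ G.tgt e = v) ∨ (G.src e = v ∧ G.tgt e = u)

/-- The spanning subgraph with edge set `S` is connected. -/
def ConnOn (S : Finset G.E) : Prop :=
  ∀ u v : G.V, Relation.ReflTransGen (G.stepOn S) u v

/-- `G` is connected. -/
def Connected : Prop := G.ConnOn Finset.univ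

/-- The edge set `F` disconnects `G` (i.e. is a disconnection). -/
def Disconnects (F : Finset G.E) : Prop := ¬ G.ConnOn (Finset.univ \ F)

/-- `d i G`: the number of `i`-disconnections of `G`. -/
def d (i : ℕ) : ℕ :=
  ((Finset.univ : Finset (Finset G.E)).filter fun F => F.card = i ∧ G.Disconnects F).card

/-- The all-terminal reliability `R(G,p)`: each edge is independently retained with
probability `p`; this is the probability that the retained spanning subgraph is connected. -/
def rel (p : ℝ) : ℝ :=
  ∑ S : Finset G.E, if G.ConnOn S then p ^ S.card * (1 - p) ^ (G.nE - S.card) else 0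

/-- `e` is a bridge. -/
def IsBridge (e : G.E) : Prop := G.Disconnects {e}

def Bridgeless : Prop := ∀ e : G.E, ¬ G.IsBridge e

/-- The number of spanning trees of `G` (connected spanning subgraphs with `nV - 1` edges). -/
def treeCount : ℕ :=
  ((Finset.univ : Finset (Finset G.E)).filter fun S => S.card + 1 = G.nV ∧ G.ConnOn S).card

/-- The edge-connectivity: the least size of a disconnecting set of edges. -/
def edgeConnectivity : ℕ :=
  sInf {i : ℕ | ∃ F : Finset G.E, F.card = i ∧ G.Disconnects F}

/-- Degree of a vertex (a loop counts twice). -/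
def deg (v : G.V) : ℕ :=
  (Finset.univ.filter fun e => G.src e = v).card +
    (Finset.univ.filter fun e => G.tgt e = v).card

/-- The edges crossing the vertex set `A`. -/
def cutEdges (A : Finset G.V) : Finset G.E :=
  Finset.univ.filter fun e =>
    (G.src e ∈ A ∧ G.tgt e ∉ A) ∨ (G.src e ∉ A ∧ G.tgt e ∈ A)

/-- `F` is a cut: the set of edges crossing a nontrivial bipartition of the vertices. -/
def IsCut (F : Finset G.E) : Prop :=
  ∃ A : Finset G.V, A.Nonempty ∧ A ≠ Finset.univ ∧ F = G.cutEdges A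

/-- `F` is a bond: a minimal cut. -/
def IsBond (F : Finset G.E) : Prop :=
  G.IsCut F ∧ ∀ F' ⊆ F, G.IsCut F' → F' = F

/-- Number of `s`-bonds of `G`. -/
def bondCount (s : ℕ) : ℕ :=
  ((Finset.univ : Finset (Finset G.E)).filter fun F => F.card = s ∧ G.IsBond F).card

/-- Adjacency of vertices. -/
def Adj (u v : G.V) : Prop :=
  ∃ e : G.E, (G.src e = u ∧ G.tgt e = v) ∨ (G.src e = v ∧ G.tgt e = u)

/-- `G` is simple: no loops and no parallel edges. -/
def IsSimple : Prop :=
  (∀ e : G.E, G.src e ≠ G.tgt e) ∧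
    ∀ e f : G.E,
      ((G.src e = G.src f ∧ G.tgt e = G.tgt f) ∨ (G.src e = G.tgt f ∧ G.tgt e = G.src f)) →
        e = f

end Multigraph

/-- `G ∈ 𝒢_{n,m}`: connected with `n` vertices and `m` edges. -/
def memG (G : Multigraph) (n m : ℕ) : Prop :=
  G.nV = n ∧ G.nE = m ∧ G.Connected

/-- Isomorphism of multigraphs. -/
structure MGIso (G H : Multigraph) where
  vMap : G.V ≃ H.V
  eMap : G.E ≃ H.E
  ends_eq : ∀ e : G.E,
    (H.src (eMap e) = vMap (G.src e) ∧ H.tgt (eMap e) = vMap (G.tgt e)) ∨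
    (H.src (eMap e) = vMap (G.tgt e) ∧ H.tgt (eMap e) = vMap (G.src e))

def IsIso (G H : Multigraph) : Prop := Nonempty (MGIso G H)

/-- `G` is `p`-optimal in `𝒢_{n,m}`. -/
def pOptimal (G : Multigraph) (n m : ℕ) (p : ℝ) : Prop :=
  memG G n m ∧ ∀ H : Multigraph, memG H n m → H.rel p ≤ G.rel p

/-- `G` is uniquely optimal in `𝒢_{n,m}`: strictly more reliable than every
non-isomorphic member, for every `p ∈ (0,1)`. -/
def UniquelyOptimal (G : Multigraph) (n m : ℕ) : Prop :=
  memG G n m ∧ ∀ H : Multigraph, memG H n m → ¬ IsIso G H →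
    ∀ p : ℝ, 0 < p → p < 1 → H.rel p < G.rel p

noncomputable instance quotFintype {α : Type} [Fintype α] {r : α → α → Prop} :
    Fintype (Quot r) :=
  letI := Classical.decEq (Quot r)
  Fintype.ofSurjective (Quot.mk r) fun q => Quot.exists_rep q

/-- Identification of the endpoints of zero-weight edges. -/
def zeroRel (D : Multigraph) (w : D.E → ℕ) : D.V → D.V → Prop :=
  fun u v => ∃ e : D.E, w e = 0 ∧ D.src e = u ∧ D.tgt e = v

/-- The `j`-th node along the chain replacing the edge `e` (whose chain has `w e` edges). -/
def chainNode (D : Multigraph) (w : D.E → ℕ) (e : D.E) (j : ℕ) :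
    Quot (zeroRel D w) ⊕ (Σ f : D.E, Fin (w f - 1)) :=
  if h : 0 < j ∧ j < w e then Sum.inr ⟨e, ⟨j - 1, by omega⟩⟩
  else if j = 0 then Sum.inl (Quot.mk _ (D.src e))
  else Sum.inl (Quot.mk _ (D.tgt e))

/-- The weak subdivision of `D` determined by the chain lengths `w`: each edge `e` is
replaced by a chain with `w e` edges; zero-weight edges are contracted. -/
def subdivide (D : Multigraph) (w : D.E → ℕ) : Multigraph where
  V := Quot (zeroRel D w) ⊕ (Σ f : D.E, Fin (w f - 1))
  E := Σ f : D.E, Fin (w f)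
  src f := chainNode D w f.1 f.2.val
  tgt f := chainNode D w f.1 (f.2.val + 1)

/-- The zero-weight edges contain no cycle (no "zero cycle"): they form a forest. -/
def ZeroAcyclic (D : Multigraph) (w : D.E → ℕ) : Prop :=
  Fintype.card (Quot (zeroRel D w)) +
      (Finset.univ.filter fun e : D.E => w e = 0).card = Fintype.card D.V

/-- `G` is a weak subdivision of `D` with chain lengths `w`. -/
def IsWeakSubdivision (G D : Multigraph) (w : D.E → ℕ) : Prop :=
  ZeroAcyclic D w ∧ IsIso G (subdivide D w)

/-- `D` is a weak distillation of `G`. -/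
def IsWeakDistillation (D G : Multigraph) : Prop :=
  ∃ w : D.E → ℕ, IsWeakSubdivision G D w

/-- The chain lengths differ pairwise by at most one. -/
def BalancedWeights {E : Type} (w : E → ℕ) : Prop := ∀ e f : E, w e ≤ w f + 1

/-- `D ∈ 𝒟_k`: connected, cubic, 3-edge-connected, of exceedance `k`. -/
def memDk (k : ℕ) (D : Multigraph) : Prop :=
  D.Connected ∧ (∀ v : D.V, D.deg v = 3) ∧
    (∀ F : Finset D.E, D.Disconnects F → 3 ≤ F.card) ∧ D.nE = D.nV + k

/-- Identification of the two endpoints of the edge `e`. -/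
def contractRel (G : Multigraph) (e : G.E) : G.V → G.V → Prop :=
  fun u v => u = G.src e ∧ v = G.tgt e

/-- Contraction of the edge `e`. -/
def Multigraph.contract (G : Multigraph) (e : G.E) : Multigraph :=
  letI := Classical.decEq G.E
  { V := Quot (contractRel G e)
    E := {f : G.E // f ≠ e}
    src := fun f => Quot.mk _ (G.src f.1)
    tgt := fun f => Quot.mk _ (G.tgt f.1) }

/-- `G'` is obtained from `G` by shifting an edge: in an intermediate graph `H`
(the expansion of `G` at a vertex by the new edge `e'`), the edges `e, e'` form a
2-bond; contracting `e'` gives back `G`, while contracting `e` gives `G'`. -/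
def IsShiftOf (G G' : Multigraph) : Prop :=
  ∃ (H : Multigraph) (e e' : H.E), e ≠ e' ∧
    H.src e ≠ H.tgt e ∧ H.src e' ≠ H.tgt e' ∧
    H.IsBond {e, e'} ∧
    IsIso (H.contract e') G ∧ IsIso (H.contract e) G'

/-- Equivalence of graphs: repeated edge shifting. -/
def EquivalentGraphs (G G' : Multigraph) : Prop :=
  Relation.ReflTransGen IsShiftOf G G'

/-- `G'` is obtained from `G` by moving the (non-loop) edge `e`: contracting `e` and
expanding a new edge, identified with `e` via `φ`, at an arbitrary vertex.
Equivalently, `G/e` and `G'/φ e` agree, compatibly with the edge identification `φ`. -/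
def MovedEdge (G G' : Multigraph) (φ : G.E ≃ G'.E) (e : G.E) : Prop :=
  G.src e ≠ G.tgt e ∧ G'.src (φ e) ≠ G'.tgt (φ e) ∧
  ∃ ψ : Quot (contractRel G e) ≃ Quot (contractRel G' (φ e)),
    ∀ f : G.E, f ≠ e →
      ((ψ (Quot.mk _ (G.src f)) = Quot.mk _ (G'.src (φ f)) ∧
        ψ (Quot.mk _ (G.tgt f)) = Quot.mk _ (G'.tgt (φ f))) ∨
       (ψ (Quot.mk _ (G.src f)) = Quot.mk _ (G'.tgt (φ f)) ∧
        ψ (Quot.mk _ (G.tgt f)) = Quot.mk _ (G'.src (φ f))))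

/-- Move one edge from the chain `a` to the chain `b`. -/
def moveWeight {E : Type} (w : E → ℕ) (a b : E) : E → ℕ :=
  fun g => if g = b then w b + 1 else if g = a then w a - 1 else w g

/-- The chains of maximal length. -/
def maxChains (D : Multigraph) (w : D.E → ℕ) : Finset D.E :=
  Finset.univ.filter fun e => ∀ f : D.E, w f ≤ w e

/-- The chains of minimal length. -/
def minChains (D : Multigraph) (w : D.E → ℕ) : Finset D.E :=
  Finset.univ.filter fun e => ∀ f : D.E, w e ≤ w f

/-- Degree of `v` within the edge set `S`. -/
def degIn (D : Multigraph) (S : Finset D.E) (v : D.V) : ℕ :=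
  (S.filter fun e => D.src e = v).card + (S.filter fun e => D.tgt e = v).card

/-- `S` is a matching (pairwise non-adjacent edges). -/
def IsMatchingIn (D : Multigraph) (S : Finset D.E) : Prop := ∀ v : D.V, degIn D S v ≤ 1

/-- `S` is a path with three edges. -/
def IsPath3In (D : Multigraph) (S : Finset D.E) : Prop :=
  S.card = 3 ∧ (∀ v : D.V, degIn D S v ≤ 2) ∧
    (Finset.univ.filter fun v : D.V => degIn D S v = 1).card = 2

/-- `S` is the disjoint union of a path with three edges and a single edge. -/
def IsPath3PlusEdgeIn (D : Multigraph) (S : Finset D.E) : Prop :=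
  S.card = 4 ∧ (∀ v : D.V, degIn D S v ≤ 2) ∧
    (Finset.univ.filter fun v : D.V => degIn D S v = 1).card = 4 ∧
    ∃ e ∈ S, degIn D S (D.src e) = 2 ∧ degIn D S (D.tgt e) = 2

/-- `S` is the disjoint union of two paths with two edges each. -/
def IsTwoPlusTwoIn (D : Multigraph) (S : Finset D.E) : Prop :=
  S.card = 4 ∧ (∀ v : D.V, degIn D S v ≤ 2) ∧
    (Finset.univ.filter fun v : D.V => degIn D S v = 1).card = 4 ∧
    ∀ e ∈ S, degIn D S (D.src e) = 1 ∨ degIn D S (D.tgt e) = 1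

/-- Two edges sharing a vertex. -/
def AdjEdges (D : Multigraph) (a b : D.E) : Prop :=
  ∃ v : D.V, (D.src a = v ∨ D.tgt a = v) ∧ (D.src b = v ∨ D.tgt b = v)

/-- The number of incidences of edges of weight `c` at the vertex `u`. -/
def incCount (D : Multigraph) (w : D.E → ℕ) (u : D.V) (c : ℕ) : ℕ :=
  (Finset.univ.filter fun e : D.E => D.src e = u ∧ w e = c).card +
    (Finset.univ.filter fun e : D.E => D.tgt e = u ∧ w e = c).card

/-- The `π^v`-value of the vertex `u`: the number of incident edges of weight `q + 1`
minus the number of incident edges of weight `q - 1`. -/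
def piV (D : Multigraph) (w : D.E → ℕ) (q : ℕ) (u : D.V) : ℤ :=
  (incCount D w u (q + 1) : ℤ) -
    (if q = 0 then 0 else (incCount D w u (q - 1) : ℤ))

/-- The `π^v`-values are balanced: pairwise differences at most one. -/
def BalancedPiV (D : Multigraph) (w : D.E → ℕ) (q : ℕ) : Prop :=
  ∀ u v : D.V, piV D w q u ≤ piV D w q v + 1

/-- The standard weight `q`, where `m = 3kq + r` with `-3k/2 < r ≤ 3k/2`. -/
def stdWeight (m k : ℕ) : ℕ := (2 * m + 3 * k - 1) / (6 * k)

/-- `w` is a balanced weighting of `D` of total size `m` (the implied weak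
subdivision is the generic member of `ℬ_m(D)`). -/
def IsBalancedWeighting (D : Multigraph) (w : D.E → ℕ) (m : ℕ) : Prop :=
  (∑ e : D.E, w e) = m ∧ BalancedWeights w ∧ ZeroAcyclic D w

/-- Every 3-bond of `D` is trivial (consists of the three edges at a single vertex). -/
def OnlyTrivialThreeBonds (D : Multigraph) : Prop :=
  ∀ F : Finset D.E, D.IsBond F → F.card = 3 →
    ∃ u : D.V, F = Finset.univ.filter fun e => D.src e = u ∨ D.tgt e = u

/-- The 3-dipole: two vertices joined by three parallel edges. -/
def dipole3 : Multigraph where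
  V := Fin 2
  E := Fin 3
  src _ := 0
  tgt _ := 1

/-- The complete graph `K₄`. -/
def K4 : Multigraph where
  V := Fin 4
  E := {p : Fin 4 × Fin 4 // p.1 < p.2}
  src p := p.1.1
  tgt p := p.1.2

/-- The complete bipartite graph `K_{3,3}`. -/
def K33 : Multigraph where
  V := Fin 3 ⊕ Fin 3
  E := Fin 3 × Fin 3
  src p := Sum.inl p.1
  tgt p := Sum.inr p.2

/-- The triangular prism `Π₃`; the edges `Sum.inr i` are the rungs. -/
def prism : Multigraph where
  V := Fin 3 × Bool
  E := (Fin 3 × Bool) ⊕ Fin 3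
  src := fun e => match e with
    | Sum.inl (i, b) => (i, b)
    | Sum.inr i => (i, false)
  tgt := fun e => match e with
    | Sum.inl (i, b) => (i + 1, b)
    | Sum.inr i => (i, true)

/-- The Wagner graph (the 4-Möbius ladder): the edges `Sum.inl i` are the rails
(the 8-cycle) and the edges `Sum.inr j` are the rungs. -/
def wagner : Multigraph where
  V := Fin 8
  E := Fin 8 ⊕ Fin 4
  src := fun e => match e with
    | Sum.inl i => i
    | Sum.inr j => ⟨j.val, by omega⟩
  tgt := fun e => match e with
    | Sum.inl i => i + 1
    | Sum.inr j => ⟨j.val + 4, by omega⟩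

/-- The Petersen graph. -/
def petersen : Multigraph where
  V := Fin 5 × Bool
  E := Fin 5 ⊕ Fin 5 ⊕ Fin 5
  src := fun e => match e with
    | Sum.inl i => (i, false)
    | Sum.inr (Sum.inl i) => (i, false)
    | Sum.inr (Sum.inr i) => (i, true)
  tgt := fun e => match e with
    | Sum.inl i => (i + 1, false)
    | Sum.inr (Sum.inl i) => (i, true)
    | Sum.inr (Sum.inr i) => (i + 2, true)

namespace Multigraph
variable {G : Multigraph}

theorem ConnOn.const {S : Finset G.E} (h : G.ConnOn S) {α : Type*} (c : G.V → α)
    (hc : ∀ e ∈ S, c (G.src e) = c (G.tgt e)) (u v : G.V) : c u = c v := by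
  have := h u v
  induction this with
  | refl => rfl
  | tail _ hs ih =>
    obtain ⟨e, he, ⟨h1, h2⟩ | ⟨h1, h2⟩⟩ := hs
    · rw [ih, ← h1, ← h2]; exact hc e he
    · rw [ih, ← h1, ← h2]; exact (hc e he).symm

theorem connOn_of_bool {S : Finset G.E}
    (h : ∀ c : G.V → Bool, (∀ e ∈ S, c (G.src e) = c (G.tgt e)) → ∀ u v, c u = c v) :
    G.ConnOn S := by
  intro u v
  have := h (fun x => decide (Relation.ReflTransGen (G.stepOn S) u x)) (by
    intro e he
    simp only [decide_eq_decide]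
    constructor
    · intro h; exact h.tail ⟨e, he, Or.inl ⟨rfl, rfl⟩⟩
    · intro h; exact h.tail ⟨e, he, Or.inr ⟨rfl, rfl⟩⟩) u v
  simp only [decide_eq_decide] at this
  exact this.1 Relation.ReflTransGen.refl

theorem connOn_iff_bool {S : Finset G.E} : G.ConnOn S ↔
    ∀ c : G.V → Bool, (∀ e ∈ S, c (G.src e) = c (G.tgt e)) → ∀ u v, c u = c v :=
  ⟨fun h c hc => h.const c hc, connOn_of_bool⟩

theorem connOn_of_zmod {S : Finset G.E}
    (h : ∀ c : G.V → ZMod 2, (∀ e ∈ S, c (G.src e) = c (G.tgt e)) → ∀ u v, c u = c v) :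
    G.ConnOn S := by
  apply connOn_of_bool
  intro c hc u v
  have := h (fun x => if c x then 1 else 0) (by intro e he; simp only [hc e he]) u v
  revert this
  cases c u <;> cases c v <;> simp

theorem ConnOn.mono {S T : Finset G.E} (h : G.ConnOn S) (hST : S ⊆ T) : G.ConnOn T :=
  connOn_of_bool fun c hc => h.const c fun e he => hc e (hST he)

variable (G) in
/-- coboundary -/
def cob (S : Finset G.E) : (G.V → ZMod 2) →ₗ[ZMod 2] (S → ZMod 2) where
  toFun c e := c (G.src e) - c (G.tgt e)
  map_add' := by intro a b; ext e; simp; ring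
  map_smul' := by intro a b; ext e; simp; ring

theorem mem_ker_cob {S : Finset G.E} {c : G.V → ZMod 2} :
    c ∈ LinearMap.ker (G.cob S) ↔ ∀ e ∈ S, c (G.src e) = c (G.tgt e) := by
  rw [LinearMap.mem_ker]
  constructor
  · intro h e he
    have := congrFun h ⟨e, he⟩
    simpa [cob, sub_eq_zero] using this
  · intro h; ext e
    simp [cob, sub_eq_zero, h e e.2]

theorem ConnOn.finrank_ker [Nonempty G.V] {S : Finset G.E} (h : G.ConnOn S) :
    Module.finrank (ZMod 2) (LinearMap.ker (G.cob S)) = 1 := by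
  have : LinearMap.ker (G.cob S) = Submodule.span (ZMod 2) {(fun _ => 1 : G.V → ZMod 2)} := by
    ext c
    rw [mem_ker_cob, Submodule.mem_span_singleton]
    constructor
    · intro hc
      obtain ⟨v⟩ := ‹Nonempty G.V›
      refine ⟨c v, ?_⟩
      ext u
      simp [h.const c hc u v]
    · rintro ⟨a, rfl⟩ e _
      simp
  rw [this]
  apply finrank_span_singleton
  intro h0
  obtain ⟨v⟩ := ‹Nonempty G.V›
  have := congrFun h0 v
  simp at this

theorem ConnOn.rank_add [Nonempty G.V] {S : Finset G.E} (h : G.ConnOn S) :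
    Module.finrank (ZMod 2) (LinearMap.range (G.cob S)) + 1 = G.nV := by
  have := LinearMap.finrank_range_add_finrank_ker (G.cob S)
  rw [h.finrank_ker] at this
  simpa [nV] using this

theorem ConnOn.card_le [Nonempty G.V] {S : Finset G.E} (h : G.ConnOn S) :
    G.nV ≤ S.card + 1 := by
  have h1 := h.rank_add
  have h2 := Submodule.finrank_le (LinearMap.range (G.cob S))
  simp at h2
  omega

theorem ConnOn.cob_surj [Nonempty G.V] {S : Finset G.E} (h : G.ConnOn S)
    (hc : S.card + 1 = G.nV) : Function.Surjective (G.cob S) := by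
  rw [← LinearMap.range_eq_top]
  apply Submodule.eq_top_of_finrank_eq
  have := h.rank_add
  simp; omega

theorem ConnOn.exists_tree [Nonempty G.V] {S : Finset G.E} (h : G.ConnOn S) :
    ∃ T ⊆ S, G.ConnOn T ∧ T.card + 1 = G.nV := by
  obtain ⟨T, hT⟩ := Finset.exists_minimal (s := S.powerset.filter fun T => G.ConnOn T)
    ⟨S, by simp [h]⟩
  have hm := hT.1
  simp only [mem_filter, mem_powerset] at hm
  refine ⟨T, hm.1, hm.2, ?_⟩
  have hs : Function.Surjective (G.cob T) := by
    rw [← LinearMap.range_eq_top, eq_top_iff]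
    have hb : ∀ e : T, (Pi.single e 1 : T → ZMod 2) ∈ LinearMap.range (G.cob T) := by
      intro e
      have hn : ¬ G.ConnOn (T.erase e) := by
        intro hcon
        have := hT.2 (y := T.erase e) (by
          simp only [mem_filter, mem_powerset]
          exact ⟨(erase_subset _ _).trans hm.1, hcon⟩) (erase_subset _ _)
        exact (Finset.notMem_erase e.1 T) (this e.2)
      have : ∃ c : G.V → ZMod 2, (∀ x ∈ T.erase e, c (G.src x) = c (G.tgt x)) ∧ ∃ u v, c u ≠ c v := by
        by_contra hcon
        push Not at hcon
        exact hn (connOn_of_zmod fun c hc => hcon c hc)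
      obtain ⟨c, hc, u, v, huv⟩ := this
      have hne : c (G.src e) ≠ c (G.tgt e) := by
        intro heq
        apply huv
        apply hm.2.const c
        intro x hx
        by_cases hxe : x = e
        · rw [hxe]; exact heq
        · exact hc x (by simp [hxe, hx])
      refine ⟨c, ?_⟩
      ext x
      by_cases hxe : x = e
      · subst hxe
        simp only [cob, LinearMap.coe_mk, AddHom.coe_mk, Pi.single_eq_same]
        have : ∀ a b : ZMod 2, a ≠ b → a - b = 1 := by decide
        exact this _ _ hne
      · rw [Pi.single_eq_of_ne hxe]
        simp only [cob, LinearMap.coe_mk, AddHom.coe_mk]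
        rw [hc x (by simp [Subtype.coe_injective.ne hxe]), sub_self]
    intro f _
    rw [← Finset.univ_sum_single f]
    apply Submodule.sum_mem
    intro e _
    have := Submodule.smul_mem _ (f e) (hb e)
    rwa [← Pi.single_smul, smul_eq_mul, mul_one] at this
  have := hm.2.rank_add
  rw [LinearMap.range_eq_top.2 hs] at this
  simpa using this

variable (G) in
/-- number of nondisconnecting i-sets -/
def cI (i : ℕ) : ℕ :=
  ((Finset.univ : Finset (Finset G.E)).filter fun F => F.card = i ∧ G.ConnOn (univ \ F)).card

theorem d_add_cI (i : ℕ) : G.d i + G.cI i = G.nE.choose i := by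
  have h1 : ((Finset.univ : Finset (Finset G.E)).filter fun F => F.card = i).card
      = G.nE.choose i := by
    rw [nE, ← Finset.card_univ, ← Finset.card_powersetCard]
    congr 1
    ext F; simp
  rw [← h1, ← Finset.card_filter_add_card_filter_not (p := fun F => G.Disconnects F), d, cI,
    Finset.filter_filter, Finset.filter_filter]
  simp [Disconnects]

end Multigraph

namespace Multigraph

/-- redirect -/
abbrev moveBridge (G : Multigraph) (e f : G.E) : Multigraph :=
  { V := G.V
    E := G.E
    src := fun g => if g = e then G.tgt e else
      if G.src g = G.tgt e then G.src e else G.src g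
    tgt := fun g => if g = f then G.tgt e else
      if g = e then (if G.tgt f = G.tgt e then G.src e else G.tgt f) else
      if G.tgt g = G.tgt e then G.src e else G.tgt g }

theorem moveBridge_a (G : Multigraph) (e f : G.E) (hef : f ≠ e) (F : Finset G.E)
    (heF : e ∉ F) (h : G.ConnOn (univ \ F)) : (G.moveBridge e f).ConnOn (univ \ F) := by
  apply connOn_of_bool
  intro c hc
  have he := hc e (mem_sdiff.2 ⟨mem_univ _, heF⟩)
  simp only [moveBridge, hef.symm, if_true, if_false] at he
  have key : ∀ u v : G.V, c (if u = G.tgt e then G.src e else u) =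
      c (if v = G.tgt e then G.src e else v) := by
    apply h.const (fun u => c (if u = G.tgt e then G.src e else u))
    intro g hg
    by_cases h1 : g = e
    · subst h1
      dsimp only
      split_ifs <;> first | rfl | (exfalso; tauto)
    · have hgg := hc g hg
      by_cases h2 : g = f
      · subst h2
        simp only [moveBridge, hef, if_true, if_false] at hgg
        exact hgg.trans he
      · simp only [moveBridge, h1, h2, if_false] at hgg
        exact hgg
  have key2 : ∀ u : G.V, c u = c (G.tgt e) := by
    intro u
    by_cases hu : u = G.tgt e
    · rw [hu]
    · rw [he]
      have := key u (G.tgt f)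
      rw [if_neg hu] at this; exact this
  intro u v
  exact (key2 u).trans (key2 v).symm

theorem moveBridge_b (G : Multigraph) (e f : G.E) (hef : f ≠ e) (F : Finset G.E)
    (heF : e ∉ F) (hfF : f ∈ F) (h : G.ConnOn (univ \ F)) :
    (G.moveBridge e f).ConnOn (univ \ (insert e (F.erase f) : Finset G.E)) := by
  apply connOn_of_bool
  intro c hc
  have he := hc f (by simp [hef])
  simp only [moveBridge, hef, if_true, if_false] at he
  have key : ∀ u v : G.V, c (if u = G.tgt e then G.src e else u) =
      c (if v = G.tgt e then G.src e else v) := by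
    apply h.const (fun u => c (if u = G.tgt e then G.src e else u))
    intro g hg
    by_cases h1 : g = e
    · subst h1
      dsimp only
      split_ifs <;> first | rfl | (exfalso; tauto)
    · have h2 : g ≠ f := by rintro rfl; simp at hg; exact hg hfF
      have hgg := hc g (by simp at hg; simp [h1, h2, hg])
      simp only [moveBridge, h1, h2, if_false] at hgg
      exact hgg
  have key2 : ∀ u : G.V, c u = c (G.tgt e) := by
    intro u
    by_cases hu : u = G.tgt e
    · rw [hu]
    · rw [← he]
      have := key u (G.src f)
      rw [if_neg hu] at this; exact this
  intro u v
  exact (key2 u).trans (key2 v).symm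

def bridges (G : Multigraph) : Finset G.E := univ.filter fun e => G.IsBridge e

theorem mem_bridges (G : Multigraph) (e : G.E) : e ∈ G.bridges ↔ ¬ G.ConnOn (univ \ {e}) := by
  unfold bridges; rw [mem_filter]; simp [IsBridge, Disconnects]

theorem bridge_step (G : Multigraph) [Nonempty G.V] (hc : G.Connected) (hE : G.nE = G.nV + 3)
    (e : G.E) (he : G.IsBridge e) :
    ∃ H : Multigraph, H.nV = G.nV ∧ H.nE = G.nE ∧ H.Connected ∧
      (∀ i, G.cI i ≤ H.cI i) ∧ G.cI 3 < H.cI 3 ∧ G.cI 4 < H.cI 4 ∧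
      H.bridges.card < G.bridges.card := by
  obtain ⟨T, -, hT, hTc⟩ := ConnOn.exists_tree hc
  have hX : (univ \ T : Finset G.E).card = 4 := by
    have := card_sdiff_add_card_eq_card (subset_univ T)
    rw [card_univ] at this
    simp only [nE] at hE
    omega
  have hTT : univ \ (univ \ T : Finset G.E) = T := by simp
  have heX : ∀ F : Finset G.E, G.ConnOn (univ \ F) → e ∉ F := by
    intro F hF heF
    apply he
    exact hF.mono (sdiff_subset_sdiff (le_refl _) (by simpa using heF))
  obtain ⟨f, hf⟩ : (univ \ T : Finset G.E).Nonempty := by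
    rw [← card_pos]; omega
  have hef : f ≠ e := by
    rintro rfl
    exact heX _ (by rw [hTT]; exact hT) hf
  have hle : ∀ i, G.cI i ≤ (G.moveBridge e f).cI i := by
    intro i
    apply card_le_card
    intro F hF
    simp only [mem_filter, mem_univ, true_and] at hF ⊢
    exact ⟨hF.1, moveBridge_a G e f hef F (heX _ hF.2) hF.2⟩
  have hlt : ∀ i, (∃ F : Finset G.E, F.card = i ∧ f ∈ F ∧ G.ConnOn (univ \ F)) →
      G.cI i < (G.moveBridge e f).cI i := by
    rintro i ⟨F, hFi, hfF, hF⟩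
    apply card_lt_card
    rw [ssubset_iff_of_subset]
    · refine ⟨(insert e (F.erase f) : Finset G.E), ?_, ?_⟩
      · simp only [mem_filter, mem_univ, true_and]
        refine ⟨?_, moveBridge_b G e f hef F (heX _ hF) hfF hF⟩
        have h1 : e ∉ F.erase f := fun h => heX _ hF (mem_of_mem_erase h)
        have h2 := card_insert_of_notMem h1
        rw [card_erase_of_mem hfF] at h2
        have h3 : 0 < F.card := card_pos.2 ⟨f, hfF⟩
        have h4 : (insert e (F.erase f)).card = i := by omega
        convert h4
      · simp only [mem_filter, mem_univ, true_and]
        rintro ⟨-, h⟩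
        exact heX _ h (mem_insert_self _ _)
    · intro F hF
      simp only [mem_filter, mem_univ, true_and] at hF ⊢
      exact ⟨hF.1, moveBridge_a G e f hef F (heX _ hF.2) hF.2⟩
  refine ⟨G.moveBridge e f, rfl, rfl, ?_, hle, ?_, ?_, ?_⟩
  · have := moveBridge_a G e f hef ∅ (by simp) (by rw [sdiff_empty]; exact hc)
    rw [sdiff_empty] at this; exact this
  · obtain ⟨Y, hY1, hY2, hY3⟩ := exists_subsuperset_card_eq (s := {f}) (t := univ \ T) (n := 3)
      (by simpa using hf) (by simp) (by omega)
    exact hlt 3 ⟨Y, hY3, hY1 (mem_singleton_self f), hT.mono (by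
      rw [← hTT]; exact sdiff_subset_sdiff (le_refl _) hY2)⟩
  · exact hlt 4 ⟨_, hX, hf, by rw [hTT]; exact hT⟩
  · apply card_lt_card
    rw [ssubset_iff_of_subset]
    · refine ⟨e, by simp [bridges, he], ?_⟩
      rw [mem_bridges, not_not]
      have := moveBridge_b G e f hef {f} (by simpa using hef.symm) (by simp) (hT.mono (by
        rw [← hTT]; exact sdiff_subset_sdiff (le_refl _) (by simpa using hf)))
      simpa using this
    · intro g hg
      rw [mem_bridges] at hg ⊢
      intro h
      apply hg
      exact moveBridge_a G e f hef {g} (heX _ h) h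

theorem bridge_full (N : ℕ) : ∀ (G : Multigraph) [Nonempty G.V], G.bridges.card ≤ N →
    G.Connected → G.nE = G.nV + 3 → ¬ G.Bridgeless →
    ∃ H : Multigraph, H.nV = G.nV ∧ H.nE = G.nE ∧ H.Connected ∧ H.Bridgeless ∧
      G.cI 2 ≤ H.cI 2 ∧ G.cI 3 < H.cI 3 ∧ G.cI 4 < H.cI 4 := by
  induction N with
  | zero =>
    intro G _ hN hc hE hb
    exfalso
    apply hb
    intro e he
    have : e ∈ G.bridges := by simp [bridges, he]
    rw [card_eq_zero.1 (Nat.le_zero.1 hN)] at this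
    simp at this
  | succ N ih =>
    intro G _ hN hc hE hb
    simp only [Bridgeless, not_forall, not_not] at hb
    obtain ⟨e, he⟩ := hb
    obtain ⟨H, h1, h2, h3, h4, h5, h6, h7⟩ := bridge_step G hc hE e he
    by_cases hH : H.Bridgeless
    · exact ⟨H, h1, h2, h3, hH, h4 2, h5, h6⟩
    · have : Nonempty H.V := by
        rw [← Fintype.card_pos_iff]
        have : 0 < Fintype.card G.V := Fintype.card_pos
        simp only [nV] at h1; omega
      obtain ⟨K, k1, k2, k3, k4, k5, k6, k7⟩ := ih H (by omega) h3 (by omega) hH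
      exact ⟨K, k1.trans h1, k2.trans h2, k3, k4, (h4 2).trans k5, h5.trans k6, h6.trans k7⟩

/-- iso invariance -/
theorem cI_iso {G H : Multigraph} (f : MGIso G H) (i : ℕ) : G.cI i ≤ H.cI i := by
  apply card_le_card_of_injOn (fun F => F.map f.eMap.toEmbedding)
  · intro F hF
    simp only [coe_filter, mem_univ, true_and, Set.mem_ofPred_eq, card_map] at hF ⊢
    refine ⟨hF.1, connOn_of_bool fun c hc => ?_⟩
    have := hF.2.const (fun v => c (f.vMap v)) (by
      intro e he
      have h1 := hc (f.eMap e) (by simpa using he)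
      rcases f.ends_eq e with ⟨h2, h3⟩ | ⟨h2, h3⟩
      · rw [h2, h3] at h1; exact h1
      · rw [h2, h3] at h1; exact h1.symm)
    intro u v
    have := this (f.vMap.symm u) (f.vMap.symm v)
    simpa using this
  · intro a _ b _ hab
    exact Finset.map_injective _ hab

theorem rel_eq (G : Multigraph) (p : ℝ) :
    G.rel p = ∑ i ∈ range (G.nE + 1), (G.cI i : ℝ) * (p ^ (G.nE - i) * (1 - p) ^ i) := by
  have h0 : G.rel p = ∑ F : Finset G.E, if G.ConnOn (univ \ F) then
      p ^ (G.nE - F.card) * (1 - p) ^ F.card else 0 := by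
    unfold rel
    apply Fintype.sum_bijective (fun S : Finset G.E => univ \ S)
    · have : Function.Involutive (fun S : Finset G.E => univ \ S) := by
        intro S; simp
      exact this.bijective
    · intro S
      have h1 : univ \ (univ \ S) = S := by simp
      have h2 : (univ \ S).card = G.nE - S.card := by
        rw [card_sdiff_of_subset (subset_univ S), card_univ]; rfl
      have h3 : S.card ≤ G.nE := card_le_univ S
      rw [h1, h2]
      congr 3
      omega
  rw [h0, ← sum_fiberwise_of_maps_to (s := univ) (t := range (G.nE + 1)) (g := fun F => F.card)]
  · apply sum_congr rfl
    intro i _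
    rw [← sum_filter, sum_congr rfl (g := fun _ => p ^ (G.nE - i) * (1 - p) ^ i), sum_const,
      nsmul_eq_mul, cI, filter_filter]
    intro F hF
    simp only [mem_filter, mem_univ, true_and] at hF
    rw [hF.1]
  · intro F _
    have : F.card ≤ G.nE := card_le_univ F
    simp; omega

theorem rel_lt {G H : Multigraph} [Nonempty G.V] [Nonempty H.V] (hV : H.nV = G.nV)
    (hE : G.nE = G.nV + 3) (hE' : H.nE = G.nE)
    (hHc : H.Connected) (hb : H.Bridgeless) (h2 : G.cI 2 ≤ H.cI 2) (h3 : G.cI 3 < H.cI 3)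
    (h4 : G.cI 4 < H.cI 4) (p : ℝ) (hp : 0 < p) (hp1 : p < 1) : G.rel p < H.rel p := by
  rw [rel_eq, rel_eq, hE']
  have hq : 0 < 1 - p := by linarith
  apply sum_lt_sum
  · intro i _
    apply mul_le_mul_of_nonneg_right _ (by positivity)
    have : G.cI i ≤ H.cI i := by
      match i with
      | 0 =>
        have h1 := G.d_add_cI 0
        have h2 := H.d_add_cI 0
        have : H.d 0 = 0 := by
          unfold d; rw [card_eq_zero, filter_eq_empty_iff]
          rintro F - ⟨hF, hd⟩
          rw [card_eq_zero] at hF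
          subst hF
          exact hd (by rw [sdiff_empty]; exact hHc)
        simp at h1 h2; omega
      | 1 =>
        have h1 := G.d_add_cI 1
        have h2 := H.d_add_cI 1
        have : H.d 1 = 0 := by
          unfold d; rw [card_eq_zero, filter_eq_empty_iff]
          rintro F - ⟨hF, hd⟩
          rw [card_eq_one] at hF
          obtain ⟨e, rfl⟩ := hF
          exact hb e hd
        simp at h1 h2; omega
      | 2 => exact h2
      | 3 => exact h3.le
      | 4 => exact h4.le
      | j + 5 =>
        have : G.cI (j + 5) = 0 := by
          unfold cI; rw [card_eq_zero, filter_eq_empty_iff]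
          rintro F - ⟨hF, hd⟩
          have := hd.card_le
          rw [card_sdiff_of_subset (subset_univ F), card_univ] at this
          simp only [nE] at hE
          have h3 : F.card ≤ Fintype.card G.E := card_le_univ F
          omega
        omega
    exact_mod_cast this
  · refine ⟨3, by simp; omega, ?_⟩
    apply mul_lt_mul_of_pos_right _ (by positivity)
    exact_mod_cast h3

end Multigraph

namespace Multigraph

section
variable (D : Multigraph) (w : D.E → ℕ)

theorem chainNode_zero (e : D.E) : chainNode D w e 0 = Sum.inl (Quot.mk _ (D.src e)) := by
  simp [chainNode]

theorem chainNode_last (e : D.E) : chainNode D w e (w e) = Sum.inl (Quot.mk _ (D.tgt e)) := by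
  unfold chainNode
  by_cases h : w e = 0
  · rw [dif_neg (by omega), if_pos h]
    congr 1
    exact Quot.sound ⟨e, h, rfl, rfl⟩
  · rw [dif_neg (by omega), if_neg h]

theorem chainNode_mid (e : D.E) (k : Fin (w e - 1)) :
    chainNode D w e (k.val + 1) = Sum.inr ⟨e, k⟩ := by
  unfold chainNode
  rw [dif_pos (by omega)]
  congr

theorem chain_const (c : (subdivide D w).V → Bool) (F : Finset (subdivide D w).E)
    (hc : ∀ x ∈ univ \ F, c ((subdivide D w).src x) = c ((subdivide D w).tgt x))
    (e : D.E) (i j : ℕ) (hij : i ≤ j) (hj : j ≤ w e)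
    (hF : ∀ k (hk : k < w e), i ≤ k → k < j → (⟨e, ⟨k, hk⟩⟩ : (Σ f : D.E, Fin (w f))) ∉ F) :
    c (chainNode D w e i) = c (chainNode D w e j) := by
  induction j, hij using Nat.le_induction with
  | base => rfl
  | succ j hij ih =>
    rw [ih (by omega) (fun k hk h1 h2 => hF k hk h1 (by omega))]
    exact hc (⟨e, ⟨j, by omega⟩⟩ : (Σ f : D.E, Fin (w f)))
      (mem_sdiff.2 ⟨mem_univ _, hF j (by omega) hij (by omega)⟩)

theorem sub_conn_of (F : Finset (Σ f : D.E, Fin (w f)))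
    (h1 : ∀ x ∈ F, ∀ y ∈ F, x.1 = y.1 → x = y)
    (h2 : D.ConnOn (univ \ F.image Sigma.fst)) :
    (subdivide D w).ConnOn (univ \ F) := by
  apply connOn_of_bool
  intro c hc
  have key : ∀ u v : D.V, c (Sum.inl (Quot.mk _ u)) = c (Sum.inl (Quot.mk _ v)) := by
    apply h2.const (fun u => c (Sum.inl (Quot.mk _ u)))
    intro e he
    have := chain_const D w c F hc e 0 (w e) (by omega) le_rfl (by
      intro k hk _ _ hkF
      simp only [mem_sdiff, mem_univ, true_and, mem_image, not_exists, not_and] at he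
      exact he _ hkF rfl)
    rwa [chainNode_zero, chainNode_last] at this
  have key2 : ∀ x : (subdivide D w).V, ∀ u : D.V, c x = c (Sum.inl (Quot.mk _ u)) := by
    intro x u
    rcases x with q | ⟨e, k⟩
    · induction q using Quot.ind with
      | mk v => exact key v u
    · rw [← chainNode_mid]
      by_cases hex : ∃ i : Fin (w e), i.val ≤ k.val ∧ (⟨e, i⟩ : (Σ f : D.E, Fin (w f))) ∈ F
      · obtain ⟨i, hi, hiF⟩ := hex
        have := chain_const D w c F hc e (k.val + 1) (w e) (by omega) le_rfl (by
          intro j hj hj1 hj2 hjF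
          have := h1 _ hiF _ hjF rfl
          simp only [Sigma.mk.injEq, heq_eq_eq, true_and] at this
          rw [this] at hi
          simp at hi; omega)
        rw [this, chainNode_last]; exact key _ _
      · push Not at hex
        have := chain_const D w c F hc e 0 (k.val + 1) (by omega) (by omega) (by
          intro j hj hj1 hj2 hjF
          exact hex ⟨j, hj⟩ (by simp; omega) hjF)
        rw [← this, chainNode_zero]; exact key _ _
  intro x y
  have : Nonempty D.V := by
    rcases x with q | ⟨e, k⟩
    · obtain ⟨v, _⟩ := Quot.exists_rep q; exact ⟨v⟩
    · exact ⟨D.src e⟩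
  obtain ⟨u⟩ := this
  rw [key2 x u, key2 y u]

theorem sub_inj_of (F : Finset (Σ f : D.E, Fin (w f)))
    (h : (subdivide D w).ConnOn (univ \ F)) (e : D.E) (i j : Fin (w e)) (hij : i < j)
    (hi : (⟨e, i⟩ : (Σ f : D.E, Fin (w f))) ∈ F) (hj : (⟨e, j⟩ : (Σ f : D.E, Fin (w f))) ∈ F) :
    False := by
  let c : (subdivide D w).V → Bool := fun x => match x with
    | Sum.inl _ => false
    | Sum.inr y => decide (y.1 = e ∧ i.val ≤ y.2.val ∧ y.2.val < j.val)
  have hn : ∀ f k, c (chainNode D w f k) = decide (f = e ∧ i.val < k ∧ k ≤ j.val) := by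
    intro f k
    unfold chainNode
    split_ifs with h1 h2
    · simp only [c, decide_eq_decide]
      constructor
      · rintro ⟨a, b, d⟩; exact ⟨a, by omega, by omega⟩
      · rintro ⟨a, b, d⟩; exact ⟨a, by omega, by omega⟩
    · simp only [c]; symm; rw [decide_eq_false_iff_not]; omega
    · simp only [c]; symm; rw [decide_eq_false_iff_not]
      rintro ⟨rfl, h3, h4⟩
      have := j.2
      omega
  have := h.const c (by
    intro x hx
    obtain ⟨f, k⟩ := x
    show c (chainNode D w f k.val) = c (chainNode D w f (k.val + 1))
    rw [hn, hn, decide_eq_decide]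
    by_cases hfe : f = e
    · subst hfe
      have h1 : k ≠ i := by rintro rfl; exact (mem_sdiff.1 hx).2 hi
      have h2 : k ≠ j := by rintro rfl; exact (mem_sdiff.1 hx).2 hj
      have h1' : k.val ≠ i.val := fun h => h1 (Fin.ext h)
      have h2' : k.val ≠ j.val := fun h => h2 (Fin.ext h)
      simp only [true_and]
      omega
    · simp [hfe]) (chainNode D w e 0) (chainNode D w e (i.val + 1))
  rw [hn, hn, decide_eq_decide] at this
  have h2 := this.2 ⟨rfl, by omega, by have : i.val < j.val := hij; omega⟩
  omega

theorem sub_base_of (F : Finset (Σ f : D.E, Fin (w f)))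
    (h : (subdivide D w).ConnOn (univ \ F)) :
    D.ConnOn (univ \ F.image Sigma.fst) := by
  apply connOn_of_bool
  intro c hc
  have hT : ∀ e : D.E, (∀ i : Fin (w e), (⟨e, i⟩ : (Σ f : D.E, Fin (w f))) ∉ F) →
      c (D.src e) = c (D.tgt e) := by
    intro e he
    apply hc
    simp only [mem_sdiff, mem_univ, true_and, mem_image, not_exists, not_and]
    rintro ⟨f, i⟩ hf rfl
    exact he i hf
  let c' : (subdivide D w).V → Bool := fun x => match x with
    | Sum.inl q => Quot.lift c (by
        rintro a b ⟨e, he, rfl, rfl⟩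
        exact hT e (fun i => absurd i.2 (by omega))) q
    | Sum.inr y => if ∃ i : Fin (w y.1), i.val ≤ y.2.val ∧ (⟨y.1, i⟩ : (Σ f : D.E, Fin (w f))) ∈ F
        then c (D.tgt y.1) else c (D.src y.1)
  have hn : ∀ f k, k ≤ w f → c' (chainNode D w f k) =
      if ∃ i : Fin (w f), i.val < k ∧ (⟨f, i⟩ : (Σ f : D.E, Fin (w f))) ∈ F
        then c (D.tgt f) else c (D.src f) := by
    intro f k hk
    unfold chainNode
    split_ifs with h1 h2 h3 h3 h4
    · simp only [c']
      rw [if_pos]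
      obtain ⟨i, hi, hi'⟩ := h2
      exact ⟨i, by omega, hi'⟩
    · simp only [c']
      rw [if_neg]
      rintro ⟨i, hi, hi'⟩
      exact h2 ⟨i, by omega, hi'⟩
    · obtain ⟨i, hi, hi'⟩ := h3; omega
    · rfl
    · rfl
    · show c (D.tgt f) = c (D.src f)
      symm
      apply hT
      intro i hi
      exact h4 ⟨i, by omega, hi⟩
  have := h.const c' (by
    rintro ⟨f, k⟩ hx
    show c' (chainNode D w f k.val) = c' (chainNode D w f (k.val + 1))
    rw [hn _ _ (by omega), hn _ _ (by omega)]
    congr 1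
    rw [eq_iff_iff]
    constructor
    · rintro ⟨i, hi, hi'⟩; exact ⟨i, by omega, hi'⟩
    · rintro ⟨i, hi, hi'⟩
      refine ⟨i, ?_, hi'⟩
      have h1 : k ≠ i := by rintro rfl; exact (mem_sdiff.1 hx).2 hi'
      have h1' : k.val ≠ i.val := fun h => h1 (Fin.ext h)
      omega)
  intro u v
  exact this (Sum.inl (Quot.mk _ u)) (Sum.inl (Quot.mk _ v))

theorem sub_conn_iff (F : Finset (Σ f : D.E, Fin (w f))) :
    (subdivide D w).ConnOn (univ \ F) ↔
    (∀ x ∈ F, ∀ y ∈ F, x.1 = y.1 → x = y) ∧ D.ConnOn (univ \ F.image Sigma.fst) := by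
  refine ⟨fun h => ⟨?_, sub_base_of D w F h⟩, fun h => sub_conn_of D w F h.1 h.2⟩
  rintro ⟨e, i⟩ hx ⟨f, j⟩ hy hxy
  simp only at hxy
  subst hxy
  rcases lt_trichotomy i j with h1 | h1 | h1
  · exact (sub_inj_of D w F h e i j h1 hx hy).elim
  · rw [h1]
  · exact (sub_inj_of D w F h e j i h1 hy hx).elim

theorem cI_sub (i : ℕ) : (subdivide D w).cI i =
    ∑ T ∈ powersetCard i (univ : Finset D.E), if D.ConnOn (univ \ T) then ∏ e ∈ T, w e else 0 := by
  have h0 : (subdivide D w).cI i = ((univ : Finset (Finset (Σ f : D.E, Fin (w f)))).filter fun F =>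
      F.card = i ∧ (∀ x ∈ F, ∀ y ∈ F, x.1 = y.1 → x = y) ∧
        D.ConnOn (univ \ F.image Sigma.fst)).card := by
    refine card_bij (fun F _ => F) ?_ (fun _ _ _ _ h => h) ?_
    · intro F hF
      have := (mem_filter.1 hF).2
      exact mem_filter.2 ⟨mem_univ _, this.1, (sub_conn_iff D w F).1 this.2⟩
    · intro F hF
      have := (mem_filter.1 hF).2
      exact ⟨F, mem_filter.2 ⟨mem_univ _, this.1, (sub_conn_iff D w F).2 this.2⟩, rfl⟩
  rw [h0]
  refine (card_eq_sum_card_fiberwise (f := fun F : Finset (Σ f : D.E, Fin (w f)) => F.image Sigma.fst)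
    (t := powersetCard i (univ : Finset D.E)) ?_).trans ?_
  rotate_left
  · apply sum_congr rfl
    intro T hT
    rw [filter_filter]
    split_ifs with hc
    · rw [← Finset.prod_congr rfl (fun e _ => Finset.card_fin (w e)), ← card_pi]
      symm
      refine card_bij (fun f _ => T.attach.image
        (fun e => (⟨e.1, f e.1 e.2⟩ : (Σ f : D.E, Fin (w f))))) ?_ ?_ ?_
      · intro f _
        have him : (T.attach.image
          (fun e => (⟨e.1, f e.1 e.2⟩ : (Σ f : D.E, Fin (w f))))).image Sigma.fst = T := by
          rw [image_image]
          exact attach_image_val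
        have hinj : ∀ x ∈ T.attach.image (fun e => (⟨e.1, f e.1 e.2⟩ : (Σ f : D.E, Fin (w f)))),
            ∀ y ∈ T.attach.image (fun e => (⟨e.1, f e.1 e.2⟩ : (Σ f : D.E, Fin (w f)))),
            x.1 = y.1 → x = y := by
          intro x hx y hy hxy
          rw [mem_image] at hx hy
          obtain ⟨⟨a, ha⟩, -, rfl⟩ := hx
          obtain ⟨⟨b, hb⟩, -, rfl⟩ := hy
          simp only at hxy
          subst hxy
          rfl
        refine mem_filter.2 ⟨mem_univ _, ⟨?_, ?_⟩, him⟩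
        · rw [card_image_of_injective, card_attach]
          · exact (mem_powersetCard.1 hT).2
          · intro a b hab
            simp only [Sigma.mk.injEq] at hab
            exact Subtype.ext hab.1
        · refine ⟨hinj, ?_⟩
          rw [him]; exact hc
      · intro f _ g _ hfg
        funext e he
        have : (⟨e, f e he⟩ : (Σ f : D.E, Fin (w f))) ∈ T.attach.image
            (fun e => (⟨e.1, g e.1 e.2⟩ : (Σ f : D.E, Fin (w f)))) := by
          rw [← hfg, mem_image]
          exact ⟨⟨e, he⟩, mem_attach _ _, rfl⟩
        rw [mem_image] at this
        obtain ⟨⟨b, hb⟩, -, hbe⟩ := this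
        simp only [Sigma.mk.injEq] at hbe
        obtain ⟨rfl, hbe⟩ := hbe
        exact (eq_of_heq hbe).symm
      · intro F hF
        obtain ⟨-, ⟨hF1, hinj, -⟩, hF3⟩ := mem_filter.1 hF
        have hch : ∀ e, ∀ he : e ∈ T, ∃ k : Fin (w e), (⟨e, k⟩ : (Σ f : D.E, Fin (w f))) ∈ F := by
          intro e he
          rw [← hF3, mem_image] at he
          obtain ⟨⟨a, k⟩, hk, rfl⟩ := he
          exact ⟨k, hk⟩
        choose f hf using hch
        refine ⟨f, by simp, ?_⟩
        ext ⟨a, k⟩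
        rw [mem_image]
        constructor
        · rintro ⟨⟨b, hb⟩, -, hbe⟩
          rw [← hbe]; exact hf b hb
        · intro hk
          have ha : a ∈ T := by rw [← hF3]; exact mem_image_of_mem _ hk
          refine ⟨⟨a, ha⟩, mem_attach _ _, ?_⟩
          exact hinj _ (hf a ha) _ hk rfl
    · rw [card_eq_zero, filter_eq_empty_iff]
      rintro F - ⟨⟨-, -, h1⟩, rfl⟩
      exact hc h1
  · intro F hF
    have hF' := (mem_filter.1 hF).2
    rw [Finset.mem_coe, mem_powersetCard]
    refine ⟨subset_univ _, ?_⟩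
    rw [card_image_of_injOn]
    · exact hF'.1
    · intro x hx y hy hxy
      exact hF'.2.1 x hx y hy hxy

end
end Multigraph

namespace Multigraph

theorem zeroAcyclic_of (D : Multigraph) [Nonempty D.V] (w : D.E → ℕ) (T : Finset D.E)
    (hT : D.ConnOn (univ \ T)) (hw : ∀ e ∈ T, 0 < w e) (hc : D.nE + 1 = D.nV + T.card) :
    ZeroAcyclic D w := by
  have hs := hT.cob_surj (by
    rw [card_sdiff_of_subset (subset_univ T), card_univ]
    have : T.card ≤ Fintype.card D.E := card_le_univ T
    simp only [nE] at hc; omega)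
  set Z := (Finset.univ.filter fun e : D.E => w e = 0) with hZ
  have hZT : ∀ e ∈ Z, e ∈ univ \ T := by
    intro e he
    simp only [hZ, mem_filter, mem_univ, true_and] at he
    simp only [mem_sdiff, mem_univ, true_and]
    intro h; have := hw e h; omega
  have hsZ : Function.Surjective (D.cob Z) := by
    intro g
    obtain ⟨c, hc⟩ := hs (fun e => if h : e.1 ∈ Z then g ⟨e.1, h⟩ else 0)
    refine ⟨c, ?_⟩
    ext ⟨e, he⟩
    have := congrFun hc ⟨e, hZT e he⟩
    simp only [he, dif_pos] at this
    exact this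
  have h1 := LinearMap.finrank_range_add_finrank_ker (D.cob Z)
  rw [LinearMap.range_eq_top.2 hsZ] at h1
  simp only [finrank_top, Module.finrank_fintype_fun_eq_card, Fintype.card_coe] at h1
  let Φ : (Quot (zeroRel D w) → ZMod 2) →ₗ[ZMod 2] LinearMap.ker (D.cob Z) :=
    { toFun := fun f => ⟨fun v => f (Quot.mk _ v), by
        rw [mem_ker_cob]
        intro e he
        congr 1
        exact Quot.sound ⟨e, by simpa [hZ] using he, rfl, rfl⟩⟩
      map_add' := fun f g => rfl
      map_smul' := fun f g => rfl }
  have hΦ : Function.Bijective Φ := by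
    constructor
    · intro f g hfg
      funext q
      induction q using Quot.ind with
      | mk v => exact congrFun (congrArg Subtype.val hfg) v
    · rintro ⟨c, hc⟩
      rw [mem_ker_cob] at hc
      refine ⟨fun q => Quot.lift c ?_ q, ?_⟩
      · rintro a b ⟨e, he, rfl, rfl⟩
        exact hc e (by simpa [hZ] using he)
      · rfl
  have h2 := (LinearEquiv.ofBijective Φ hΦ).finrank_eq
  rw [Module.finrank_fintype_fun_eq_card] at h2
  unfold ZeroAcyclic
  rw [h2, ← h1, hZ]; omega

/-- `x` joins `u` and `v` -/
def Joins (G : Multigraph) (x : G.E) (u v : G.V) : Prop :=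
  (G.src x = u ∧ G.tgt x = v) ∨ (G.src x = v ∧ G.tgt x = u)

theorem Joins.symm {G : Multigraph} {x : G.E} {u v : G.V} (h : G.Joins x u v) : G.Joins x v u :=
  Or.symm h

/-- walks -/
def Wk (G : Multigraph) : G.V → List G.E → G.V → Prop
  | u, [], v => u = v
  | u, x :: l, v => ∃ u', G.Joins x u u' ∧ Wk G u' l v

theorem Wk.nodes {G : Multigraph} (l : List G.E) : ∀ {u v : G.V}, G.Wk u l v →
    ∃ nd : ℕ → G.V, nd 0 = u ∧ nd l.length = v ∧
      ∀ i (hi : i < l.length), G.Joins l[i] (nd i) (nd (i + 1)) := by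
  induction l with
  | nil =>
    intro u v h
    have h : u = v := h
    exact ⟨fun _ => u, rfl, h, by intro i hi; simp at hi⟩
  | cons x l ih =>
    intro u v ⟨u', h1, h2⟩
    obtain ⟨nd, n1, n2, n3⟩ := ih h2
    refine ⟨fun i => if i = 0 then u else nd (i - 1), rfl, by simpa using n2, ?_⟩
    intro i hi
    cases i with
    | zero => simpa [n1] using h1
    | succ i => simpa using n3 i (by simpa using hi)

theorem weakSub_of (G D : Multigraph) [Nonempty D.V] (hG : G.Connected)
    (φ : D.V → G.V) (L : D.E → List G.E) (hL : ∀ e, G.Wk (φ (D.src e)) (L e) (φ (D.tgt e)))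
    (hbij : Function.Bijective
      (fun x : (Σ e : D.E, Fin (L e).length) => (L x.1).get x.2))
    (T : Finset D.E) (hT : D.ConnOn (univ \ T)) (hw : ∀ e ∈ T, L e ≠ [])
    (hc : D.nE + 1 = D.nV + T.card) (hn : G.nE + D.nV = G.nV + D.nE) :
    IsWeakSubdivision G D (fun e => (L e).length) := by
  set w : D.E → ℕ := fun e => (L e).length with hwdef
  have hZ := zeroAcyclic_of D w T hT (fun e he => List.length_pos_iff.2 (hw e he)) hc
  refine ⟨hZ, ?_⟩
  choose nd n1 n2 n3 using fun e => (hL e).nodes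
  let ψ : (subdivide D w).V → G.V := fun x => match x with
    | Sum.inl q => Quot.lift φ (by
        rintro a b ⟨e, he, rfl, rfl⟩
        have : L e = [] := List.length_eq_zero_iff.1 he
        have h := hL e
        rw [this] at h; exact h) q
    | Sum.inr y => nd y.1 (y.2.val + 1)
  have hψ : ∀ e j, j ≤ w e → ψ (chainNode D w e j) = nd e j := by
    intro e j hj
    unfold chainNode
    split_ifs with h1 h2
    · show nd e (j - 1 + 1) = nd e j
      congr 1; omega
    · subst h2; exact (n1 e).symm
    · have : j = w e := by omega
      rw [this]; exact (n2 e).symm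
  have hsurj : Function.Surjective ψ := by
    obtain ⟨v0⟩ := ‹Nonempty D.V›
    have := hG.const (fun v => decide (∃ x, ψ x = v)) (by
      intro x _
      obtain ⟨⟨e, i⟩, hx⟩ := hbij.2 x
      simp only at hx
      have hj : G.Joins x (nd e i.val) (nd e (i.val + 1)) := by
        rw [← hx]; exact n3 e i.val i.2
      rw [← hψ e _ (by have := i.2; simp only [hwdef]; omega),
        ← hψ e _ (by have := i.2; simp only [hwdef]; omega)] at hj
      rcases hj with ⟨h1, h2⟩ | ⟨h1, h2⟩
      · rw [h1, h2, decide_eq_decide]; exact ⟨fun _ => ⟨_, rfl⟩, fun _ => ⟨_, rfl⟩⟩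
      · rw [h1, h2, decide_eq_decide]; exact ⟨fun _ => ⟨_, rfl⟩, fun _ => ⟨_, rfl⟩⟩) (φ v0)
    intro v
    have h2 := this v
    rw [decide_eq_decide] at h2
    exact h2.1 ⟨Sum.inl (Quot.mk _ v0), rfl⟩
  have hcE : Fintype.card G.E = ∑ e, w e := by
    rw [← Fintype.card_congr (Equiv.ofBijective _ hbij), Fintype.card_sigma]
    simp [hwdef]
  have hcard : Fintype.card (subdivide D w).V = Fintype.card G.V := by
    show Fintype.card (Quot (zeroRel D w) ⊕ (Σ f : D.E, Fin (w f - 1))) = _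
    rw [Fintype.card_sum, Fintype.card_sigma]
    simp only [Fintype.card_fin]
    have h1 : ∑ e, (w e - 1) + D.nE = ∑ e, w e + (univ.filter fun e : D.E => w e = 0).card := by
      rw [nE, ← card_univ, card_eq_sum_ones, card_filter, ← sum_add_distrib, ← sum_add_distrib]
      apply sum_congr rfl
      intro e _
      split_ifs <;> omega
    unfold ZeroAcyclic at hZ
    simp only [nV, nE] at hn h1
    have h2 : Fintype.card (Quot (zeroRel D w)) = Fintype.card (Quot (zeroRel D w)) := rfl
    omega
  have hb : Function.Bijective ψ := (Fintype.bijective_iff_surjective_and_card ψ).2 ⟨hsurj, hcard⟩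
  refine ⟨⟨(Equiv.ofBijective ψ hb).symm, (Equiv.ofBijective _ hbij).symm, ?_⟩⟩
  intro x
  obtain ⟨⟨e, i⟩, hx⟩ := (Equiv.ofBijective _ hbij).surjective x
  have hi := i.2
  have hx' : (L e).get i = x := hx
  have hE : (Equiv.ofBijective _ hbij).symm x = ⟨e, i⟩ := by
    rw [← hx]; exact Equiv.symm_apply_apply _ _
  have hj : G.Joins x (nd e i.val) (nd e (i.val + 1)) := by rw [← hx']; exact n3 e i.val i.2
  rw [← hψ e _ (by simp only [hwdef]; omega), ← hψ e _ (by simp only [hwdef]; omega)] at hj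
  have hA : ∀ y, (Equiv.ofBijective ψ hb).symm (ψ y) = y := fun y =>
    (Equiv.ofBijective ψ hb).symm_apply_apply y
  have key : ∀ y : (Σ f : D.E, Fin (w f)), y = ⟨e, i⟩ →
      ((subdivide D w).src y = (Equiv.ofBijective ψ hb).symm (G.src x) ∧
       (subdivide D w).tgt y = (Equiv.ofBijective ψ hb).symm (G.tgt x)) ∨
      ((subdivide D w).src y = (Equiv.ofBijective ψ hb).symm (G.tgt x) ∧
       (subdivide D w).tgt y = (Equiv.ofBijective ψ hb).symm (G.src x)) := by
    rintro y rfl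
    rcases hj with ⟨h1, h2⟩ | ⟨h1, h2⟩
    · left; rw [h1, h2]; exact ⟨(hA _).symm, (hA _).symm⟩
    · right; rw [h1, h2]; exact ⟨(hA _).symm, (hA _).symm⟩
  exact key _ hE

end Multigraph

namespace Multigraph

theorem Wk.append {G : Multigraph} {l₁ l₂ : List G.E} : ∀ {u m v : G.V}, G.Wk u l₁ m → G.Wk m l₂ v →
    G.Wk u (l₁ ++ l₂) v := by
  induction l₁ with
  | nil => intro u m v h1 h2; have h1 : u = m := h1; subst h1; exact h2
  | cons x l ih => rintro u m v ⟨u', h, h'⟩ h2; exact ⟨u', h, ih h' h2⟩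

theorem Wk.rev {G : Multigraph} {l : List G.E} : ∀ {u v : G.V}, G.Wk u l v → G.Wk v l.reverse u := by
  induction l with
  | nil => intro u v h; exact (show u = v from h).symm
  | cons x l ih =>
    rintro u v ⟨u', h, h'⟩
    rw [List.reverse_cons]
    exact (ih h').append ⟨u, h.symm, rfl⟩

/-- model entries -/
structure Ent (E : Type) where
  a : ℕ
  b : ℕ
  f : Bool
  l : List E

/-- unflagged entries span -/
def Good {E : Type} (M : List (Ent E)) : Prop :=
  ∀ c : ℕ → Bool, (∀ t ∈ M, t.f = false → c t.a = c t.b) → ∀ t ∈ M, c t.a = c t.b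

/-- model of a subgraph -/
structure Mod (G : Multigraph) (M : List (Ent G.E)) (φ : ℕ → G.V) (j : ℕ) : Prop where
  wk : ∀ t ∈ M, G.Wk (φ t.a) t.l (φ t.b)
  nodup : (M.flatMap (·.l)).Nodup
  flag : ∀ t ∈ M, t.f = true → t.l ≠ []
  cnt : M.countP (·.f) = j
  good : Good M

/-- has a model with shape `D` -/
def HasM (G : Multigraph) (D : List (ℕ × ℕ)) (S : Finset G.E) (j : ℕ) : Prop :=
  ∃ M φ, M.map (fun t => (t.a, t.b)) = D ∧ Mod G M φ j ∧ ∀ x, x ∈ M.flatMap (·.l) ↔ x ∈ S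

theorem perm_match {α β γ : Type*} (g : α → γ) (h : β → γ) : ∀ (D : List β) (M : List α),
    (M.map g).Perm (D.map h) → ∃ M' : List α, M'.Perm M ∧ List.Forall₂ (fun t d => g t = h d) M' D := by
  intro D
  induction D with
  | nil => intro M hp; simp at hp; subst hp; exact ⟨[], List.Perm.refl _, List.Forall₂.nil⟩
  | cons d D ih =>
    intro M hp
    have : h d ∈ M.map g := hp.mem_iff.2 (by simp)
    obtain ⟨t, ht, htd⟩ := List.mem_map.1 this
    obtain ⟨M₁, M₂, rfl⟩ := List.append_of_mem ht
    have hp2 : (M₁ ++ t :: M₂).Perm (t :: (M₁ ++ M₂)) := List.perm_middle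
    have hp3 := (hp2.map g).symm.trans hp
    rw [List.map_cons, List.map_cons, htd] at hp3
    obtain ⟨M', h1, h2⟩ := ih _ hp3.cons_inv
    exact ⟨t :: M', (h1.cons t).trans hp2.symm, List.Forall₂.cons htd h2⟩

def nrm (x y : ℕ) : ℕ × ℕ := if x ≤ y then (x, y) else (y, x)

theorem nrm_eq {x y x' y' : ℕ} (h : nrm x y = nrm x' y') : (x = x' ∧ y = y') ∨ (x = y' ∧ y = x') := by
  unfold nrm at h
  split_ifs at h <;> simp only [Prod.mk.injEq] at h <;> omega

def kap (p q x : ℕ) : ℕ := if x = p then q else x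

theorem kap_eq {α : Type*} (c : ℕ → α) {p q : ℕ} (hc : c p = c q) (x : ℕ) : c (kap p q x) = c x := by
  unfold kap; split_ifs with h
  · rw [h, hc]
  · rfl

theorem recast {G : Multigraph} {M : List (Ent G.E)} {φ : ℕ → G.V} {j : ℕ} (hM : Mod G M φ j)
    (D' : List (ℕ × ℕ)) (σ ρ : ℕ → ℕ) (p q : ℕ)
    (h1 : ∀ t ∈ M, ρ (σ t.a) = t.a ∧ ρ (σ t.b) = t.b)
    (h2 : (M.map fun t => nrm (kap p q (σ t.a)) (kap p q (σ t.b))).Perm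
      (D'.map fun d => nrm (kap p q d.1) (kap p q d.2)))
    (h3 : p = q ∨ ∃ t ∈ M, t.l = [] ∧ σ t.a = p ∧ σ t.b = q)
    (h4 : ∀ d ∈ D', kap p q d.1 = q → kap p q d.2 = q → p = q ∨ d = (p, q) ∨ d = (q, p)) :
    ∃ M' φ', M'.map (fun t => (t.a, t.b)) = D' ∧ Mod G M' φ' j ∧
      ∀ x, x ∈ M'.flatMap (·.l) ↔ x ∈ M.flatMap (·.l) := by
  obtain ⟨M₁, hp, hf⟩ := perm_match _ _ D' M h2
  let R : Ent G.E → Ent G.E → Prop := fun t t' => t'.f = t.f ∧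
    ((kap p q (σ t.a) = kap p q t'.a ∧ kap p q (σ t.b) = kap p q t'.b ∧ t'.l = t.l) ∨
     (kap p q (σ t.a) = kap p q t'.b ∧ kap p q (σ t.b) = kap p q t'.a ∧ t'.l = t.l.reverse))
  have hex : ∃ M' : List (Ent G.E), M'.map (fun t => (t.a, t.b)) = D' ∧ List.Forall₂ R M₁ M' := by
    clear h4 hp h2
    induction hf with
    | nil => exact ⟨[], rfl, List.Forall₂.nil⟩
    | @cons t d M₁ D' htd _ ih =>
      obtain ⟨M', e1, e2⟩ := ih
      rcases nrm_eq htd with ⟨h5, h6⟩ | ⟨h5, h6⟩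
      · exact ⟨⟨d.1, d.2, t.f, t.l⟩ :: M', by simp [e1],
          List.Forall₂.cons ⟨rfl, Or.inl ⟨h5, h6, rfl⟩⟩ e2⟩
      · exact ⟨⟨d.1, d.2, t.f, t.l.reverse⟩ :: M', by simp [e1],
          List.Forall₂.cons ⟨rfl, Or.inr ⟨h5, h6, rfl⟩⟩ e2⟩
  obtain ⟨M', hD, hR⟩ := hex
  have hperm : (M'.flatMap (·.l)).Perm (M.flatMap (·.l)) := by
    refine List.Perm.trans ?_ (hp.flatMap_right _)
    clear hf hp hD
    induction hR with
    | nil => exact List.Perm.refl _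
    | cons hr _ ih =>
      rw [List.flatMap_cons, List.flatMap_cons]
      refine List.Perm.append ?_ ih
      rcases hr with ⟨-, ⟨-, -, h⟩ | ⟨-, -, h⟩⟩
      · rw [h]
      · rw [h]; exact List.reverse_perm _
  have hback : ∀ t' ∈ M', ∃ t ∈ M, R t t' := by
    intro t' ht'
    have : ∃ t ∈ M₁, R t t' := by
      clear hf hp hD hperm
      induction hR with
      | nil => simp at ht'
      | @cons a b _ _ hr _ ih =>
        rcases List.mem_cons.1 ht' with rfl | h
        · exact ⟨a, by simp, hr⟩
        · obtain ⟨t, h1, h2⟩ := ih h; exact ⟨t, by simp [h1], h2⟩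
    obtain ⟨t, ht, hr⟩ := this
    exact ⟨t, hp.mem_iff.1 ht, hr⟩
  have hforw : ∀ t ∈ M, ∃ t' ∈ M', R t t' := by
    intro t ht
    have ht := hp.mem_iff.2 ht
    clear hf hp hD hperm hback
    induction hR with
    | nil => simp at ht
    | @cons a b _ _ hr _ ih =>
      rcases List.mem_cons.1 ht with rfl | h
      · exact ⟨b, by simp, hr⟩
      · obtain ⟨t, h1, h2⟩ := ih h; exact ⟨t, by simp [h1], h2⟩
  have hpq : φ (ρ p) = φ (ρ q) := by
    rcases h3 with rfl | ⟨t, ht, h5, h6, h7⟩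
    · rfl
    · have := hM.wk t ht
      rw [h5] at this
      rw [← h6, ← h7, (h1 t ht).1, (h1 t ht).2]
      exact this
  have hk := fun x => kap_eq (fun x => φ (ρ x)) hpq x
  refine ⟨M', fun x => φ (ρ x), hD, ⟨?_, hperm.nodup_iff.2 hM.nodup, ?_, ?_, ?_⟩,
    fun x => hperm.mem_iff⟩
  · intro t' ht'
    obtain ⟨t, ht, -, ⟨h5, h6, h7⟩ | ⟨h5, h6, h7⟩⟩ := hback t' ht'
    · have := hM.wk t ht
      rw [h7, ← hk t'.a, ← hk t'.b, ← h5, ← h6, hk, hk, (h1 t ht).1, (h1 t ht).2]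
      exact this
    · have := (hM.wk t ht).rev
      rw [h7, ← hk t'.a, ← hk t'.b, ← h5, ← h6, hk, hk, (h1 t ht).1, (h1 t ht).2]
      exact this
  · intro t' ht' hf'
    obtain ⟨t, ht, h8, ⟨h5, h6, h7⟩ | ⟨h5, h6, h7⟩⟩ := hback t' ht'
    · rw [h7]; exact hM.flag t ht (by rw [← h8]; exact hf')
    · rw [h7]; simpa using hM.flag t ht (by rw [← h8]; exact hf')
  · rw [← hM.cnt, ← hp.countP_eq]
    clear hf hp hD hperm hback hforw
    induction hR with
    | nil => rfl
    | cons hr _ ih => rw [List.countP_cons, List.countP_cons, ih, hr.1]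
  · intro c hc
    have hcpq : c p = c q := by
      rcases h3 with h | ⟨t, ht, h5, h6, h7⟩
      · rw [h]
      · obtain ⟨t', ht', h8, hh⟩ := hforw t ht
        have hff : t.f = false := by
          by_contra hne
          exact hM.flag t ht (by simpa using hne) h5
        have h9 := hc t' ht' (by rw [h8, hff])
        have hkk : kap p q t'.a = q ∧ kap p q t'.b = q := by
          rw [h6, h7] at hh
          have e1 : kap p q p = q := by simp [kap]
          have e2 : kap p q q = q := by unfold kap; split_ifs <;> rfl
          rw [e1, e2] at hh
          rcases hh with ⟨a, b, -⟩ | ⟨a, b, -⟩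
          · exact ⟨a.symm, b.symm⟩
          · exact ⟨b.symm, a.symm⟩
        have hd : (t'.a, t'.b) ∈ D' := by rw [← hD]; exact List.mem_map.2 ⟨t', ht', rfl⟩
        rcases h4 _ hd hkk.1 hkk.2 with h | h | h
        · rw [h]
        · simp only [Prod.mk.injEq] at h; rw [← h.1, ← h.2]; exact h9
        · simp only [Prod.mk.injEq] at h; rw [← h.1, ← h.2]; exact h9.symm
    have hkc := fun x => kap_eq c hcpq x
    have := hM.good (fun x => c (σ x)) (by
      intro t ht htf
      obtain ⟨t', ht', h8, ⟨h5, h6, -⟩ | ⟨h5, h6, -⟩⟩ := hforw t ht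
      · show c (σ t.a) = c (σ t.b)
        rw [← hkc, h5, hkc, ← hkc (σ t.b), h6, hkc]
        exact hc t' ht' (by rw [h8, htf])
      · show c (σ t.a) = c (σ t.b)
        rw [← hkc, h5, hkc, ← hkc (σ t.b), h6, hkc]
        exact (hc t' ht' (by rw [h8, htf])).symm)
    intro t' ht'
    obtain ⟨t, ht, -, ⟨h5, h6, -⟩ | ⟨h5, h6, -⟩⟩ := hback t' ht'
    · rw [← hkc t'.a, ← h5, hkc, ← hkc t'.b, ← h6, hkc]; exact this t ht
    · rw [← hkc t'.a, ← h6, hkc, ← hkc t'.b, ← h5, hkc]; exact (this t ht).symm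

/-- decidable isomorphism check -/
def isoB (D D' : List (ℕ × ℕ)) (s r : List ℕ) (p q : ℕ) : Bool :=
  D.all (fun d => r.getD (s.getD d.1 0) 0 == d.1 && r.getD (s.getD d.2 0) 0 == d.2) &&
  (D.map fun d => nrm (kap p q (s.getD d.1 0)) (kap p q (s.getD d.2 0))).isPerm
    (D'.map fun d => nrm (kap p q d.1) (kap p q d.2)) &&
  D'.all (fun d => !(kap p q d.1 == q && kap p q d.2 == q) || p == q || d == (p, q) || d == (q, p))

theorem recastB {G : Multigraph} {M : List (Ent G.E)} {φ : ℕ → G.V} {j : ℕ} (hM : Mod G M φ j)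
    (D D' : List (ℕ × ℕ)) (hD : M.map (fun t => (t.a, t.b)) = D) (s r : List ℕ) (p q : ℕ)
    (hB : isoB D D' s r p q = true)
    (h3 : p = q ∨ ∃ t ∈ M, t.l = [] ∧ s.getD t.a 0 = p ∧ s.getD t.b 0 = q) :
    ∃ M' φ', M'.map (fun t => (t.a, t.b)) = D' ∧ Mod G M' φ' j ∧
      ∀ x, x ∈ M'.flatMap (·.l) ↔ x ∈ M.flatMap (·.l) := by
  unfold isoB at hB
  simp only [Bool.and_eq_true, List.all_eq_true, List.isPerm_iff] at hB
  obtain ⟨⟨b1, b2⟩, b3⟩ := hB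
  refine recast hM D' (fun x => s.getD x 0) (fun x => r.getD x 0) p q ?_ ?_ h3 ?_
  · intro t ht
    have := b1 (t.a, t.b) (by rw [← hD]; exact List.mem_map.2 ⟨t, ht, rfl⟩)
    simpa using this
  · subst hD
    rw [List.map_map] at b2
    exact b2
  · intro d hd e1 e2
    have := b3 d hd
    simp [e1, e2] at this
    tauto

theorem HasM.iso {G : Multigraph} {D : List (ℕ × ℕ)} {S : Finset G.E} {j : ℕ} (h : HasM G D S j)
    (D' : List (ℕ × ℕ)) (s r : List ℕ) (hB : isoB D D' s r 0 0 = true) : HasM G D' S j := by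
  obtain ⟨M, φ, hD, hM, hS⟩ := h
  obtain ⟨M', φ', h1, h2, h3⟩ := recastB hM D D' hD s r 0 0 hB (Or.inl rfl)
  exact ⟨M', φ', h1, h2, fun x => (h3 x).trans (hS x)⟩

end Multigraph

namespace Multigraph

theorem sum_get_countP {E : Type} (M : List (Ent E)) :
    (∑ i : Fin M.length, if (M.get i).f = true then 1 else 0) = M.countP (·.f) := by
  induction M with
  | nil => simp
  | cons t M ih =>
    rw [List.countP_cons, ← ih]
    simp only [List.length_cons, Fin.sum_univ_succ]
    rw [add_comm]; rfl

theorem weakSub_of_model (G D : Multigraph) [Nonempty D.V] (hG : G.Connected) (hDc : D.Connected)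
    (M : List (Ent G.E)) (φ : ℕ → G.V) (j : ℕ) (hM : Mod G M φ j)
    (hS : ∀ x, x ∈ M.flatMap (·.l)) (ε : D.E ≃ Fin M.length) (lab : D.V → ℕ)
    (hlab : Function.Injective lab)
    (ha : ∀ e, (M.get (ε e)).a = lab (D.src e)) (hb : ∀ e, (M.get (ε e)).b = lab (D.tgt e))
    (hc : D.nE + 1 = D.nV + j) (hn : G.nE + D.nV = G.nV + D.nE) :
    IsWeakSubdivision G D (fun e => (M.get (ε e)).l.length) := by
  have hmem : ∀ e, M.get (ε e) ∈ M := fun e => List.get_mem _ _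
  have hnd := List.nodup_flatMap.1 hM.nodup
  refine weakSub_of G D hG (fun v => φ (lab v)) (fun e => (M.get (ε e)).l) ?_ ?_
    (univ.filter fun e => (M.get (ε e)).f = true) ?_ ?_ ?_ hn
  · intro e
    rw [← ha, ← hb]
    exact hM.wk _ (hmem e)
  · constructor
    · rintro ⟨e, i⟩ ⟨e', i'⟩ h
      simp only at h
      have hee : e = e' := by
        by_contra hne
        have hne' : ε e ≠ ε e' := fun h => hne (ε.injective h)
        have hmm : (M.get (ε e)).l.get i ∈ (M.get (ε e')).l := by rw [h]; exact List.get_mem _ _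
        have hp := List.pairwise_iff_get.1 hnd.2
        rcases lt_or_gt_of_ne hne' with hlt | hlt
        · exact hp _ _ hlt (List.get_mem _ i) hmm
        · exact hp _ _ hlt hmm (List.get_mem _ i)
      subst hee
      have := List.nodup_iff_injective_get.1 (hnd.1 _ (hmem e)) h
      rw [this]
    · intro x
      obtain ⟨t, ht, hx⟩ := List.mem_flatMap.1 (hS x)
      obtain ⟨k, hk⟩ := List.get_of_mem ht
      have hk' : M.get (ε (ε.symm k)) = t := by rw [Equiv.apply_symm_apply]; exact hk
      rw [← hk'] at hx
      obtain ⟨i, hi⟩ := List.get_of_mem hx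
      exact ⟨⟨ε.symm k, i⟩, hi⟩
  · apply connOn_of_bool
    intro c hcc
    have hl : ∀ v, decide (∃ v', lab v' = lab v ∧ c v' = true) = c v := by
      intro v
      rw [Bool.eq_iff_iff, decide_eq_true_iff]
      constructor
      · rintro ⟨v', h1, h2⟩; rw [← hlab h1]; exact h2
      · intro h; exact ⟨v, rfl, h⟩
    have hg := hM.good (fun k => decide (∃ v, lab v = k ∧ c v = true)) (by
      intro t ht htf
      obtain ⟨k, hk⟩ := List.get_of_mem ht
      have hk' : M.get (ε (ε.symm k)) = t := by rw [Equiv.apply_symm_apply]; exact hk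
      rw [← hk', ha, hb, hl, hl]
      apply hcc
      simp only [mem_sdiff, mem_univ, true_and, mem_filter]
      rw [hk', htf]; simp)
    apply hDc.const c
    intro e _
    have := hg _ (hmem e)
    rw [ha, hb, hl, hl] at this
    exact this
  · intro e he
    exact hM.flag _ (hmem e) (by simpa using he)
  · rw [hc, ← hM.cnt, ← sum_get_countP, card_filter]
    congr 1
    exact (Equiv.sum_comp ε (fun i => if (M.get i).f = true then 1 else 0)).symm

/-- graph on six vertices from a list of nine edges -/
def mg (L : List (ℕ × ℕ)) : Multigraph where
  V := Fin 6
  E := Fin 9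
  src e := Fin.ofNat 6 (L.getD e.val (0, 0)).1
  tgt e := Fin.ofNat 6 (L.getD e.val (0, 0)).2

instance (L : List (ℕ × ℕ)) : Nonempty (mg L).V := ⟨(0 : Fin 6)⟩

/-- computable connectivity check -/
def chk (L : List (ℕ × ℕ)) (T : List (Fin 9)) : Bool :=
  (List.range 64).all fun m => m == 0 || m == 63 ||
    (List.finRange 9).any fun e => !(T.elem e) &&
      (m.testBit (Fin.ofNat 6 (L.getD e.val (0, 0)).1).val !=
        m.testBit (Fin.ofNat 6 (L.getD e.val (0, 0)).2).val)

theorem chk_iff (L : List (ℕ × ℕ)) (T : List (Fin 9)) (S : Finset (mg L).E)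
    (hS : ∀ x, x ∈ S ↔ x ∈ T) :
    (mg L).ConnOn (univ \ S) ↔ chk L T = true := by
  rw [connOn_iff_bool]
  constructor
  · intro h
    unfold chk
    rw [List.all_eq_true]
    intro m hm
    by_contra hcon
    simp only [Bool.or_eq_true, not_or, List.any_eq_true, not_exists, not_and,
      Bool.and_eq_true, beq_iff_eq] at hcon
    obtain ⟨⟨h0, h63⟩, hE⟩ := hcon
    have := h (fun v : Fin 6 => m.testBit v.val) (by
      intro (e : Fin 9) he
      have h2 := hE e (List.mem_finRange e)
      have h3 : e ∉ T := by
        exact fun h => (mem_sdiff.1 he).2 ((hS e).2 h)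
      by_contra hne
      apply h2
      · simpa using h3
      · rw [bne_iff_ne]; exact hne)
    have hm' : m < 64 := by simpa using hm
    have e1 := this (0 : Fin 6) (1 : Fin 6)
    have e2 := this (0 : Fin 6) (2 : Fin 6)
    have e3 := this (0 : Fin 6) (3 : Fin 6)
    have e4 := this (0 : Fin 6) (4 : Fin 6)
    have e5 := this (0 : Fin 6) (5 : Fin 6)
    have key : ((List.range 64).all fun m => m == 0 || m == 63 || !(m.testBit 0 == m.testBit 1 &&
      m.testBit 0 == m.testBit 2 && m.testBit 0 == m.testBit 3 && m.testBit 0 == m.testBit 4 &&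
      m.testBit 0 == m.testBit 5)) = true := by decide +kernel
    rw [List.all_eq_true] at key
    have key := key m hm
    have e1 : m.testBit 0 = m.testBit 1 := e1
    have e2 : m.testBit 0 = m.testBit 2 := e2
    have e3 : m.testBit 0 = m.testBit 3 := e3
    have e4 : m.testBit 0 = m.testBit 4 := e4
    have e5 : m.testBit 0 = m.testBit 5 := e5
    rw [← e1, ← e2, ← e3, ← e4, ← e5] at key
    simp [h0, h63] at key
  · intro h (c : Fin 6 → Bool) hc
    unfold chk at h
    rw [List.all_eq_true] at h
    have hb : ∀ v : Fin 6, (Nat.ofBits c).testBit v.val = c v := fun v =>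
      Nat.testBit_ofBits_lt c v.val v.2
    have := h (Nat.ofBits c) (by
      rw [List.mem_range]; exact Nat.ofBits_lt_two_pow c)
    simp only [Bool.or_eq_true, List.any_eq_true, Bool.and_eq_true, beq_iff_eq, hb] at this
    rcases this with (h0 | h0) | ⟨e, -, h1, h2⟩
    · have : ∀ v, c v = false := by intro v; rw [← hb v, h0]; simp
      intro u v
      exact (this u).trans (this v).symm
    · have : ∀ v, c v = true := by
        intro v; rw [← hb v, h0]; revert v; decide
      intro u v
      exact (this u).trans (this v).symm
    · exfalso
      have h4 : e ∉ T := by simpa using h1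
      have := hc e (mem_sdiff.2 ⟨mem_univ _, fun h => h4 ((hS e).1 h)⟩)
      rw [bne_iff_ne] at h2
      exact h2 this

theorem sum_powersetCard_list (g : Multiset (Fin 9) → ℕ) (i : ℕ) :
    ∑ T ∈ powersetCard i (univ : Finset (Fin 9)), g T.val =
      (((List.finRange 9).sublistsLen i).map fun l : List (Fin 9) => g (l : Multiset (Fin 9))).sum := by
  have h1 := Finset.map_val_val_powersetCard (univ : Finset (Fin 9)) i
  have h2 : (univ : Finset (Fin 9)).val = ↑(List.finRange 9) := rfl
  rw [h2, Multiset.powersetCard_coe] at h1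
  rw [Finset.sum]
  have h3 : Multiset.map (fun T : Finset (Fin 9) => g T.val) (powersetCard i univ).val =
    Multiset.map g (Multiset.map Finset.val (powersetCard i univ).val) := by
    rw [Multiset.map_map]; rfl
  rw [h3, h1, Multiset.map_coe, Multiset.sum_coe, List.map_map]
  rfl

theorem sum_ite_filter {α : Type*} (p : α → Bool) (f : α → ℕ) (l : List α) :
    (l.map fun x => if p x = true then f x else 0).sum = ((l.filter p).map f).sum := by
  induction l with
  | nil => rfl
  | cons x l ih =>
    rw [List.map_cons, List.sum_cons, ih, List.filter_cons]
    split_ifs <;> simp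

theorem cI_mg (L : List (ℕ × ℕ)) (w : (mg L).E → ℕ) (i : ℕ) : (subdivide (mg L) w).cI i =
    ((((List.finRange 9).sublistsLen i).filter (chk L)).map fun l => (l.map w).prod).sum := by
  rw [cI_sub]
  have := sum_powersetCard_list
    (fun m => if chk L m.toList then (m.map w).prod else 0) i
  rw [← sum_ite_filter]
  refine Eq.trans ?_ (this.trans ?_)
  · refine sum_congr rfl (fun T _ => ?_)
    have := chk_iff L (T.val.toList) T (fun x => (@Multiset.mem_toList (Fin 9) x T.val).symm)
    simp only [this]
    rfl
  · congr 1
    apply List.map_congr_left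
    intro l _
    have h0 : (Multiset.map w (l : Multiset (Fin 9))).prod = (l.map w).prod := Multiset.prod_coe _
    show (if chk L (Multiset.toList (l : Multiset (Fin 9))) = true then
      (Multiset.map w (l : Multiset (Fin 9))).prod else 0) = _
    rw [h0]
    have h1 := chk_iff L l (@List.toFinset (mg L).E _ l) (fun x => List.mem_toFinset)
    have h2 := chk_iff L (Multiset.toList (l : Multiset (Fin 9))) (@List.toFinset (mg L).E _ l)
      (fun x => Iff.trans List.mem_toFinset (@Multiset.mem_toList (Fin 9) x (l : Multiset (Fin 9))).symm)
    have h3 : (chk L (Multiset.toList (l : Multiset (Fin 9))) = true) = (chk L l = true) :=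
      propext (h2.symm.trans h1)
    simp only [h3]

end Multigraph

namespace Multigraph

/-- paths into `VS` -/
inductive PT (G : Multigraph) (VS : Finset G.V) (R : Finset G.E) : G.V → List G.E → List G.V → Prop
  | nil (u : G.V) : u ∈ VS → PT G VS R u [] []
  | cons (v : G.V) (x : G.E) (v' : G.V) (P : List G.E) (vs : List G.V) : v ∉ VS → x ∈ R →
      G.Joins x v v' → PT G VS R v' P vs → v ∉ vs → PT G VS R v (x :: P) (v :: vs)

theorem PT.suffix {G : Multigraph} {VS : Finset G.V} {R : Finset G.E} {v : G.V} {P : List G.E}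
    {vs : List G.V} (h : PT G VS R v P vs) : ∀ y ∈ vs, ∃ P' vs', PT G VS R y P' vs' := by
  induction h with
  | nil u hu => intro y hy; simp at hy
  | cons v x v' P vs h1 h2 h3 h4 h5 ih =>
    intro y hy
    rcases List.mem_cons.1 hy with rfl | hy
    · exact ⟨_, _, PT.cons y x v' P vs h1 h2 h3 h4 h5⟩
    · exact ih y hy

theorem PT.facts {G : Multigraph} {VS : Finset G.V} {R : Finset G.E} {v : G.V} {P : List G.E}
    {vs : List G.V} (h : PT G VS R v P vs) :
    (∃ u ∈ VS, G.Wk v P u) ∧ P.Nodup ∧ vs.Nodup ∧ P.length = vs.length ∧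
    (∀ x ∈ P, x ∈ R ∧ (G.src x ∈ VS ∨ G.src x ∈ vs) ∧ (G.tgt x ∈ VS ∨ G.tgt x ∈ vs) ∧
      (G.src x ∉ VS ∨ G.tgt x ∉ VS)) ∧
    (∀ y ∈ vs, y ∉ VS ∧ ∃ x ∈ P, G.src x = y ∨ G.tgt x = y) ∧ (v ∈ VS ∨ v ∈ vs) := by
  induction h with
  | nil u hu => exact ⟨⟨u, hu, rfl⟩, by simp, by simp, rfl, by simp, by simp, Or.inl hu⟩
  | cons v x v' P vs h1 h2 h3 h4 h5 ih =>
    obtain ⟨⟨u, hu, i1⟩, i2, i3, i4, i5, i6, i7⟩ := ih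
    refine ⟨⟨u, hu, v', h3, i1⟩, ?_, by simp [h5, i3], by simp [i4], ?_, ?_, by simp⟩
    · rw [List.nodup_cons]
      refine ⟨fun hx => ?_, i2⟩
      obtain ⟨-, a, b, -⟩ := i5 x hx
      rcases h3 with ⟨e1, e2⟩ | ⟨e1, e2⟩
      · rw [e1] at a; tauto
      · rw [e2] at b; tauto
    · intro y hy
      rcases List.mem_cons.1 hy with rfl | hy
      · refine ⟨h2, ?_⟩
        rcases h3 with ⟨e1, e2⟩ | ⟨e1, e2⟩
        · rw [e1, e2]; simp only [List.mem_cons]; tauto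
        · rw [e1, e2]; simp only [List.mem_cons]; tauto
      · obtain ⟨a, b, c, d⟩ := i5 y hy
        simp only [List.mem_cons]; tauto
    · intro y hy
      rcases List.mem_cons.1 hy with rfl | hy
      · refine ⟨h1, x, by simp, ?_⟩
        rcases h3 with ⟨e1, e2⟩ | ⟨e1, e2⟩
        · exact Or.inl e1
        · exact Or.inr e2
      · obtain ⟨a, z, b, c⟩ := i6 y hy
        exact ⟨a, z, by simp [b], c⟩

theorem PT.exists {G : Multigraph} {VS : Finset G.V} {R : Finset G.E} (hR : G.ConnOn R)
    (hV : VS.Nonempty) (v : G.V) : ∃ P vs, PT G VS R v P vs := by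
  have key : ∀ x ∈ R, ∀ u v, G.Joins x u v → (∃ P vs, PT G VS R v P vs) → ∃ P vs, PT G VS R u P vs := by
    rintro x hx u v hj ⟨P, vs, h⟩
    by_cases h1 : u ∈ VS
    · exact ⟨_, _, PT.nil u h1⟩
    · by_cases h2 : u ∈ vs
      · exact h.suffix u h2
      · exact ⟨_, _, PT.cons u x v P vs h1 hx hj h h2⟩
  obtain ⟨u, hu⟩ := hV
  have := hR.const (fun v => ∃ P vs, PT G VS R v P vs) (fun e he => propext
    ⟨fun h => key e he _ _ (Or.inr ⟨rfl, rfl⟩) h, fun h => key e he _ _ (Or.inl ⟨rfl, rfl⟩) h⟩) u v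
  exact this.mp ⟨_, _, PT.nil u hu⟩

/-- ear invariant -/
structure Inv (G : Multigraph) (S : Finset G.E) (VS : Finset G.V) (j : ℕ) : Prop where
  ends : ∀ x ∈ S, G.src x ∈ VS ∧ G.tgt x ∈ VS
  inc : 1 ≤ j → ∀ v ∈ VS, ∃ x ∈ S, G.src x = v ∨ G.tgt x = v
  card : VS.card + j = S.card + 1
  ne : VS.Nonempty
  one : j = 0 → VS.card = 1

theorem ear {G : Multigraph} (hG : G.Connected) (hb : G.Bridgeless) {S : Finset G.E}
    {VS : Finset G.V} {j : ℕ} (hI : Inv G S VS j) (hS : S ≠ univ) :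
    ∃ u ∈ VS, ∃ v ∈ VS, ∃ P, P ≠ [] ∧ G.Wk u P v ∧ P.Nodup ∧ (∀ x ∈ P, x ∉ S) ∧
      ∃ VS', Inv G (S ∪ P.toFinset) VS' (j + 1) := by
  have h0 : ∃ x ∉ S, ∃ u ∈ VS, ∃ v, G.Joins x u v := by
    by_contra hcon
    push Not at hcon
    have hc := hG.const (fun v => v ∈ VS) (fun e _ => by
      apply propext
      by_cases he : e ∈ S
      · have := hI.ends e he; tauto
      · exact ⟨fun h => absurd (Or.inl ⟨rfl, rfl⟩) (hcon e he _ h (G.tgt e)),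
          fun h => absurd (Or.inr ⟨rfl, rfl⟩) (hcon e he _ h (G.src e))⟩)
    obtain ⟨u, hu⟩ := hI.ne
    obtain ⟨x, hx⟩ : ∃ x, x ∉ S := by
      by_contra h; push Not at h; exact hS (eq_univ_of_forall h)
    exact hcon x hx (G.src x) ((hc u (G.src x)).mp hu) (G.tgt x) (Or.inl ⟨rfl, rfl⟩)
  obtain ⟨x, hx, u, hu, v, hj⟩ := h0
  have hR : G.ConnOn (univ \ {x}) := by
    have := hb x
    unfold IsBridge Disconnects at this
    exact not_not.1 this
  obtain ⟨P, vs, hP⟩ := PT.exists hR hI.ne v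
  obtain ⟨⟨w, hw, i1⟩, i2, i3, i4, i5, i6, i7⟩ := hP.facts
  have hPS : ∀ y ∈ P, y ∉ S := by
    intro y hy hyS
    have a := hI.ends y hyS
    have b := (i5 y hy).2.2.2
    tauto
  have hxP : x ∉ P := fun h => by
    have := (i5 x h).1
    simp at this
  have hdis : Disjoint VS vs.toFinset := by
    rw [disjoint_right]; intro y hy; exact (i6 y (by simpa using hy)).1
  have hdis2 : Disjoint S (x :: P).toFinset := by
    rw [disjoint_right]; intro y hy
    rcases List.mem_cons.1 (List.mem_toFinset.1 hy) with rfl | hy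
    · exact hx
    · exact hPS y hy
  refine ⟨u, hu, w, hw, x :: P, by simp, ⟨v, hj, i1⟩, by simp [hxP, i2], ?_, VS ∪ vs.toFinset,
    ⟨?_, ?_, ?_, hI.ne.mono subset_union_left, by omega⟩⟩
  · intro y hy
    rcases List.mem_cons.1 hy with rfl | hy
    · exact hx
    · exact hPS y hy
  · intro y hy
    simp only [mem_union, List.mem_toFinset, List.mem_cons] at hy ⊢
    rcases hy with h | rfl | h
    · have := hI.ends y h; tauto
    · rcases hj with ⟨e1, e2⟩ | ⟨e1, e2⟩
      · rw [e1, e2]; tauto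
      · rw [e1, e2]; tauto
    · have := i5 y h; tauto
  · intro _ y hy
    simp only [mem_union, List.mem_toFinset] at hy
    rcases hy with hy | hy
    · by_cases hj0 : j = 0
      · have h1 := hI.one hj0
        rw [card_eq_one] at h1
        obtain ⟨z, hz⟩ := h1
        have hyu : y = u := by rw [hz] at hy hu; simp at hy hu; rw [hy, hu]
        refine ⟨x, by simp, ?_⟩
        rw [hyu]
        rcases hj with ⟨e1, e2⟩ | ⟨e1, e2⟩
        · exact Or.inl e1
        · exact Or.inr e2
      · obtain ⟨z, hz, h⟩ := hI.inc (by omega) y hy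
        exact ⟨z, by simp [hz], h⟩
    · obtain ⟨-, z, hz, h⟩ := i6 y hy
      exact ⟨z, by simp [hz], h⟩
  · rw [card_union_of_disjoint hdis, card_union_of_disjoint hdis2, List.toFinset_card_of_nodup i3,
      List.toFinset_card_of_nodup (by simp [hxP, i2])]
    have := hI.card
    simp only [List.length_cons]
    omega

theorem Inv.full {G : Multigraph} (hG : G.Connected) {S : Finset G.E}
    {VS : Finset G.V} {j : ℕ} (hI : Inv G S VS j) (hE : G.nE = G.nV + 3) (hS : S = univ) : j = 4 := by
  have : VS = univ := by
    obtain ⟨u, hu⟩ := hI.ne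
    apply eq_univ_of_forall
    intro v
    exact (hG.const (fun v => v ∈ VS) (fun e _ => by
      have := hI.ends e (by rw [hS]; simp)
      simp [this]) u v).mp hu
  have h := hI.card
  rw [this, hS, card_univ, card_univ] at h
  unfold nE nV at hE
  omega

theorem Inv.le {G : Multigraph} (hG : G.Connected) (hb : G.Bridgeless) (hE : G.nE = G.nV + 3) :
    ∀ (N : ℕ) {S : Finset G.E} {VS : Finset G.V} {j : ℕ}, (univ \ S).card ≤ N → Inv G S VS j → j ≤ 4 := by
  intro N
  induction N with
  | zero =>
    intro S VS j hN hI
    have : S = univ := by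
      rw [Nat.le_zero, card_eq_zero, sdiff_eq_empty_iff_subset] at hN
      exact univ_subset_iff.1 hN
    exact (hI.full hG hE this).le
  | succ N ih =>
    intro S VS j hN hI
    by_cases hS : S = univ
    · exact (hI.full hG hE hS).le
    · obtain ⟨u, -, v, -, P, hP, -, -, hd, VS', hI'⟩ := ear hG hb hI hS
      have : (univ \ (S ∪ P.toFinset)).card < (univ \ S).card := by
        apply card_lt_card
        rw [ssubset_iff_of_subset (sdiff_subset_sdiff le_rfl subset_union_left)]
        obtain ⟨x, hx⟩ := List.exists_mem_of_ne_nil P hP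
        exact ⟨x, by simp [hd x hx], by simp [hx]⟩
      have := ih (by omega) hI'
      omega

theorem Inv.ne_univ {G : Multigraph} (hG : G.Connected) (hE : G.nE = G.nV + 3)
    {S : Finset G.E} {VS : Finset G.V} {j : ℕ} (hI : Inv G S VS j) (hj : j < 4) : S ≠ univ :=
  fun h => by have := hI.full hG hE h; omega

theorem Inv.eq_univ {G : Multigraph} (hG : G.Connected) (hb : G.Bridgeless) (hE : G.nE = G.nV + 3)
    {S : Finset G.E} {VS : Finset G.V} (hI : Inv G S VS 4) : S = univ := by
  by_contra hS
  obtain ⟨u, -, v, -, P, -, -, -, -, VS', hI'⟩ := ear hG hb hI hS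
  have := Inv.le hG hb hE _ le_rfl hI'
  omega

end Multigraph

namespace Multigraph

theorem Wk.split {G : Multigraph} {x : G.E} : ∀ (l : List G.E) {u v : G.V}, G.Wk u l v → x ∈ l →
    ∃ l₁ l₂ y y', l = l₁ ++ x :: l₂ ∧ G.Wk u l₁ y ∧ G.Joins x y y' ∧ G.Wk y' l₂ v := by
  intro l
  induction l with
  | nil => intro u v _ h; simp at h
  | cons z l ih =>
    rintro u v ⟨u', h1, h2⟩ hx
    rcases List.mem_cons.1 hx with rfl | hx
    · exact ⟨[], l, u, u', rfl, rfl, h1, h2⟩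
    · obtain ⟨l₁, l₂, y, y', e, a, b, c⟩ := ih h2 hx
      exact ⟨z :: l₁, l₂, y, y', by rw [e]; rfl, ⟨u', h1, a⟩, b, c⟩

theorem Wk.at {G : Multigraph} {x : G.E} {l : List G.E} {u v w : G.V} (h : G.Wk u l v) (hx : x ∈ l)
    (hw : G.src x = w ∨ G.tgt x = w) : ∃ l₁ l₂, l = l₁ ++ l₂ ∧ G.Wk u l₁ w ∧ G.Wk w l₂ v := by
  obtain ⟨l₁, l₂, y, y', e, a, b, c⟩ := h.split l hx
  have : w = y ∨ w = y' := by
    rcases b with ⟨b1, b2⟩ | ⟨b1, b2⟩ <;> rw [b1, b2] at hw <;> tauto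
  rcases this with rfl | rfl
  · exact ⟨l₁, x :: l₂, e, a, y', b, c⟩
  · exact ⟨l₁ ++ [x], l₂, by simp [e], a.append ⟨w, b, rfl⟩, c⟩

/-- split an edge of the shape -/
def spl (k : ℕ) : List (ℕ × ℕ) → List (List (ℕ × ℕ))
  | [] => []
  | d :: D => ((d.1, k) :: (k, d.2) :: D) :: (spl k D).map (d :: ·)

theorem mem_spl (k : ℕ) (D D' : List (ℕ × ℕ)) : D' ∈ spl k D ↔
    ∃ D₁ d D₂, D = D₁ ++ d :: D₂ ∧ D' = D₁ ++ (d.1, k) :: (k, d.2) :: D₂ := by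
  induction D generalizing D' with
  | nil => simp [spl]
  | cons d D ih =>
    simp only [spl, List.mem_cons, List.mem_map]
    constructor
    · rintro (h | ⟨D'', h, rfl⟩)
      · exact ⟨[], d, D, rfl, h⟩
      · obtain ⟨D₁, e, D₂, rfl, rfl⟩ := (ih D'').1 h
        exact ⟨d :: D₁, e, D₂, rfl, rfl⟩
    · rintro ⟨D₁, e, D₂, h1, h2⟩
      cases D₁ with
      | nil => simp at h1; obtain ⟨rfl, rfl⟩ := h1; exact Or.inl h2
      | cons d' D₁ =>
        simp at h1; obtain ⟨rfl, h1⟩ := h1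
        exact Or.inr ⟨_, (ih _).2 ⟨D₁, e, D₂, h1, rfl⟩, by simp [h2]⟩

/-- labels below `k` -/
def Lt (D : List (ℕ × ℕ)) (k : ℕ) : Prop := ∀ d ∈ D, d.1 < k ∧ d.2 < k

/-- the shape is connected -/
def Cn (D : List (ℕ × ℕ)) : Prop :=
  ∀ c : ℕ → Bool, (∀ d ∈ D, c d.1 = c d.2) → ∀ d ∈ D, c d.1 = c 0

theorem Lt.spl {k : ℕ} {D D' : List (ℕ × ℕ)} (h : Lt D k) (hD : D' ∈ spl k D) : Lt D' (k + 1) := by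
  obtain ⟨D₁, e, D₂, rfl, rfl⟩ := (mem_spl _ _ _).1 hD
  intro d hd
  have he := h e (by simp)
  simp only [List.mem_append, List.mem_cons] at hd
  rcases hd with hd | rfl | rfl | hd
  · have := h d (by simp [hd]); omega
  · simp only; omega
  · simp only; omega
  · have := h d (by simp [hd]); omega

theorem Cn.spl {k : ℕ} {D D' : List (ℕ × ℕ)} (h : Cn D) (hD : D' ∈ spl k D) : Cn D' := by
  obtain ⟨D₁, e, D₂, rfl, rfl⟩ := (mem_spl _ _ _).1 hD
  intro c hc
  have h1 : c e.1 = c k := hc (e.1, k) (by simp)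
  have h2 : c k = c e.2 := hc (k, e.2) (by simp)
  have := h c (by
    intro d hd
    simp only [List.mem_append, List.mem_cons] at hd
    rcases hd with hd | rfl | hd
    · exact hc d (by simp [hd])
    · exact h1.trans h2
    · exact hc d (by simp [hd]))
  intro d hd
  have he := this e (by simp)
  simp only [List.mem_append, List.mem_cons] at hd
  rcases hd with hd | rfl | rfl | hd
  · exact this d (by simp [hd])
  · exact he
  · exact h1.symm.trans he
  · exact this d (by simp [hd])

theorem hasL_new {k : ℕ} {D D' : List (ℕ × ℕ)} (hD : D' ∈ spl k D) : ∃ d ∈ D', d.1 = k := by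
  obtain ⟨D₁, e, D₂, rfl, rfl⟩ := (mem_spl _ _ _).1 hD
  exact ⟨(k, e.2), by simp, rfl⟩

theorem hasL_old {k i : ℕ} {D D' : List (ℕ × ℕ)} (hD : D' ∈ spl k D) (h : ∃ d ∈ D, d.1 = i) :
    ∃ d ∈ D', d.1 = i := by
  obtain ⟨D₁, e, D₂, rfl, rfl⟩ := (mem_spl _ _ _).1 hD
  obtain ⟨d, hd, rfl⟩ := h
  simp only [List.mem_append, List.mem_cons] at hd
  rcases hd with hd | rfl | hd
  · exact ⟨d, by simp [hd], rfl⟩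
  · exact ⟨(d.1, k), by simp, rfl⟩
  · exact ⟨d, by simp [hd], rfl⟩

/-- shape of a model -/
abbrev shp {E : Type} (M : List (Ent E)) : List (ℕ × ℕ) := M.map (fun t => (t.a, t.b))

theorem split_step {G : Multigraph} {M : List (Ent G.E)} {φ : ℕ → G.V} {j k : ℕ} (hM : Mod G M φ j)
    {S : Finset G.E} (hS : ∀ x, x ∈ M.flatMap (·.l) ↔ x ∈ S) {v : G.V}
    (hv : ∃ x ∈ S, G.src x = v ∨ G.tgt x = v) (hk : Lt (shp M) k) :
    ∃ M' φ', Mod G M' φ' j ∧ shp M' ∈ spl k (shp M) ∧ φ' k = v ∧ (∀ i, i ≠ k → φ' i = φ i) ∧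
      ∀ x, x ∈ M'.flatMap (·.l) ↔ x ∈ S := by
  obtain ⟨x, hx, hxv⟩ := hv
  obtain ⟨t, ht, hxt⟩ := List.mem_flatMap.1 ((hS x).2 hx)
  obtain ⟨l₁, l₂, el, hw1, hw2⟩ := (hM.wk t ht).at hxt hxv
  obtain ⟨M₁, M₂, rfl⟩ := List.append_of_mem ht
  have hlt : ∀ s ∈ M₁ ++ t :: M₂, s.a ≠ k ∧ s.b ≠ k := by
    intro s hs
    have := hk (s.a, s.b) (List.mem_map.2 ⟨s, hs, rfl⟩)
    simp only at this
    omega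
  have hφ : ∀ i, i ≠ k → Function.update φ k v i = φ i := fun i hi => Function.update_of_ne hi _ _
  obtain ⟨f₁, f₂, hf⟩ : ∃ f₁ f₂ : Bool, (t.f = false → f₁ = false ∧ f₂ = false) ∧
      (f₁ = true → l₁ ≠ []) ∧ (f₂ = true → l₂ ≠ []) ∧ (f₁ = false ∨ f₂ = false) ∧
      (t.f = true → f₁ = true ∨ f₂ = true) := by
    by_cases h : t.f = true
    · have := hM.flag t ht h
      rw [el] at this
      by_cases h1 : l₁ = []
      · refine ⟨false, true, ?_⟩
        simp [h1] at this
        simp [h, this]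
      · exact ⟨true, false, by simp [h, h1]⟩
    · exact ⟨false, false, by simp at h; simp [h]⟩
  obtain ⟨g1, g2, g3, g4, g5⟩ := hf
  have hfl : (M₁ ++ (⟨t.a, k, f₁, l₁⟩ :: ⟨k, t.b, f₂, l₂⟩ :: M₂ : List (Ent G.E))).flatMap (·.l) =
      (M₁ ++ t :: M₂).flatMap (·.l) := by
    simp only [List.flatMap_append, List.flatMap_cons, el, List.append_assoc]
  refine ⟨M₁ ++ ⟨t.a, k, f₁, l₁⟩ :: ⟨k, t.b, f₂, l₂⟩ :: M₂, Function.update φ k v,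
    ⟨?_, ?_, ?_, ?_, ?_⟩, ?_, by simp, hφ, ?_⟩
  · intro s hs
    simp only [List.mem_append, List.mem_cons] at hs
    rcases hs with hs | rfl | rfl | hs
    · have := hlt s (by simp [hs])
      rw [hφ _ this.1, hφ _ this.2]; exact hM.wk s (by simp [hs])
    · show G.Wk (Function.update φ k v t.a) l₁ (Function.update φ k v k)
      rw [hφ _ (hlt t ht).1, Function.update_self]; exact hw1
    · show G.Wk (Function.update φ k v k) l₂ (Function.update φ k v t.b)
      rw [hφ _ (hlt t ht).2, Function.update_self]; exact hw2
    · have := hlt s (by simp [hs])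
      rw [hφ _ this.1, hφ _ this.2]; exact hM.wk s (by simp [hs])
  · rw [hfl]; exact hM.nodup
  · intro s hs
    simp only [List.mem_append, List.mem_cons] at hs
    rcases hs with hs | rfl | rfl | hs
    · exact hM.flag s (by simp [hs])
    · exact g2
    · exact g3
    · exact hM.flag s (by simp [hs])
  · rw [← hM.cnt]
    simp only [List.countP_append, List.countP_cons]
    cases ht : t.f <;> cases f₁ <;> cases f₂ <;> simp_all
  · intro c hc
    have h1 := hM.good c (by
      intro s hs hsf
      simp only [List.mem_append, List.mem_cons] at hs
      rcases hs with hs | rfl | hs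
      · exact hc s (by simp [hs]) hsf
      · have e1 := hc ⟨s.a, k, f₁, l₁⟩ (by simp) (g1 hsf).1
        have e2 := hc ⟨k, s.b, f₂, l₂⟩ (by simp) (g1 hsf).2
        exact e1.trans e2
      · exact hc s (by simp [hs]) hsf)
    have h2 := h1 t (by simp)
    have h3 : c t.a = c k := by
      rcases g4 with h | h
      · exact hc ⟨t.a, k, f₁, l₁⟩ (by simp) h
      · have := hc ⟨k, t.b, f₂, l₂⟩ (by simp) h
        exact h2.trans this.symm
    intro s hs
    simp only [List.mem_append, List.mem_cons] at hs
    rcases hs with hs | rfl | rfl | hs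
    · exact h1 s (by simp [hs])
    · exact h3
    · exact h3.symm.trans h2
    · exact h1 s (by simp [hs])
  · rw [mem_spl]
    exact ⟨shp M₁, (t.a, t.b), shp M₂, by simp [shp], by simp [shp]⟩
  · rw [hfl]; exact hS

theorem add_step {G : Multigraph} {M : List (Ent G.E)} {φ : ℕ → G.V} {j k k' : ℕ} (hM : Mod G M φ j)
    {S : Finset G.E} (hS : ∀ x, x ∈ M.flatMap (·.l) ↔ x ∈ S) {P : List G.E} (hP : P ≠ [])
    (hw : G.Wk (φ k) P (φ k')) (hn : P.Nodup) (hd : ∀ x ∈ P, x ∉ S) (hc : Cn (shp M))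
    (h1 : ∃ d ∈ shp M, d.1 = k) (h2 : ∃ d ∈ shp M, d.1 = k') :
    HasM G ((k, k') :: shp M) (S ∪ P.toFinset) (j + 1) := by
  refine ⟨⟨k, k', true, P⟩ :: M, φ, rfl, ⟨?_, ?_, ?_, ?_, ?_⟩, ?_⟩
  · intro t ht
    rcases List.mem_cons.1 ht with rfl | ht
    · exact hw
    · exact hM.wk t ht
  · rw [List.flatMap_cons, List.nodup_append']
    exact ⟨hn, hM.nodup, fun x hx hx' => hd x hx ((hS x).1 hx')⟩
  · intro t ht
    rcases List.mem_cons.1 ht with rfl | ht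
    · exact fun _ => hP
    · exact hM.flag t ht
  · rw [List.countP_cons, hM.cnt]; rfl
  · intro c hcc
    have h3 := hM.good c (fun t ht => hcc t (by simp [ht]))
    have h4 := hc c (by
      intro d hd
      obtain ⟨t, ht, rfl⟩ := List.mem_map.1 hd
      exact h3 t ht)
    intro t ht
    rcases List.mem_cons.1 ht with rfl | ht
    · obtain ⟨d, hd, e⟩ := h1
      obtain ⟨d', hd', e'⟩ := h2
      show c k = c k'
      rw [← e, ← e', h4 d hd, h4 d' hd']
    · exact h3 t ht
  · intro x
    rw [List.flatMap_cons, List.mem_append, hS, mem_union, List.mem_toFinset]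
    exact or_comm

/-- all ways of adding an ear -/
def earL (k : ℕ) (D : List (ℕ × ℕ)) : List (List (ℕ × ℕ)) :=
  ((spl k D).flatMap (spl (k + 1))).map ((k, k + 1) :: ·)

theorem ear_step {G : Multigraph} (hG : G.Connected) (hb : G.Bridgeless) (hE : G.nE = G.nV + 3)
    {D : List (ℕ × ℕ)} {j k : ℕ} (hj : 1 ≤ j) (hj4 : j < 4) (hL : Lt D k) (hC : Cn D)
    (h : ∃ S VS, HasM G D S j ∧ Inv G S VS j) :
    ∃ D' ∈ earL k D, ∃ S VS, HasM G D' S (j + 1) ∧ Inv G S VS (j + 1) := by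
  obtain ⟨S, VS, ⟨M, φ, rfl, hM, hS⟩, hI⟩ := h
  obtain ⟨u, hu, v, hv, P, hP, hw, hn, hd, VS', hI'⟩ := ear hG hb hI (hI.ne_univ hG hE hj4)
  obtain ⟨M₁, φ₁, a1, a2, a3, a4, a5⟩ := split_step hM hS (hI.inc hj u hu) hL
  obtain ⟨M₂, φ₂, b1, b2, b3, b4, b5⟩ := split_step a1 a5 (hI.inc hj v hv) (hL.spl a2)
  refine ⟨_, ?_, _, VS', add_step (k := k) (k' := k + 1) b1 b5 hP ?_ hn hd ((hC.spl a2).spl b2)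
    (hasL_old b2 (hasL_new a2)) (hasL_new b2), hI'⟩
  · unfold earL
    rw [List.mem_map]
    exact ⟨_, List.mem_flatMap.2 ⟨_, a2, b2⟩, rfl⟩
  · rw [b3, b4 _ (by omega), a3]; exact hw

theorem ear_one {G : Multigraph} [hne : Nonempty G.V] (hG : G.Connected) (hb : G.Bridgeless)
    (hE : G.nE = G.nV + 3) : ∃ S VS, HasM G [(0, 0)] S 1 ∧ Inv G S VS 1 := by
  obtain ⟨v0⟩ := hne
  have hI : Inv G ∅ {v0} 0 := ⟨by simp, by simp, by simp, by simp, by simp⟩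
  obtain ⟨u, hu, v, hv, P, hP, hw, hn, hd, VS', hI'⟩ := ear hG hb hI (hI.ne_univ hG hE (by omega))
  rw [mem_singleton] at hu hv
  subst hu; subst hv
  refine ⟨_, VS', ⟨[⟨0, 0, true, P⟩], fun _ => v, rfl, ⟨?_, ?_, ?_, ?_, ?_⟩, ?_⟩, hI'⟩
  · simpa using hw
  · simpa using hn
  · simpa using hP
  · simp
  · intro c _; simp
  · simp

theorem ear_two {G : Multigraph} [hne : Nonempty G.V] (hG : G.Connected) (hb : G.Bridgeless)
    (hE : G.nE = G.nV + 3) : ∃ S VS, HasM G [(0, 1), (0, 1), (1, 0)] S 2 ∧ Inv G S VS 2 := by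
  obtain ⟨S, VS, ⟨M, φ, hD, hM, hS⟩, hI⟩ := ear_one hG hb hE
  obtain ⟨u, hu, v, hv, P, hP, hw, hn, hd, VS', hI'⟩ := ear hG hb hI (hI.ne_univ hG hE (by omega))
  obtain ⟨x, hx, hxu⟩ := hI.inc le_rfl u hu
  obtain ⟨t, rfl, ht⟩ : ∃ t, M = [t] ∧ (t.a, t.b) = ((0 : ℕ), (0 : ℕ)) := by
    cases M with
    | nil => simp at hD
    | cons t M => simp at hD; exact ⟨t, by simp [hD.2], by simp [hD.1]⟩
  simp only [Prod.mk.injEq] at ht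
  have hS' : ∀ x, x ∈ t.l ↔ x ∈ S := by simpa using hS
  have hwk := hM.wk t (by simp)
  obtain ⟨l₁, l₂, e, h1, h2⟩ := hwk.at ((hS' x).2 hx) hxu
  have hM2 : Mod G [⟨0, 0, t.f, l₂ ++ l₁⟩] (fun _ => u) 1 := by
    refine ⟨?_, ?_, ?_, ?_, ?_⟩
    · simp only [List.mem_singleton, forall_eq]
      rw [ht.1] at h1; rw [ht.2] at h2
      exact h2.append h1
    · have := hM.nodup
      simp only [List.flatMap_cons, List.flatMap_nil, List.append_nil, e] at this ⊢
      exact (List.perm_append_comm).nodup_iff.1 this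
    · have := hM.flag t (by simp)
      simp only [List.mem_singleton, forall_eq]
      intro h
      have := this h
      rw [e] at this
      simp at this ⊢
      tauto
    · have := hM.cnt
      simpa using this
    · intro c _; simp
  obtain ⟨M₁, φ₁, a1, a2, a3, a4, a5⟩ := split_step (k := 1) hM2 (S := S) (by
    intro x
    rw [← hS' x, e]
    simp [or_comm]) (hI.inc le_rfl v hv) (by intro d hd; simp at hd; simp [hd])
  simp [spl] at a2
  refine ⟨_, VS', ?_, hI'⟩
  have := add_step (k := 0) (k' := 1) a1 a5 hP (by rw [a3, a4 0 (by omega)]; exact hw) hn hd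
    (by rw [a2]; intro c hc; simp at hc ⊢; exact hc.1.symm)
    (by rw [a2]; simp) (by rw [a2]; simp)
  rw [a2] at this
  exact this

end Multigraph

namespace Multigraph

def thL : List (ℕ × ℕ) := [(0, 1), (0, 1), (1, 0)]

def k4L : List (ℕ × ℕ) := [(0, 1), (0, 2), (0, 3), (1, 2), (1, 3), (2, 3)]

def nL : List (ℕ × ℕ) := [(0, 1), (0, 1), (1, 2), (2, 3), (2, 3), (3, 0)]

def k33L : List (ℕ × ℕ) := [(0, 3), (0, 4), (0, 5), (1, 3), (1, 4), (1, 5), (2, 3), (2, 4), (2, 5)]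

def prL : List (ℕ × ℕ) := [(1, 2), (0, 2), (0, 1), (4, 5), (3, 5), (3, 4), (0, 3), (1, 4), (2, 5)]

def aL : List (ℕ × ℕ) := [(0, 4), (4, 5), (4, 5), (5, 1), (0, 2), (0, 3), (1, 2), (1, 3), (2, 3)]

def bL : List (ℕ × ℕ) := [(0, 1), (0, 1), (1, 2), (2, 3), (2, 3), (3, 4), (4, 5), (4, 5), (5, 0)]

def ddL : List (ℕ × ℕ) := [(0, 2), (2, 3), (2, 3), (3, 1), (0, 4), (4, 5), (4, 5), (5, 1), (0, 1)]

/-- inverse relabeling -/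
def invL (s : List ℕ) : List ℕ := (List.range 6).map fun i => s.idxOf i

/-- coverage check -/
def covB (Ds : List (List (ℕ × ℕ))) (T : List (List (ℕ × ℕ) × List (List ℕ))) : Bool :=
  Ds.all fun D => T.any fun x => x.2.any fun s => isoB D x.1 s (invL s) 0 0

theorem cov {G : Multigraph} {Ds : List (List (ℕ × ℕ))} {T : List (List (ℕ × ℕ) × List (List ℕ))}
    (h : covB Ds T = true) {D : List (ℕ × ℕ)} (hD : D ∈ Ds) {S : Finset G.E} {j : ℕ}
    (hM : HasM G D S j) : ∃ x ∈ T, HasM G x.1 S j := by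
  unfold covB at h
  rw [List.all_eq_true] at h
  have h2 := h D hD
  rw [List.any_eq_true] at h2
  obtain ⟨x, hx, h3⟩ := h2
  rw [List.any_eq_true] at h3
  obtain ⟨s, hs, h4⟩ := h3
  exact ⟨x, hx, hM.iso _ _ _ h4⟩

theorem cov_th : covB (earL 2 thL) [(k4L, [[1, 0, 2, 3]]),
    (nL, [[2, 3, 0, 1], [2, 3, 1, 0]])] = true := by
  decide +kernel

theorem cov_k4 : covB (earL 4 k4L)
    [(k33L, [[1, 0, 3, 5, 4, 2], [3, 1, 4, 2, 0, 5], [1, 5, 3, 2, 4, 0], [3, 1, 0, 5, 4, 2], [5, 1, 4, 2,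
      3, 0], [1, 0, 4, 5, 2, 3]]),
    (prL, [[4, 2, 0, 1, 5, 3], [5, 0, 2, 1, 3, 4], [5, 0, 4, 3, 2, 1], [0, 4, 1, 2, 3, 5], [5, 1, 0, 2,
      3, 4], [1, 4, 5, 3, 2, 0], [5, 4, 0, 3, 2, 1], [1, 2, 5, 0, 4, 3], [0, 5, 3, 4, 1, 2], [2, 5, 3, 4,
      1, 0], [0, 1, 2, 5, 3, 4], [4, 5, 3, 2, 1, 0], [2, 3, 1, 0, 4, 5], [4, 5, 0, 3, 2, 1], [5, 2, 3, 4,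
      0, 1], [5, 4, 2, 3, 1, 0], [1, 3, 0, 2, 5, 4], [2, 1, 0, 3, 4, 5], [5, 2, 4, 3, 0, 1], [0, 2, 1, 3,
      5, 4], [4, 3, 0, 5, 2, 1], [0, 2, 1, 5, 4, 3], [4, 5, 1, 3, 0, 2], [4, 3, 5, 1, 2, 0]]),
    (aL, [[1, 0, 2, 3, 4, 5], [0, 1, 2, 3, 4, 5], [0, 3, 1, 2, 5, 4], [0, 3, 1, 2, 4, 5], [0, 3, 2, 1,
      5, 4], [0, 2, 3, 1, 4, 5], [3, 1, 0, 2, 4, 5], [3, 1, 0, 2, 5, 4], [3, 1, 2, 0, 4, 5], [3, 1, 2, 0,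
      5, 4], [2, 3, 1, 0, 4, 5], [3, 2, 1, 0, 5, 4]])] = true := by
  decide +kernel

theorem cov_n : covB (earL 4 nL)
    [(prL, [[3, 5, 2, 0, 4, 1], [1, 0, 3, 4, 5, 2]]),
    (aL, [[1, 0, 4, 5, 2, 3], [0, 2, 5, 4, 3, 1], [2, 1, 5, 4, 3, 0], [0, 3, 5, 4, 1, 2], [5, 4, 2, 1,
      0, 3], [4, 5, 3, 0, 2, 1], [5, 4, 0, 1, 3, 2], [4, 5, 1, 3, 2, 0], [3, 0, 4, 5, 1, 2], [4, 5, 1, 3,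
      0, 2]]),
    (bL, [[0, 1, 4, 5, 3, 2], [0, 1, 4, 5, 2, 3], [4, 5, 0, 1, 3, 2], [0, 1, 2, 3, 4, 5]]),
    (ddL, [[0, 1, 3, 2, 5, 4], [1, 0, 2, 3, 5, 4], [3, 2, 0, 1, 5, 4], [3, 2, 0, 1, 4, 5], [5, 4, 2, 3,
      0, 1], [5, 4, 2, 3, 1, 0]])] = true := by
  decide +kernel

theorem five_models {G : Multigraph} [Nonempty G.V] (hG : G.Connected) (hb : G.Bridgeless)
    (hE : G.nE = G.nV + 3) : HasM G k33L univ 4 ∨ HasM G prL univ 4 ∨ HasM G aL univ 4 ∨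
      HasM G bL univ 4 ∨ HasM G ddL univ 4 := by
  have h2 := ear_two hG hb hE
  obtain ⟨D, hD, S, VS, hM, hI⟩ := ear_step (D := thL) (k := 2) hG hb hE (by omega) (by omega)
    (by intro d hd; simp [thL] at hd; rcases hd with rfl | rfl <;> simp)
    (by intro c hc; simp [thL] at hc ⊢; exact hc.1.symm) h2
  obtain ⟨x, hx, h3⟩ := cov cov_th hD hM
  simp only [List.mem_cons, List.not_mem_nil, or_false] at hx
  rcases hx with rfl | rfl
  · obtain ⟨D, hD, S, VS, hM, hI⟩ := ear_step (D := k4L) (k := 4) hG hb hE (by omega) (by omega)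
      (by intro d hd; simp [k4L] at hd; rcases hd with rfl | rfl | rfl | rfl | rfl | rfl <;> simp)
      (by intro c hc; simp [k4L] at hc ⊢; simp [← hc.1, ← hc.2.1]) ⟨S, VS, h3, hI⟩
    obtain rfl := hI.eq_univ hG hb hE
    obtain ⟨x, hx, h3⟩ := cov cov_k4 hD hM
    simp only [List.mem_cons, List.not_mem_nil, or_false] at hx
    rcases hx with rfl | rfl | rfl <;> simp [h3]
  · obtain ⟨D, hD, S, VS, hM, hI⟩ := ear_step (D := nL) (k := 4) hG hb hE (by omega) (by omega)
      (by intro d hd; simp [nL] at hd; rcases hd with rfl | rfl | rfl | rfl <;> simp)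
      (by intro c hc; simp [nL] at hc ⊢; simp [← hc.2.1, ← hc.2.2.1, hc.1]) ⟨S, VS, h3, hI⟩
    obtain rfl := hI.eq_univ hG hb hE
    obtain ⟨x, hx, h3⟩ := cov cov_n hD hM
    simp only [List.mem_cons, List.not_mem_nil, or_false] at hx
    rcases hx with rfl | rfl | rfl | rfl <;> simp [h3]

end Multigraph

namespace Multigraph

theorem mg_conn (L : List (ℕ × ℕ)) (h : chk L [] = true) : (mg L).Connected := by
  have := (chk_iff L [] ∅ (fun x => ⟨fun h => absurd h (notMem_empty x), fun h => absurd h List.not_mem_nil⟩)).2 h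
  rw [sdiff_empty] at this
  exact this

theorem mg_ws {G : Multigraph} (hG : G.Connected) (hE : G.nE = G.nV + 3) (L : List (ℕ × ℕ))
    (hlen : L.length = 9) (hL : (L.all fun d => decide (d.1 < 6) && decide (d.2 < 6)) = true)
    (hc : chk L [] = true) (h : HasM G L univ 4) :
    ∃ w : Fin 9 → ℕ, IsWeakSubdivision G (mg L) w ∧
      ∀ (e : Fin 9) (s : List ℕ) (L' : List (ℕ × ℕ)),
        isoB L L' s (invL s) (s.getD (L.getD e.val (0, 0)).1 0) (s.getD (L.getD e.val (0, 0)).2 0) = true →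
        w e = 0 → HasM G L' univ 4 := by
  obtain ⟨M, φ, hD, hM, hS⟩ := h
  have hMl : M.length = 9 := by rw [← hlen, ← hD, List.length_map]
  have hget : ∀ e : Fin 9, L.getD e.val (0, 0) = ((M.get (finCongr hMl.symm e)).a, (M.get (finCongr hMl.symm e)).b) := by
    intro e
    subst hD
    simp [hMl, e.2]
  have hlt : ∀ e : Fin 9, (L.getD e.val (0, 0)).1 < 6 ∧ (L.getD e.val (0, 0)).2 < 6 := by
    intro e
    rw [List.all_eq_true] at hL
    have := hL (L.getD e.val (0, 0)) (by
      rw [List.getD_eq_getElem _ _ (by rw [hlen]; exact e.2)]; exact List.getElem_mem _)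
    simpa using this
  refine ⟨fun e => (M.get (finCongr hMl.symm e)).l.length, ?_, ?_⟩
  · refine weakSub_of_model G (mg L) hG (mg_conn L hc) M φ 4 hM (fun x => (hS x).2 (mem_univ _))
      (finCongr hMl.symm : Fin 9 ≃ Fin M.length) (fun v : Fin 6 => v.val) Fin.val_injective ?_ ?_ ?_ ?_
    · intro (e : Fin 9)
      have h1 := hget e
      have h2 := (hlt e).1
      show _ = (L.getD e.val (0, 0)).1 % 6
      rw [Nat.mod_eq_of_lt h2, h1]
      rfl
    · intro (e : Fin 9)
      have h1 := hget e
      have h2 := (hlt e).2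
      show _ = (L.getD e.val (0, 0)).2 % 6
      rw [Nat.mod_eq_of_lt h2, h1]
      rfl
    · show Fintype.card (Fin 9) + 1 = Fintype.card (Fin 6) + 4
      simp
    · show G.nE + Fintype.card (Fin 6) = G.nV + Fintype.card (Fin 9)
      simp; omega
  · intro e s L' hB h0
    have hr := recastB hM L L' hD s (invL s) _ _ hB (Or.inr ⟨M.get (finCongr hMl.symm e),
      List.get_mem _ _, List.length_eq_zero_iff.1 h0, by rw [hget], by rw [hget]⟩)
    obtain ⟨M', φ', h1, h2, h3⟩ := hr
    exact ⟨M', φ', h1, h2, fun x => (h3 x).trans (hS x)⟩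

theorem k33_conn : K33.Connected := by
  apply connOn_of_bool
  intro c hc
  have h : ∀ i j, c (Sum.inl i) = c (Sum.inr j) := fun i j => hc (i, j) (mem_univ _)
  rintro (i | i) (j | j)
  · rw [h i 0, h j 0]
  · exact h i j
  · exact (h j i).symm
  · rw [← h 0 i, ← h 0 j]

theorem k33_ws {G : Multigraph} (hG : G.Connected) (hE : G.nE = G.nV + 3)
    (h : HasM G k33L univ 4) : ∃ w : K33.E → ℕ, IsWeakSubdivision G K33 w := by
  obtain ⟨M, φ, hD, hM, hS⟩ := h
  have hMl : M.length = 9 := by rw [← List.length_map, hD]; rfl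
  have hget : ∀ e : Fin 9, k33L.getD e.val (0, 0) = ((M.get (finCongr hMl.symm e)).a, (M.get (finCongr hMl.symm e)).b) := by
    intro e
    rw [← hD]
    simp [hMl, e.2]
  haveI : Nonempty K33.V := ⟨Sum.inl 0⟩
  have hk : ∀ p : Fin 3 × Fin 3, k33L.getD (finProdFinEquiv p : Fin 9).val (0, 0) = (p.1.val, 3 + p.2.val) := by
    rintro ⟨i, j⟩
    fin_cases i <;> fin_cases j <;> rfl
  refine ⟨_, weakSub_of_model G K33 hG k33_conn M φ 4 hM (fun x => (hS x).2 (mem_univ _))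
    ((finProdFinEquiv : Fin 3 × Fin 3 ≃ Fin 9).trans (finCongr hMl.symm))
    (Sum.elim (fun i : Fin 3 => i.val) (fun i : Fin 3 => 3 + i.val)) ?_ ?_ ?_ ?_ ?_⟩
  · rintro (i | i) (j | j) hij
    · exact congrArg Sum.inl (Fin.ext hij)
    · have : i.val = 3 + j.val := hij
      omega
    · have : 3 + i.val = j.val := hij
      omega
    · have : 3 + i.val = 3 + j.val := hij
      exact congrArg Sum.inr (Fin.ext (by omega))
  · intro (p : Fin 3 × Fin 3)
    have h1 := hget (finProdFinEquiv p)
    rw [hk] at h1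
    exact (congrArg Prod.fst h1).symm
  · intro (p : Fin 3 × Fin 3)
    have h1 := hget (finProdFinEquiv p)
    rw [hk] at h1
    exact (congrArg Prod.snd h1).symm
  · show Fintype.card (Fin 3 × Fin 3) + 1 = Fintype.card (Fin 3 ⊕ Fin 3) + 4
    simp
  · show G.nE + Fintype.card (Fin 3 ⊕ Fin 3) = G.nV + Fintype.card (Fin 3 × Fin 3)
    simp; omega

end Multigraph

namespace Multigraph

def pI (L : List (ℕ × ℕ)) (i : ℕ) (w : Fin 9 → ℤ) : ℤ :=
  ((((List.finRange 9).sublistsLen i).filter (chk L)).map fun l => (l.map w).prod).sum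

lemma cI_pI (L : List (ℕ × ℕ)) (w : (mg L).E → ℕ) (i : ℕ) :
    ((subdivide (mg L) w).cI i : ℤ) = pI L i (fun e => (w e : ℤ)) := by
  rw [cI_mg, pI, Nat.cast_list_sum, List.map_map]
  congr 1
  apply List.map_congr_left
  intro l _
  rw [Function.comp_apply, Nat.cast_list_prod]
  exact congrArg List.prod (List.map_map ..)

lemma fk332 : ((List.finRange 9).sublistsLen 2).filter (chk k33L) =
    [[7,8], [6,8], [6,7], [5,8], [5,7], [5,6], [4,8], [4,7], [4,6], [4,5], [3,8], [3,7], [3,6],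
    [3,5], [3,4], [2,8], [2,7], [2,6], [2,5], [2,4], [2,3], [1,8], [1,7], [1,6], [1,5], [1,4],
    [1,3], [1,2], [0,8], [0,7], [0,6], [0,5], [0,4], [0,3], [0,2], [0,1]] := by
  decide +kernel

lemma fk333 : ((List.finRange 9).sublistsLen 3).filter (chk k33L) =
    [[5,7,8], [5,6,8], [5,6,7], [4,7,8], [4,6,8], [4,6,7], [4,5,8], [4,5,7], [4,5,6], [3,7,8],
    [3,6,8], [3,6,7], [3,5,8], [3,5,7], [3,5,6], [3,4,8], [3,4,7], [3,4,6], [2,7,8], [2,6,8],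
    [2,6,7], [2,5,7], [2,5,6], [2,4,8], [2,4,7], [2,4,6], [2,4,5], [2,3,8], [2,3,7], [2,3,6],
    [2,3,5], [2,3,4], [1,7,8], [1,6,8], [1,6,7], [1,5,8], [1,5,7], [1,5,6], [1,4,8], [1,4,6],
    [1,4,5], [1,3,8], [1,3,7], [1,3,6], [1,3,5], [1,3,4], [1,2,8], [1,2,7], [1,2,6], [1,2,5],
    [1,2,4], [1,2,3], [0,7,8], [0,6,8], [0,6,7], [0,5,8], [0,5,7], [0,5,6], [0,4,8], [0,4,7],
    [0,4,6], [0,4,5], [0,3,8], [0,3,7], [0,3,5], [0,3,4], [0,2,8], [0,2,7], [0,2,6], [0,2,5],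
    [0,2,4], [0,2,3], [0,1,8], [0,1,7], [0,1,6], [0,1,5], [0,1,4], [0,1,3]] := by
  decide +kernel

lemma fk334 : ((List.finRange 9).sublistsLen 4).filter (chk k33L) =
    [[4,5,7,8], [4,5,6,8], [4,5,6,7], [3,5,7,8], [3,5,6,8], [3,5,6,7], [3,4,7,8], [3,4,6,8],
    [3,4,6,7], [2,4,7,8], [2,4,6,8], [2,4,6,7], [2,4,5,7], [2,4,5,6], [2,3,7,8], [2,3,6,8],
    [2,3,6,7], [2,3,5,7], [2,3,5,6], [2,3,4,7], [2,3,4,6], [1,5,7,8], [1,5,6,8], [1,5,6,7],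
    [1,4,5,8], [1,4,5,6], [1,3,7,8], [1,3,6,8], [1,3,6,7], [1,3,5,8], [1,3,5,6], [1,3,4,8],
    [1,3,4,6], [1,2,7,8], [1,2,6,8], [1,2,6,7], [1,2,5,7], [1,2,5,6], [1,2,4,8], [1,2,4,6],
    [1,2,4,5], [1,2,3,8], [1,2,3,7], [1,2,3,5], [1,2,3,4], [0,5,7,8], [0,5,6,8], [0,5,6,7],
    [0,4,7,8], [0,4,6,8], [0,4,6,7], [0,4,5,8], [0,4,5,7], [0,3,5,8], [0,3,5,7], [0,3,4,8],
    [0,3,4,7], [0,2,7,8], [0,2,6,8], [0,2,6,7], [0,2,5,7], [0,2,5,6], [0,2,4,8], [0,2,4,6],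
    [0,2,4,5], [0,2,3,8], [0,2,3,7], [0,2,3,5], [0,2,3,4], [0,1,7,8], [0,1,6,8], [0,1,6,7],
    [0,1,5,7], [0,1,5,6], [0,1,4,8], [0,1,4,6], [0,1,4,5], [0,1,3,8], [0,1,3,7], [0,1,3,5],
    [0,1,3,4]] := by
  decide +kernel

lemma fpr2 : ((List.finRange 9).sublistsLen 2).filter (chk prL) =
    [[7,8], [6,8], [6,7], [5,8], [5,7], [5,6], [4,8], [4,7], [4,6], [4,5], [3,8], [3,7], [3,6],
    [3,5], [3,4], [2,8], [2,7], [2,6], [2,5], [2,4], [2,3], [1,8], [1,7], [1,6], [1,5], [1,4],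
    [1,3], [1,2], [0,8], [0,7], [0,6], [0,5], [0,4], [0,3], [0,2], [0,1]] := by
  decide +kernel

lemma fpr3 : ((List.finRange 9).sublistsLen 3).filter (chk prL) =
    [[5,7,8], [5,6,8], [5,6,7], [4,7,8], [4,6,8], [4,6,7], [4,5,8], [4,5,7], [3,7,8], [3,6,8],
    [3,6,7], [3,5,8], [3,5,6], [3,4,7], [3,4,6], [3,4,5], [2,7,8], [2,6,8], [2,6,7], [2,5,8],
    [2,5,7], [2,5,6], [2,4,8], [2,4,7], [2,4,6], [2,4,5], [2,3,8], [2,3,7], [2,3,6], [2,3,5],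
    [2,3,4], [1,7,8], [1,6,8], [1,6,7], [1,5,8], [1,5,7], [1,5,6], [1,4,8], [1,4,7], [1,4,6],
    [1,4,5], [1,3,8], [1,3,7], [1,3,6], [1,3,5], [1,3,4], [1,2,8], [1,2,7], [1,2,5], [1,2,4],
    [1,2,3], [0,7,8], [0,6,8], [0,6,7], [0,5,8], [0,5,7], [0,5,6], [0,4,8], [0,4,7], [0,4,6],
    [0,4,5], [0,3,8], [0,3,7], [0,3,6], [0,3,5], [0,3,4], [0,2,8], [0,2,6], [0,2,5], [0,2,4],
    [0,2,3], [0,1,7], [0,1,6], [0,1,5], [0,1,4], [0,1,3], [0,1,2]] := by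
  decide +kernel

lemma fpr4 : ((List.finRange 9).sublistsLen 4).filter (chk prL) =
    [[2,5,7,8], [2,5,6,8], [2,5,6,7], [2,4,7,8], [2,4,6,8], [2,4,6,7], [2,4,5,8], [2,4,5,7],
    [2,3,7,8], [2,3,6,8], [2,3,6,7], [2,3,5,8], [2,3,5,6], [2,3,4,7], [2,3,4,6], [2,3,4,5],
    [1,5,7,8], [1,5,6,8], [1,5,6,7], [1,4,7,8], [1,4,6,8], [1,4,6,7], [1,4,5,8], [1,4,5,7],
    [1,3,7,8], [1,3,6,8], [1,3,6,7], [1,3,5,8], [1,3,5,6], [1,3,4,7], [1,3,4,6], [1,3,4,5],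
    [1,2,5,8], [1,2,5,7], [1,2,4,8], [1,2,4,7], [1,2,3,8], [1,2,3,7], [1,2,3,5], [1,2,3,4],
    [0,5,7,8], [0,5,6,8], [0,5,6,7], [0,4,7,8], [0,4,6,8], [0,4,6,7], [0,4,5,8], [0,4,5,7],
    [0,3,7,8], [0,3,6,8], [0,3,6,7], [0,3,5,8], [0,3,5,6], [0,3,4,7], [0,3,4,6], [0,3,4,5],
    [0,2,5,8], [0,2,5,6], [0,2,4,8], [0,2,4,6], [0,2,4,5], [0,2,3,8], [0,2,3,6], [0,2,3,4],
    [0,1,5,7], [0,1,5,6], [0,1,4,7], [0,1,4,6], [0,1,4,5], [0,1,3,7], [0,1,3,6], [0,1,3,5],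
    [0,1,2,5], [0,1,2,4], [0,1,2,3]] := by
  decide +kernel

lemma fa2 : ((List.finRange 9).sublistsLen 2).filter (chk aL) =
    [[7,8], [6,8], [6,7], [5,8], [5,7], [5,6], [4,8], [4,7], [4,6], [4,5], [3,8], [3,7], [3,6],
    [3,5], [3,4], [2,8], [2,7], [2,6], [2,5], [2,4], [2,3], [1,8], [1,7], [1,6], [1,5], [1,4],
    [1,3], [1,2], [0,8], [0,7], [0,6], [0,5], [0,4], [0,2], [0,1]] := by
  decide +kernel

lemma fa3 : ((List.finRange 9).sublistsLen 3).filter (chk aL) =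
    [[6,7,8], [5,6,8], [5,6,7], [4,7,8], [4,6,7], [4,5,8], [4,5,7], [4,5,6], [3,7,8], [3,6,8],
    [3,5,8], [3,5,7], [3,5,6], [3,4,8], [3,4,7], [3,4,6], [2,7,8], [2,6,8], [2,6,7], [2,5,8],
    [2,5,7], [2,5,6], [2,4,8], [2,4,7], [2,4,6], [2,4,5], [2,3,8], [2,3,7], [2,3,6], [2,3,5],
    [2,3,4], [1,7,8], [1,6,8], [1,6,7], [1,5,8], [1,5,7], [1,5,6], [1,4,8], [1,4,7], [1,4,6],
    [1,4,5], [1,3,8], [1,3,7], [1,3,6], [1,3,5], [1,3,4], [1,2,8], [1,2,7], [1,2,6], [1,2,5],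
    [1,2,4], [0,7,8], [0,6,8], [0,5,8], [0,5,7], [0,5,6], [0,4,8], [0,4,7], [0,4,6], [0,2,8],
    [0,2,7], [0,2,6], [0,2,5], [0,2,4], [0,1,8], [0,1,7], [0,1,6], [0,1,5], [0,1,4]] := by
  decide +kernel

lemma fa4 : ((List.finRange 9).sublistsLen 4).filter (chk aL) =
    [[2,6,7,8], [2,5,6,8], [2,5,6,7], [2,4,7,8], [2,4,6,7], [2,4,5,8], [2,4,5,7], [2,4,5,6],
    [2,3,7,8], [2,3,6,8], [2,3,5,8], [2,3,5,7], [2,3,5,6], [2,3,4,8], [2,3,4,7], [2,3,4,6],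
    [1,6,7,8], [1,5,6,8], [1,5,6,7], [1,4,7,8], [1,4,6,7], [1,4,5,8], [1,4,5,7], [1,4,5,6],
    [1,3,7,8], [1,3,6,8], [1,3,5,8], [1,3,5,7], [1,3,5,6], [1,3,4,8], [1,3,4,7], [1,3,4,6],
    [1,2,7,8], [1,2,6,8], [1,2,5,8], [1,2,5,7], [1,2,5,6], [1,2,4,8], [1,2,4,7], [1,2,4,6],
    [0,2,7,8], [0,2,6,8], [0,2,5,8], [0,2,5,7], [0,2,5,6], [0,2,4,8], [0,2,4,7], [0,2,4,6],
    [0,1,7,8], [0,1,6,8], [0,1,5,8], [0,1,5,7], [0,1,5,6], [0,1,4,8], [0,1,4,7], [0,1,4,6]] := by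
  decide +kernel

lemma fb2 : ((List.finRange 9).sublistsLen 2).filter (chk bL) =
    [[7,8], [6,8], [6,7], [5,7], [5,6], [4,8], [4,7], [4,6], [4,5], [3,8], [3,7], [3,6], [3,5],
    [3,4], [2,7], [2,6], [2,4], [2,3], [1,8], [1,7], [1,6], [1,5], [1,4], [1,3], [1,2], [0,8],
    [0,7], [0,6], [0,5], [0,4], [0,3], [0,2], [0,1]] := by
  decide +kernel

lemma fb3 : ((List.finRange 9).sublistsLen 3).filter (chk bL) =
    [[4,7,8], [4,6,8], [4,6,7], [4,5,7], [4,5,6], [3,7,8], [3,6,8], [3,6,7], [3,5,7], [3,5,6],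
    [3,4,7], [3,4,6], [2,4,7], [2,4,6], [2,3,7], [2,3,6], [1,7,8], [1,6,8], [1,6,7], [1,5,7],
    [1,5,6], [1,4,8], [1,4,7], [1,4,6], [1,4,5], [1,3,8], [1,3,7], [1,3,6], [1,3,5], [1,3,4],
    [1,2,7], [1,2,6], [1,2,4], [1,2,3], [0,7,8], [0,6,8], [0,6,7], [0,5,7], [0,5,6], [0,4,8],
    [0,4,7], [0,4,6], [0,4,5], [0,3,8], [0,3,7], [0,3,6], [0,3,5], [0,3,4], [0,2,7], [0,2,6],
    [0,2,4], [0,2,3], [0,1,7], [0,1,6], [0,1,4], [0,1,3]] := by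
  decide +kernel

lemma fb4 : ((List.finRange 9).sublistsLen 4).filter (chk bL) =
    [[1,4,7,8], [1,4,6,8], [1,4,6,7], [1,4,5,7], [1,4,5,6], [1,3,7,8], [1,3,6,8], [1,3,6,7],
    [1,3,5,7], [1,3,5,6], [1,3,4,7], [1,3,4,6], [1,2,4,7], [1,2,4,6], [1,2,3,7], [1,2,3,6],
    [0,4,7,8], [0,4,6,8], [0,4,6,7], [0,4,5,7], [0,4,5,6], [0,3,7,8], [0,3,6,8], [0,3,6,7],
    [0,3,5,7], [0,3,5,6], [0,3,4,7], [0,3,4,6], [0,2,4,7], [0,2,4,6], [0,2,3,7], [0,2,3,6],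
    [0,1,4,7], [0,1,4,6], [0,1,3,7], [0,1,3,6]] := by
  decide +kernel

lemma fdd2 : ((List.finRange 9).sublistsLen 2).filter (chk ddL) =
    [[7,8], [6,8], [6,7], [5,8], [5,7], [5,6], [4,8], [4,6], [4,5], [3,8], [3,7], [3,6], [3,5],
    [3,4], [2,8], [2,7], [2,6], [2,5], [2,4], [2,3], [1,8], [1,7], [1,6], [1,5], [1,4], [1,3],
    [1,2], [0,8], [0,7], [0,6], [0,5], [0,4], [0,2], [0,1]] := by
  decide +kernel

lemma fdd3 : ((List.finRange 9).sublistsLen 3).filter (chk ddL) =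
    [[6,7,8], [5,7,8], [5,6,8], [4,6,8], [4,5,8], [3,6,8], [3,6,7], [3,5,8], [3,5,7], [3,5,6],
    [3,4,6], [3,4,5], [2,7,8], [2,6,8], [2,6,7], [2,5,8], [2,5,7], [2,5,6], [2,4,8], [2,4,6],
    [2,4,5], [2,3,8], [2,3,7], [2,3,6], [2,3,5], [2,3,4], [1,7,8], [1,6,8], [1,6,7], [1,5,8],
    [1,5,7], [1,5,6], [1,4,8], [1,4,6], [1,4,5], [1,3,8], [1,3,7], [1,3,6], [1,3,5], [1,3,4],
    [1,2,8], [1,2,7], [1,2,6], [1,2,5], [1,2,4], [0,6,8], [0,6,7], [0,5,8], [0,5,7], [0,5,6],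
    [0,4,6], [0,4,5], [0,2,8], [0,2,7], [0,2,6], [0,2,5], [0,2,4], [0,1,8], [0,1,7], [0,1,6],
    [0,1,5], [0,1,4]] := by
  decide +kernel

lemma fdd4 : ((List.finRange 9).sublistsLen 4).filter (chk ddL) =
    [[2,6,7,8], [2,5,7,8], [2,5,6,8], [2,4,6,8], [2,4,5,8], [2,3,6,8], [2,3,6,7], [2,3,5,8],
    [2,3,5,7], [2,3,5,6], [2,3,4,6], [2,3,4,5], [1,6,7,8], [1,5,7,8], [1,5,6,8], [1,4,6,8],
    [1,4,5,8], [1,3,6,8], [1,3,6,7], [1,3,5,8], [1,3,5,7], [1,3,5,6], [1,3,4,6], [1,3,4,5],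
    [1,2,6,8], [1,2,6,7], [1,2,5,8], [1,2,5,7], [1,2,5,6], [1,2,4,6], [1,2,4,5], [0,2,6,8],
    [0,2,6,7], [0,2,5,8], [0,2,5,7], [0,2,5,6], [0,2,4,6], [0,2,4,5], [0,1,6,8], [0,1,6,7],
    [0,1,5,8], [0,1,5,7], [0,1,5,6], [0,1,4,6], [0,1,4,5]] := by
  decide +kernel

end Multigraph

namespace Multigraph

def K (i : ℕ) (x1 x2 x3 x4 x5 x6 x7 x8 x9 : ℤ) : ℤ := pI k33L i ![x1,x2,x3,x4,x5,x6,x7,x8,x9]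
def Q (i : ℕ) (x1 x2 x3 x4 x5 x6 x7 x8 x9 : ℤ) : ℤ := pI prL i ![x1,x2,x3,x4,x5,x6,x7,x8,x9]

/-- some nonnegative weighting of `K33` of total `s` beats the given values -/
def Imp (s p2 p3 p4 : ℤ) : Prop := ∃ x : Fin 9 → ℤ, (∀ e, 0 ≤ x e) ∧ ∑ e, x e = s ∧
  p2 ≤ pI k33L 2 x ∧ p3 < pI k33L 3 x ∧ p4 < pI k33L 4 x

lemma Imp.of {s p2 p3 p4 : ℤ} (x1 x2 x3 x4 x5 x6 x7 x8 x9 : ℤ) (h1 : 0 ≤ x1) (h2 : 0 ≤ x2)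
    (h3 : 0 ≤ x3) (h4 : 0 ≤ x4) (h5 : 0 ≤ x5) (h6 : 0 ≤ x6) (h7 : 0 ≤ x7) (h8 : 0 ≤ x8)
    (h9 : 0 ≤ x9) (hs : x1+x2+x3+x4+x5+x6+x7+x8+x9 = s)
    (k2 : p2 ≤ K 2 x1 x2 x3 x4 x5 x6 x7 x8 x9) (k3 : p3 < K 3 x1 x2 x3 x4 x5 x6 x7 x8 x9)
    (k4 : p4 < K 4 x1 x2 x3 x4 x5 x6 x7 x8 x9) : Imp s p2 p3 p4 := by
  refine ⟨![x1,x2,x3,x4,x5,x6,x7,x8,x9], ?_, ?_, k2, k3, k4⟩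
  · simp [Fin.forall_fin_succ, *]
  · rw [← hs]; simp [Fin.sum_univ_succ]; ring

lemma Imp.mono {s p2 p3 p4 q2 q3 q4 : ℤ} (h : Imp s p2 p3 p4) (h2 : q2 ≤ p2) (h3 : q3 ≤ p3)
    (h4 : q4 ≤ p4) : Imp s q2 q3 q4 := by
  obtain ⟨x, a, b, c, d, e⟩ := h
  exact ⟨x, a, b, by linarith, by linarith, by linarith⟩

def IQ (a1 a2 a3 b1 b2 b3 r1 r2 r3 : ℤ) : Prop :=
  Imp (a1+a2+a3+b1+b2+b3+r1+r2+r3) (Q 2 a1 a2 a3 b1 b2 b3 r1 r2 r3)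
    (Q 3 a1 a2 a3 b1 b2 b3 r1 r2 r3) (Q 4 a1 a2 a3 b1 b2 b3 r1 r2 r3)

section
variable (a1 a2 a3 b1 b2 b3 r1 r2 r3 : ℤ)

lemma swQ2 : Q 2 a2 a1 a3 b2 b1 b3 r2 r1 r3 = Q 2 a1 a2 a3 b1 b2 b3 r1 r2 r3 := by
  simp only [Q, pI, fpr2, List.map_cons, List.map_nil, List.prod_cons, List.prod_nil,
    List.sum_cons, List.sum_nil, Matrix.cons_val]
  ring
lemma swQ3 : Q 3 a2 a1 a3 b2 b1 b3 r2 r1 r3 = Q 3 a1 a2 a3 b1 b2 b3 r1 r2 r3 := by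
  simp only [Q, pI, fpr3, List.map_cons, List.map_nil, List.prod_cons, List.prod_nil,
    List.sum_cons, List.sum_nil, Matrix.cons_val]
  ring
lemma swQ4 : Q 4 a2 a1 a3 b2 b1 b3 r2 r1 r3 = Q 4 a1 a2 a3 b1 b2 b3 r1 r2 r3 := by
  simp only [Q, pI, fpr4, List.map_cons, List.map_nil, List.prod_cons, List.prod_nil,
    List.sum_cons, List.sum_nil, Matrix.cons_val]
  ring
lemma cyQ2 : Q 2 a2 a3 a1 b2 b3 b1 r2 r3 r1 = Q 2 a1 a2 a3 b1 b2 b3 r1 r2 r3 := by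
  simp only [Q, pI, fpr2, List.map_cons, List.map_nil, List.prod_cons, List.prod_nil,
    List.sum_cons, List.sum_nil, Matrix.cons_val]
  ring
lemma cyQ3 : Q 3 a2 a3 a1 b2 b3 b1 r2 r3 r1 = Q 3 a1 a2 a3 b1 b2 b3 r1 r2 r3 := by
  simp only [Q, pI, fpr3, List.map_cons, List.map_nil, List.prod_cons, List.prod_nil,
    List.sum_cons, List.sum_nil, Matrix.cons_val]
  ring
lemma cyQ4 : Q 4 a2 a3 a1 b2 b3 b1 r2 r3 r1 = Q 4 a1 a2 a3 b1 b2 b3 r1 r2 r3 := by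
  simp only [Q, pI, fpr4, List.map_cons, List.map_nil, List.prod_cons, List.prod_nil,
    List.sum_cons, List.sum_nil, Matrix.cons_val]
  ring
lemma flQ2 : Q 2 b1 b2 b3 a1 a2 a3 r1 r2 r3 = Q 2 a1 a2 a3 b1 b2 b3 r1 r2 r3 := by
  simp only [Q, pI, fpr2, List.map_cons, List.map_nil, List.prod_cons, List.prod_nil,
    List.sum_cons, List.sum_nil, Matrix.cons_val]
  ring
lemma flQ3 : Q 3 b1 b2 b3 a1 a2 a3 r1 r2 r3 = Q 3 a1 a2 a3 b1 b2 b3 r1 r2 r3 := by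
  simp only [Q, pI, fpr3, List.map_cons, List.map_nil, List.prod_cons, List.prod_nil,
    List.sum_cons, List.sum_nil, Matrix.cons_val]
  ring
lemma flQ4 : Q 4 b1 b2 b3 a1 a2 a3 r1 r2 r3 = Q 4 a1 a2 a3 b1 b2 b3 r1 r2 r3 := by
  simp only [Q, pI, fpr4, List.map_cons, List.map_nil, List.prod_cons, List.prod_nil,
    List.sum_cons, List.sum_nil, Matrix.cons_val]
  ring

lemma IQ_sw : IQ a2 a1 a3 b2 b1 b3 r2 r1 r3 ↔ IQ a1 a2 a3 b1 b2 b3 r1 r2 r3 := by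
  unfold IQ
  rw [swQ2, swQ3, swQ4,
    show a2+a1+a3+b2+b1+b3+r2+r1+r3 = a1+a2+a3+b1+b2+b3+r1+r2+r3 by ring]
lemma IQ_cy : IQ a2 a3 a1 b2 b3 b1 r2 r3 r1 ↔ IQ a1 a2 a3 b1 b2 b3 r1 r2 r3 := by
  unfold IQ
  rw [cyQ2, cyQ3, cyQ4,
    show a2+a3+a1+b2+b3+b1+r2+r3+r1 = a1+a2+a3+b1+b2+b3+r1+r2+r3 by ring]
lemma IQ_fl : IQ b1 b2 b3 a1 a2 a3 r1 r2 r3 ↔ IQ a1 a2 a3 b1 b2 b3 r1 r2 r3 := by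
  unfold IQ
  rw [flQ2, flQ3, flQ4,
    show b1+b2+b3+a1+a2+a3+r1+r2+r3 = a1+a2+a3+b1+b2+b3+r1+r2+r3 by ring]

lemma tw2 : K 2 r1 a3 a2 b3 r2 b1 b2 a1 r3 = Q 2 a1 a2 a3 b1 b2 b3 r1 r2 r3 := by
  simp only [K, Q, pI, fk332, fpr2, List.map_cons, List.map_nil, List.prod_cons, List.prod_nil,
    List.sum_cons, List.sum_nil, Matrix.cons_val]
  ring
lemma tw3 : K 3 r1 a3 a2 b3 r2 b1 b2 a1 r3 = Q 3 a1 a2 a3 b1 b2 b3 r1 r2 r3 +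
    (r1*r2*r3 + r3*((a1-b1)*(a2-b2))) := by
  simp only [K, Q, pI, fk333, fpr3, List.map_cons, List.map_nil, List.prod_cons, List.prod_nil,
    List.sum_cons, List.sum_nil, Matrix.cons_val]
  ring
lemma tw4 : K 4 r1 a3 a2 b3 r2 b1 b2 a1 r3 = Q 4 a1 a2 a3 b1 b2 b3 r1 r2 r3 +
    r3 * ((a1-b1)*(a2-b2)*(r1+r2+a3+b3) + r1*r2*(a1+b1+a2+b2+a3+b3)
      + r1*(a1-b1)*(a3-b3) + r2*(a2-b2)*(a3-b3)) := by
  simp only [K, Q, pI, fk334, fpr4, List.map_cons, List.map_nil, List.prod_cons, List.prod_nil,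
    List.sum_cons, List.sum_nil, Matrix.cons_val]
  ring

lemma sh2 : Q 2 a1 a2 (a3+1) b1 b2 (b3-1) r1 r2 r3 = Q 2 a1 a2 a3 b1 b2 b3 r1 r2 r3
    + (b3-a3-1) := by
  simp only [Q, pI, fpr2, List.map_cons, List.map_nil, List.prod_cons, List.prod_nil,
    List.sum_cons, List.sum_nil, Matrix.cons_val]
  ring
lemma sh3 : Q 3 a1 a2 (a3+1) b1 b2 (b3-1) r1 r2 r3 = Q 3 a1 a2 a3 b1 b2 b3 r1 r2 r3
    + ((b3-a3-1)*(a1+b1+a2+b2+r1+r2+r3) - r2*(a1-b1) - r1*(a2-b2)) := by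
  simp only [Q, pI, fpr3, List.map_cons, List.map_nil, List.prod_cons, List.prod_nil,
    List.sum_cons, List.sum_nil, Matrix.cons_val]
  ring
lemma sh4 : Q 4 a1 a2 (a3+1) b1 b2 (b3-1) r1 r2 r3 = Q 4 a1 a2 a3 b1 b2 b3 r1 r2 r3
    + ((b3-a3-1)*((a2+b2+r1)*(a1+b1+r2) + r3*(a1+b1+a2+b2+r1+r2))
      - r1*(a2-b2)*(a1+b1) - r2*(a1-b1)*(a2+b2) - r1*r2*(a1-b1+a2-b2)
      - r3*(r1+r2)*(a1-b1+a2-b2)) := by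
  simp only [Q, pI, fpr4, List.map_cons, List.map_nil, List.prod_cons, List.prod_nil,
    List.sum_cons, List.sum_nil, Matrix.cons_val]
  ring
end

end Multigraph

namespace Multigraph

lemma shift_IQ (a1 a2 a3 b1 b2 b3 r1 r2 r3 : ℤ) (h : IQ a1 a2 (a3+1) b1 b2 (b3-1) r1 r2 r3)
    (c2 : 0 ≤ b3-a3-1)
    (c3 : 0 ≤ (b3-a3-1)*(a1+b1+a2+b2+r1+r2+r3) - r2*(a1-b1) - r1*(a2-b2))
    (c4 : 0 ≤ (b3-a3-1)*((a2+b2+r1)*(a1+b1+r2) + r3*(a1+b1+a2+b2+r1+r2))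
      - r1*(a2-b2)*(a1+b1) - r2*(a1-b1)*(a2+b2) - r1*r2*(a1-b1+a2-b2)
      - r3*(r1+r2)*(a1-b1+a2-b2)) : IQ a1 a2 a3 b1 b2 b3 r1 r2 r3 := by
  unfold IQ at *
  rw [sh2, sh3, sh4, show a1+a2+(a3+1)+b1+b2+(b3-1)+r1+r2+r3 = a1+a2+a3+b1+b2+b3+r1+r2+r3 by ring]
    at h
  exact h.mono (by linarith) (by linarith) (by linarith)

lemma twist_IQ (a1 a2 a3 b1 b2 b3 r1 r2 r3 : ℤ) (ha1 : 0 ≤ a1) (ha2 : 0 ≤ a2) (ha3 : 0 ≤ a3)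
    (hb1 : 0 ≤ b1) (hb2 : 0 ≤ b2) (hb3 : 0 ≤ b3) (hr1 : 0 < r1) (hr2 : 0 < r2) (hr3 : 0 < r3)
    (c3 : 0 < r1*r2 + (a1-b1)*(a2-b2))
    (c4 : 0 < (a1-b1)*(a2-b2)*(r1+r2+a3+b3) + r1*r2*(a1+b1+a2+b2+a3+b3)
      + r1*(a1-b1)*(a3-b3) + r2*(a2-b2)*(a3-b3)) : IQ a1 a2 a3 b1 b2 b3 r1 r2 r3 := by
  refine Imp.of r1 a3 a2 b3 r2 b1 b2 a1 r3 hr1.le ha3 ha2 hb3 hr2.le hb1 hb2 ha1 hr3.le (by ring)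
    (tw2 ..).ge ?_ ?_
  · rw [tw3]; nlinarith [mul_pos hr3 c3]
  · rw [tw4]; nlinarith [mul_pos hr3 c4]

lemma special (A1 A2 e1 e2 r1 r2 r3 : ℤ) (hA1 : e1 ≤ A1) (hA2 : e2 ≤ A2) (he2 : 0 ≤ e2)
    (hr1 : 0 < r1) (hr2 : 0 < r2) (hr3 : 0 < r3) (h1 : r2 < e1)
    (hf : r1*r3 ≤ e1*(e1+e2) ∨ r1*r3*(2*(e1+e2)) ≤ r1*(e1*e1) + r3*((e1+e2)*(e1+e2)) + e1*(e1+e2)*A2) :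
    0 ≤ (e1+e2-1)*((A2+r1)*(A1+r2) + r3*(A1+A2+r1+r2))
      - r1*e2*A1 - r2*e1*A2 - r1*r2*(e1+e2) - r3*(r1+r2)*(e1+e2) := by
  have k1 : e1 ≤ 2*(e1*(e1-1) - r2) := by nlinarith
  have hT : e1 ≤ e1 + e2 := by linarith
  have k2 : e1+e2 ≤ 2*((e1+e2-1)*(e1+e2) - r2) := by nlinarith
  have k3 : e1 ≤ 2*((e1+e2-1)*e1 - r2) := by nlinarith
  have key : 0 ≤ r1*(e1*(e1-1) - r2) + r3*((e1+e2-1)*(e1+e2) - r2) + A2*((e1+e2-1)*e1 - r2)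
      - r1*r3 := by
    generalize e1*(e1-1) - r2 = c at *
    generalize (e1+e2-1)*(e1+e2) - r2 = E at *
    generalize (e1+e2-1)*e1 - r2 = F at *
    have hA2' : 0 ≤ A2 := by linarith
    have hF : 0 ≤ A2*F := mul_nonneg hA2' (by linarith)
    rcases hf with h | h
    · by_contra hc
      push Not at hc
      have hX : 0 < r1*r3 := mul_pos hr1 hr3
      have h0 : 0 ≤ r1*c + r3*E := add_nonneg (mul_nonneg hr1.le (by linarith)) (mul_nonneg hr3.le (by linarith))
      have h1 : r1*c + r3*E < r1*r3 := by linarith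
      have h2 : (r1*c + r3*E)^2 < (r1*r3)^2 := by
        apply pow_lt_pow_left₀ h1 h0 two_ne_zero
      have h3 : e1*(e1+e2) ≤ (2*c)*(2*E) := mul_le_mul k1 k2 (by linarith) (by linarith)
      have h4 : (r1*r3)*(r1*r3) ≤ (r1*r3)*((2*c)*(2*E)) := mul_le_mul_of_nonneg_left (h.trans h3) hX.le
      nlinarith [sq_nonneg (r1*c - r3*E)]
    · have g1 : e1*e1 ≤ (2*c)*(e1+e2) := mul_le_mul k1 hT (by linarith) (by linarith)
      have g2 := mul_le_mul_of_nonneg_left g1 hr1.le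
      have g3 := mul_le_mul_of_nonneg_left (mul_le_mul_of_nonneg_right k2 (by linarith : 0 ≤ e1+e2)) hr3.le
      have g4 := mul_le_mul_of_nonneg_left (mul_le_mul_of_nonneg_right k3 (by linarith : 0 ≤ e1+e2)) hA2'
      have : 0 ≤ (2*(e1+e2))*(r1*c + r3*E + A2*F - r1*r3) := by nlinarith
      exact nonneg_of_mul_nonneg_right this (by linarith)
  have q1 : 0 ≤ (A1-e1)*((e1+e2-1)*A2 + r1*(e1-1) + r3*(e1+e2-1)) := by
    apply mul_nonneg (by linarith)
    have := mul_nonneg (by linarith : 0 ≤ e1+e2-1) (by linarith : 0 ≤ A2)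
    have := mul_nonneg hr1.le (by linarith : 0 ≤ e1-1)
    have := mul_nonneg hr3.le (by linarith : 0 ≤ e1+e2-1)
    linarith
  have q2 : 0 ≤ r3*((e1+e2-1)*(A2-e2)) :=
    mul_nonneg hr3.le (mul_nonneg (by linarith) (by linarith))
  have q3 : 0 ≤ r2*(A2*e2) := mul_nonneg hr2.le (mul_nonneg (by linarith) he2)
  nlinarith

/-- the inductive hypothesis on smaller imbalance -/
def IH (N : ℤ) : Prop := ∀ a1 a2 a3 b1 b2 b3 r1 r2 r3 : ℤ, 0 ≤ a1 → 0 ≤ a2 → 0 ≤ a3 →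
  0 ≤ b1 → 0 ≤ b2 → 0 ≤ b3 → 0 < r1 → 0 < r2 → 0 < r3 → 0 < a1+a2+a3+b1+b2+b3 →
  |a1-b1| + |a2-b2| + |a3-b3| < N → IQ a1 a2 a3 b1 b2 b3 r1 r2 r3

lemma step_core (a1 a2 a3 b1 b2 b3 r1 r2 r3 : ℤ) (ha1 : 0 ≤ a1) (ha2 : 0 ≤ a2) (ha3 : 0 ≤ a3)
    (hb1 : 0 ≤ b1) (hb2 : 0 ≤ b2) (hb3 : 0 ≤ b3) (hr1 : 0 < r1) (hr2 : 0 < r2) (hr3 : 0 < r3)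
    (h1 : r2 < a1 - b1) (h2 : 0 ≤ a2 - b2) (h3 : 0 < b3 - a3)
    (ih : IH (|a1-b1| + |a2-b2| + |a3-b3|)) : IQ a1 a2 a3 b1 b2 b3 r1 r2 r3 := by
  have abs3 : b3 - a3 ≥ 2 → |a1-b1| + |a2-b2| + |a3+1-(b3-1)| < |a1-b1| + |a2-b2| + |a3-b3| := by
    intro h
    have : |a3+1-(b3-1)| < |a3-b3| := by
      rw [abs_of_neg (by linarith : a3-b3 < 0), abs_lt]; constructor <;> linarith
    linarith
  have eqcase : b3-a3 = a1-b1+(a2-b2) → (0:ℤ) ≤ (a1-b1+(a2-b2)-1)*((a2+b2+r1)*(a1+b1+r2)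
      + r3*(a1+b1+(a2+b2)+r1+r2)) - r1*(a2-b2)*(a1+b1) - r2*(a1-b1)*(a2+b2)
      - r1*r2*(a1-b1+(a2-b2)) - r3*(r1+r2)*(a1-b1+(a2-b2)) →
      IQ a1 a2 a3 b1 b2 b3 r1 r2 r3 := by
    intro h key
    apply shift_IQ
    · apply ih <;> try linarith
      exact abs3 (by linarith)
    · linarith
    · rw [h]
      have p1 : r2*(a1-b1) ≤ (a1-b1+(a2-b2)-1)*(a1+b1) :=
        mul_le_mul (by linarith) (by linarith) (by linarith) (by linarith)
      have p2 : (a2-b2)*r1 ≤ (a1-b1+(a2-b2)-1)*r1 := mul_le_mul_of_nonneg_right (by linarith) hr1.le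
      have p3 : 0 ≤ (a1-b1+(a2-b2)-1)*(a2+b2+r2+r3) := mul_nonneg (by linarith) (by linarith)
      nlinarith
    · rw [h]; nlinarith
  rcases lt_trichotomy (b3-a3) (a1-b1+(a2-b2)) with h | h | h
  · -- reduce `a1 - b1`
    rw [← IQ_fl, ← IQ_cy]
    have hD : r2 ≤ a1-b1-1 := by linarith
    have hT : (b3-a3)-(a2-b2) ≤ a1-b1-1 := by linarith
    have hD0 : 0 ≤ a1-b1-1 := by linarith
    apply shift_IQ
    · apply ih <;> try linarith
      have : |b1+1-(a1-1)| < |a1-b1| := by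
        rw [abs_of_pos (by linarith : 0 < a1-b1), abs_lt]; constructor <;> linarith
      rw [abs_sub_comm b2, abs_sub_comm b3]; linarith
    · exact hD0
    · have p1 : r2*(b3-a3) ≤ (a1-b1-1)*(b3+a3) := mul_le_mul hD (by linarith) h3.le hD0
      have p2 : 0 ≤ r3*(a2-b2) := mul_nonneg hr3.le h2
      have p3 : 0 ≤ (a1-b1-1)*(b2+a2+r2+r3+r1) := mul_nonneg hD0 (by linarith)
      nlinarith
    · have p1 : r2*(b3-a3) ≤ (a1-b1-1)*(b3+a3) := mul_le_mul hD (by linarith) h3.le hD0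
      have p2 := mul_le_mul_of_nonneg_right p1 (by linarith : 0 ≤ b2+a2)
      have p3 := mul_le_mul_of_nonneg_left hT (mul_nonneg hr2.le hr3.le)
      have p4 := mul_le_mul_of_nonneg_left hT (mul_nonneg hr1.le (by linarith : 0 ≤ r2+r3))
      have p5 : 0 ≤ r3*(a2-b2)*(b3+a3) := mul_nonneg (mul_nonneg hr3.le h2) (by linarith)
      have p6 : 0 ≤ (a1-b1-1)*((b3+a3)*r3 + r2*(b2+a2) + r1*(b2+a2+b3+a3)) := by
        apply mul_nonneg hD0
        have := mul_nonneg (by linarith : 0 ≤ b3+a3) hr3.le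
        have := mul_nonneg hr2.le (by linarith : 0 ≤ b2+a2)
        have := mul_nonneg hr1.le (by linarith : 0 ≤ b2+a2+b3+a3)
        linarith
      nlinarith
  · by_cases c3 : 0 < r3*r1 + (a3-b3)*(a1-b1)
    · by_cases c4 : 0 < (a3-b3)*(a1-b1)*(r3+r1+a2+b2) + r3*r1*(a3+b3+a1+b1+a2+b2)
        + r3*(a3-b3)*(a2-b2) + r1*(a1-b1)*(a2-b2)
      · exact (IQ_cy ..).2 (twist_IQ a3 a1 a2 b3 b1 b2 r3 r1 r2 ha3 ha1 ha2 hb3 hb1 hb2 hr3 hr1 hr2 c3 c4)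
      · have key := special (a1+b1) (a2+b2) (a1-b1) (a2-b2) r1 r2 r3 (by linarith) (by linarith)
          h2 hr1 hr2 hr3 h1 (Or.inr (by
            have e : a3 - b3 = -(a1-b1+(a2-b2)) := by linarith
            have : 2*(a1-b1+(a2-b2)) ≤ a3+b3+a1+b1+a2+b2 := by linarith
            have := mul_le_mul_of_nonneg_left this (mul_nonneg hr3.le hr1.le)
            rw [e] at c4
            nlinarith))
        exact eqcase h key
    · have key := special (a1+b1) (a2+b2) (a1-b1) (a2-b2) r1 r2 r3 (by linarith) (by linarith)
          h2 hr1 hr2 hr3 h1 (Or.inl (by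
            have e : a3 - b3 = -(a1-b1+(a2-b2)) := by linarith
            rw [e] at c3
            nlinarith))
      exact eqcase h key
  · have hD : a1-b1+(a2-b2) ≤ b3-a3-1 := by linarith
    have hD1 : a1-b1 ≤ b3-a3-1 := by linarith
    have hD2 : a2-b2 ≤ b3-a3-1 := by linarith
    apply shift_IQ
    · apply ih <;> try linarith
      exact abs3 (by linarith)
    · linarith
    · have p1 := mul_le_mul_of_nonneg_left hD1 hr2.le
      have p2 := mul_le_mul_of_nonneg_left hD2 hr1.le
      have p3 : 0 ≤ (b3-a3-1)*(a1+b1+a2+b2+r3) := mul_nonneg (by linarith) (by linarith)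
      nlinarith
    · have p1 := mul_le_mul_of_nonneg_left hD1 (mul_nonneg hr2.le (by linarith : 0 ≤ a2+b2))
      have p2 := mul_le_mul_of_nonneg_left hD2 (mul_nonneg hr1.le (by linarith : 0 ≤ a1+b1))
      have p3 := mul_le_mul_of_nonneg_left hD (mul_nonneg hr1.le hr2.le)
      have p4 := mul_le_mul_of_nonneg_left hD (mul_nonneg hr3.le (by linarith : 0 ≤ r1+r2))
      have p5 : 0 ≤ (b3-a3-1)*((a2+b2)*(a1+b1) + r3*(a1+b1+a2+b2)) := by
        apply mul_nonneg (by linarith)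
        have := mul_nonneg (by linarith : 0 ≤ a2+b2) (by linarith : 0 ≤ a1+b1)
        have := mul_nonneg hr3.le (by linarith : 0 ≤ a1+b1+a2+b2)
        linarith
      nlinarith

lemma step (a1 a2 a3 b1 b2 b3 r1 r2 r3 : ℤ) (ha1 : 0 ≤ a1) (ha2 : 0 ≤ a2) (ha3 : 0 ≤ a3)
    (hb1 : 0 ≤ b1) (hb2 : 0 ≤ b2) (hb3 : 0 ≤ b3) (hr1 : 0 < r1) (hr2 : 0 < r2) (hr3 : 0 < r3)
    (hs : 0 < a1+a2+a3+b1+b2+b3)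
    (h1 : 0 ≤ a1 - b1) (h2 : 0 ≤ a2 - b2)
    (ih : IH (|a1-b1| + |a2-b2| + |a3-b3|)) : IQ a1 a2 a3 b1 b2 b3 r1 r2 r3 := by
  by_cases c4 : 0 < (a1-b1)*(a2-b2)*(r1+r2+a3+b3) + r1*r2*(a1+b1+a2+b2+a3+b3)
      + r1*(a1-b1)*(a3-b3) + r2*(a2-b2)*(a3-b3)
  · exact twist_IQ _ _ _ _ _ _ _ _ _ ha1 ha2 ha3 hb1 hb2 hb3 hr1 hr2 hr3
      (add_pos_of_pos_of_nonneg (mul_pos hr1 hr2) (mul_nonneg h1 h2)) c4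
  have hdd := mul_nonneg h1 h2
  have hrr := mul_pos hr1 hr2
  have h3 : 0 < b3 - a3 := by
    by_contra h
    apply c4
    have q1 : 0 ≤ (a1-b1)*(a2-b2)*(r1+r2+a3+b3) := mul_nonneg hdd (by linarith)
    have q2 : 0 < r1*r2*(a1+b1+a2+b2+a3+b3) := mul_pos hrr (by linarith)
    have q3 : 0 ≤ r1*(a1-b1)*(a3-b3) := mul_nonneg (mul_nonneg hr1.le h1) (by linarith)
    have q4 : 0 ≤ r2*(a2-b2)*(a3-b3) := mul_nonneg (mul_nonneg hr2.le h2) (by linarith)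
    linarith
  have q0 : (b3-a3)*((a1-b1-r2)*(a2-b2-r1)) < 0 := by
    have q1 : 0 ≤ (a1-b1)*(a2-b2)*(r1+r2+2*a3) := mul_nonneg hdd (by linarith)
    have q2 : 0 < r1*r2*(a1+b1+a2+b2+2*a3) ∨ a1+b1+a2+b2+2*a3 = 0 := by
      rcases (by linarith : 0 ≤ a1+b1+a2+b2+2*a3).lt_or_eq with h | h
      · exact Or.inl (mul_pos hrr h)
      · exact Or.inr h.symm
    rcases q2 with q2 | q2
    · nlinarith
    · exfalso
      apply c4
      have e1 : a1 = 0 := by linarith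
      have e2 : a2 = 0 := by linarith
      have e3 : b1 = 0 := by linarith
      have e4 : b2 = 0 := by linarith
      have : 0 < r1*r2*(a3+b3) := mul_pos hrr (by linarith)
      subst e1 e2 e3 e4
      nlinarith
  have q1 : (a1-b1-r2)*(a2-b2-r1) < 0 := by
    by_contra h
    have := mul_nonneg h3.le (not_lt.1 h)
    linarith
  rcases mul_neg_iff.1 q1 with ⟨h, -⟩ | ⟨-, h⟩
  · exact step_core _ _ _ _ _ _ _ _ _ ha1 ha2 ha3 hb1 hb2 hb3 hr1 hr2 hr3 (by linarith) h2 h3 ih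
  · rw [← IQ_sw]
    refine step_core _ _ _ _ _ _ _ _ _ ha2 ha1 ha3 hb2 hb1 hb3 hr2 hr1 hr3 (by linarith) h1 h3 ?_
    rwa [add_comm |a2-b2|]

lemma prism_all (N : ℕ) : IH N := by
  induction N with
  | zero =>
    intro a1 a2 a3 b1 b2 b3 r1 r2 r3 _ _ _ _ _ _ _ _ _ _ h
    have := abs_nonneg (a1-b1); have := abs_nonneg (a2-b2); have := abs_nonneg (a3-b3)
    push_cast at h; linarith
  | succ N ih =>
    intro a1 a2 a3 b1 b2 b3 r1 r2 r3 ha1 ha2 ha3 hb1 hb2 hb3 hr1 hr2 hr3 hs h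
    have ih' : ∀ M : ℤ, M ≤ N → IH M := fun M hM c1 c2 c3 d1 d2 d3 s1 s2 s3 x1 x2 x3 x4 x5 x6 x7 x8
      x9 x10 hlt => ih _ _ _ _ _ _ _ _ _ x1 x2 x3 x4 x5 x6 x7 x8 x9 x10 (by linarith)
    push_cast at h
    have hN : |a1-b1| + |a2-b2| + |a3-b3| ≤ N := by linarith
    have e1 := abs_sub_comm a1 b1
    have e2 := abs_sub_comm a2 b2
    have e3 := abs_sub_comm a3 b3
    rcases le_total 0 (a1-b1) with p1 | p1 <;> rcases le_total 0 (a2-b2) with p2 | p2 <;>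
      rcases le_total 0 (a3-b3) with p3 | p3
    · exact step _ _ _ _ _ _ _ _ _ ha1 ha2 ha3 hb1 hb2 hb3 hr1 hr2 hr3 hs p1 p2 (ih' _ hN)
    · exact step _ _ _ _ _ _ _ _ _ ha1 ha2 ha3 hb1 hb2 hb3 hr1 hr2 hr3 hs p1 p2 (ih' _ hN)
    · exact (IQ_cy ..).2 (step _ _ _ _ _ _ _ _ _ ha3 ha1 ha2 hb3 hb1 hb2 hr3 hr1 hr2 (by linarith)
        p3 p1 (ih' _ (by linarith)))
    · exact (IQ_fl ..).1 ((IQ_cy ..).1 (step b2 b3 b1 a2 a3 a1 r2 r3 r1 hb2 hb3 hb1 ha2 ha3 ha1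
        hr2 hr3 hr1 (by linarith) (by linarith) (by linarith) (ih' _ (by linarith))))
    · exact (IQ_cy ..).1 (step _ _ _ _ _ _ _ _ _ ha2 ha3 ha1 hb2 hb3 hb1 hr2 hr3 hr1 (by linarith)
        p2 p3 (ih' _ (by linarith)))
    · exact (IQ_fl ..).1 ((IQ_cy ..).2 (step b3 b1 b2 a3 a1 a2 r3 r1 r2 hb3 hb1 hb2 ha3 ha1 ha2
        hr3 hr1 hr2 (by linarith) (by linarith) (by linarith) (ih' _ (by linarith))))
    · exact (IQ_fl ..).1 (step b1 b2 b3 a1 a2 a3 r1 r2 r3 hb1 hb2 hb3 ha1 ha2 ha3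
        hr1 hr2 hr3 (by linarith) (by linarith) (by linarith) (ih' _ (by linarith)))
    · exact (IQ_fl ..).1 (step b1 b2 b3 a1 a2 a3 r1 r2 r3 hb1 hb2 hb3 ha1 ha2 ha3
        hr1 hr2 hr3 (by linarith) (by linarith) (by linarith) (ih' _ (by linarith)))

end Multigraph

namespace Multigraph

section
variable (a b c s h d e : ℤ)
lemma kz4 : K 4 a b 0 c s h d e 0 = a*b*(c*e+c*h+c*s+d*e+d*h+d*s+e*h+h*s) + a*e*(c*h+c*s+d*h+d*s+h*s)
    + b*d*(c*e+c*h+c*s+e*h+h*s) + d*e*(c*h+c*s+h*s) := by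
  simp only [K, pI, fk334, List.map_cons, List.map_nil, List.prod_cons, List.prod_nil,
    List.sum_cons, List.sum_nil, Matrix.cons_val]
  ring
lemma kr2 : K 2 d e 0 c s h a b 0 = K 2 a b 0 c s h d e 0 := by
  simp only [K, pI, fk332, List.map_cons, List.map_nil, List.prod_cons, List.prod_nil,
    List.sum_cons, List.sum_nil, Matrix.cons_val]
  ring
lemma kc2 : K 2 b a 0 s c h e d 0 = K 2 a b 0 c s h d e 0 := by
  simp only [K, pI, fk332, List.map_cons, List.map_nil, List.prod_cons, List.prod_nil,
    List.sum_cons, List.sum_nil, Matrix.cons_val]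
  ring
lemma kr3 : K 3 d e 0 c s h a b 0 = K 3 a b 0 c s h d e 0 := by
  simp only [K, pI, fk333, List.map_cons, List.map_nil, List.prod_cons, List.prod_nil,
    List.sum_cons, List.sum_nil, Matrix.cons_val]
  ring
lemma kc3 : K 3 b a 0 s c h e d 0 = K 3 a b 0 c s h d e 0 := by
  simp only [K, pI, fk333, List.map_cons, List.map_nil, List.prod_cons, List.prod_nil,
    List.sum_cons, List.sum_nil, Matrix.cons_val]
  ring
lemma kr4 : K 4 d e 0 c s h a b 0 = K 4 a b 0 c s h d e 0 := by
  simp only [K, pI, fk334, List.map_cons, List.map_nil, List.prod_cons, List.prod_nil,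
    List.sum_cons, List.sum_nil, Matrix.cons_val]
  ring
lemma kc4 : K 4 b a 0 s c h e d 0 = K 4 a b 0 c s h d e 0 := by
  simp only [K, pI, fk334, List.map_cons, List.map_nil, List.prod_cons, List.prod_nil,
    List.sum_cons, List.sum_nil, Matrix.cons_val]
  ring
lemma ks2 : K 2 a b 1 c (s-1) h d e 0 = K 2 a b 0 c s h d e 0 +
    (-1 + s) := by
  simp only [K, pI, fk332, List.map_cons, List.map_nil, List.prod_cons, List.prod_nil,
    List.sum_cons, List.sum_nil, Matrix.cons_val]
  ring
lemma ks3 : K 3 a b 1 c (s-1) h d e 0 = K 3 a b 0 c s h d e 0 +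
    (-a - a*b + a*s - b + b*e + b*s - c + c*h + c*s - d + d*s - e + e*s - h + h*s) := by
  simp only [K, pI, fk333, List.map_cons, List.map_nil, List.prod_cons, List.prod_nil,
    List.sum_cons, List.sum_nil, Matrix.cons_val]
  ring
lemma ks4 : K 4 a b 1 c (s-1) h d e 0 = K 4 a b 0 c s h d e 0 +
    (-a*b*c - a*b*d - a*b*h - a*c + a*c*h + a*c*s - a*d + a*d*h + a*d*s - a*h + a*h*s - b*c -
    b*c*d + b*c*e + b*c*h + b*c*s - b*d + b*d*e + b*d*s + b*e*h - b*h + b*h*s - c*d + c*d*h +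
    c*d*s - c*e + c*e*h + c*e*s - d*e - d*e*h + d*e*s - d*h + d*h*s - e*h + e*h*s) := by
  simp only [K, pI, fk334, List.map_cons, List.map_nil, List.prod_cons, List.prod_nil,
    List.sum_cons, List.sum_nil, Matrix.cons_val]
  ring
lemma kh2 : K 2 a b 1 c s (h-1) d e 0 = K 2 a b 0 c s h d e 0 +
    (-1 + h) := by
  simp only [K, pI, fk332, List.map_cons, List.map_nil, List.prod_cons, List.prod_nil,
    List.sum_cons, List.sum_nil, Matrix.cons_val]
  ring
lemma kh3 : K 3 a b 1 c s (h-1) d e 0 = K 3 a b 0 c s h d e 0 +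
    (-a - a*b + a*h - b + b*h - c + c*h + c*s - d + d*h - e + e*h + h*s - s) := by
  simp only [K, pI, fk333, List.map_cons, List.map_nil, List.prod_cons, List.prod_nil,
    List.sum_cons, List.sum_nil, Matrix.cons_val]
  ring
lemma kh4 : K 4 a b 1 c s (h-1) d e 0 = K 4 a b 0 c s h d e 0 +
    (-a*b*c - a*b*d - a*b*e - a*b*s - a*c + a*c*h + a*c*s - a*d + a*d*h + a*d*s - a*e + a*e*h -
    a*e*s + a*h*s - a*s - b*c - b*c*d + b*c*e + b*c*h + b*c*s - b*d + b*d*h - b*e + b*e*h +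
    b*h*s - b*s - c*d + c*d*h + c*d*s - c*e + c*e*h + c*e*s + d*h*s - d*s + e*h*s - e*s) := by
  simp only [K, pI, fk334, List.map_cons, List.map_nil, List.prod_cons, List.prod_nil,
    List.sum_cons, List.sum_nil, Matrix.cons_val]
  ring
lemma ka2 : K 2 (a-1) b 1 c s h d e 0 = K 2 a b 0 c s h d e 0 +
    (-1 + a) := by
  simp only [K, pI, fk332, List.map_cons, List.map_nil, List.prod_cons, List.prod_nil,
    List.sum_cons, List.sum_nil, Matrix.cons_val]
  ring
lemma ka3 : K 3 (a-1) b 1 c s h d e 0 = K 3 a b 0 c s h d e 0 +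
    (a*c + a*d + a*e + a*h + a*s - c + c*d - d - e - h - s) := by
  simp only [K, pI, fk333, List.map_cons, List.map_nil, List.prod_cons, List.prod_nil,
    List.sum_cons, List.sum_nil, Matrix.cons_val]
  ring
lemma ka4 : K 4 (a-1) b 1 c s h d e 0 = K 4 a b 0 c s h d e 0 +
    (a*c*e + a*c*h + a*c*s + a*d*e + a*d*h + a*d*s + a*e*h + a*h*s + c*d*e + c*d*h + c*d*s - c*e
    - c*h - c*s - d*e - d*e*h - d*h + d*h*s - d*s - e*h - h*s) := by
  simp only [K, pI, fk334, List.map_cons, List.map_nil, List.prod_cons, List.prod_nil,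
    List.sum_cons, List.sum_nil, Matrix.cons_val]
  ring
end
end Multigraph

namespace Multigraph

def IB (a b c s h d e : ℤ) : Prop := Imp (a+b+c+s+h+d+e) (K 2 a b 0 c s h d e 0)
  (K 3 a b 0 c s h d e 0) (K 4 a b 0 c s h d e 0)

section
variable {a b c s h d e : ℤ}
lemma IB.r (H : IB d e c s h a b) : IB a b c s h d e := by
  unfold IB at *
  rw [kr2, kr3, kr4] at H
  convert H using 1; ring
lemma IB.cc (H : IB b a s c h e d) : IB a b c s h d e := by
  unfold IB at *
  rw [kc2, kc3, kc4] at H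
  convert H using 1; ring

lemma q3 (hs : 2 ≤ s) (ha : 0 ≤ a) (hb : 0 ≤ b) (ma : a ≤ s) (mb : b ≤ s) :
    a * b ≤ (s - 1) * (a + b) := by
  rcases eq_or_lt_of_le ma with h1 | h1
  · rcases eq_or_lt_of_le mb with h2 | h2
    · subst h1; subst h2; nlinarith
    · have := mul_nonneg ha (show 0 ≤ s - 1 - b by omega)
      have := mul_nonneg hb (show 0 ≤ s - 1 by omega)
      linarith
  · have := mul_nonneg hb (show 0 ≤ s - 1 - a by omega)
    have := mul_nonneg ha (show 0 ≤ s - 1 by omega)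
    linarith

lemma bal_a (ha : 2 ≤ a) (hb : 0 ≤ b) (hc : 0 ≤ c) (hs : 0 ≤ s) (hh : 0 ≤ h) (hd : 0 ≤ d)
    (he : 0 ≤ e) (mc : c ≤ a) (ms : s ≤ a) (mh : h ≤ a) (md : d ≤ a) (me : e ≤ a)
    (hK : 0 < K 4 a b 0 c s h d e 0) : IB a b c s h d e := by
  rw [kz4] at hK
  have h1 := mul_nonneg hc he
  have h2 := mul_nonneg hc hh
  have h3 := mul_nonneg hc hs
  have h4 := mul_nonneg hd he
  have h5 := mul_nonneg hd hh
  have h6 := mul_nonneg hd hs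
  have h7 := mul_nonneg he hh
  have h8 := mul_nonneg hh hs
  have hS : 0 < c*e+c*h+c*s+d*e+d*h+d*s+e*h+h*s := by
    by_contra hn
    have e1 : c*e = 0 := by linarith
    have e2 : c*h = 0 := by linarith
    have e3 : c*s = 0 := by linarith
    have e4 : d*e = 0 := by linarith
    have e5 : d*h = 0 := by linarith
    have e6 : d*s = 0 := by linarith
    have e7 : e*h = 0 := by linarith
    have e8 : h*s = 0 := by linarith
    simp [e1, e2, e3, e4, e5, e6, e7, e8] at hK
  have hS1 : 0 < c + d + e + h + s := by
    by_contra hn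
    have e1 : c = 0 := by linarith
    have e2 : d = 0 := by linarith
    have e3 : e = 0 := by linarith
    have e4 : h = 0 := by linarith
    have e5 : s = 0 := by linarith
    simp [e1, e2, e3, e4, e5] at hK
  unfold IB
  refine Imp.of (a-1) b 1 c s h d e 0 (by omega) hb (by omega) hc hs hh hd he le_rfl (by ring)
    ?_ ?_ ?_
  · rw [ka2]; omega
  · rw [ka3]
    have := mul_pos (show 0 < a - 1 by omega) hS1
    have := mul_nonneg hc hd
    linarith
  · rw [ka4]
    have p1 := mul_nonneg (show 0 ≤ a - 2 by omega) hS.le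
    have p2 := mul_pos (show 0 < a by omega) hS
    have p3 := mul_nonneg h4 (sub_nonneg.2 mh)
    have p4 := mul_nonneg h5 (sub_nonneg.2 me)
    have p5 := mul_nonneg h7 (sub_nonneg.2 md)
    have q1 := mul_nonneg h4 hc
    have q2 := mul_nonneg h5 hc
    have q3 := mul_nonneg h6 hc
    have q4 := mul_nonneg h6 hh
    have a0 : 0 ≤ a := by omega
    have r1 := mul_nonneg a0 h1
    have r2 := mul_nonneg a0 h2
    have r3 := mul_nonneg a0 h3
    have r6 := mul_nonneg a0 h6
    have r8 := mul_nonneg a0 h8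
    linarith

set_option maxHeartbeats 1000000 in
lemma bal_s (hs : 2 ≤ s) (ha : 0 ≤ a) (hb : 0 ≤ b) (hc : 0 ≤ c) (hh : 0 ≤ h) (hd : 0 ≤ d)
    (he : 0 ≤ e) (ma : a ≤ s) (mb : b ≤ s) (mc : c ≤ s) (mh : h ≤ s) (md : d ≤ s) (me : e ≤ s)
    (hK : 0 < K 4 a b 0 c s h d e 0) : IB a b c s h d e := by
  have hab := mul_nonneg ha hb
  have hac := mul_nonneg ha hc
  have had := mul_nonneg ha hd
  have hae := mul_nonneg ha he
  have hah := mul_nonneg ha hh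
  have hbc := mul_nonneg hb hc
  have hbd := mul_nonneg hb hd
  have hbe := mul_nonneg hb he
  have hbh := mul_nonneg hb hh
  have hcd := mul_nonneg hc hd
  have hce := mul_nonneg hc he
  have hch := mul_nonneg hc hh
  have hde := mul_nonneg hd he
  have hdh := mul_nonneg hd hh
  have heh := mul_nonneg he hh
  have s0 : 0 ≤ s := by omega
  have hK' := hK
  rw [kz4] at hK'
  have hS : 0 < a*b+a*e+b*d+d*e := by
    by_contra hn
    have e1 : a*b = 0 := by linarith
    have e2 : a*e = 0 := by linarith
    have e3 : b*d = 0 := by linarith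
    have e4 : d*e = 0 := by linarith
    simp [e1, e2, e3, e4] at hK'
  have hS1 : 0 < c + d + e + h := by
    by_contra hn
    have e1 : c = 0 := by linarith
    have e2 : d = 0 := by linarith
    have e3 : e = 0 := by linarith
    have e4 : h = 0 := by linarith
    simp [e1, e2, e3, e4] at hK'
  have hS2 : 0 < c + a + b + h := by
    by_contra hn
    have e1 : c = 0 := by linarith
    have e2 : a = 0 := by linarith
    have e3 : b = 0 := by linarith
    have e4 : h = 0 := by linarith
    simp [e1, e2, e3, e4] at hK'
  have key : 0 < (K 4 a b 1 c (s-1) h d e 0 - K 4 a b 0 c s h d e 0) +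
      (K 4 d e 1 c (s-1) h a b 0 - K 4 d e 0 c s h a b 0) := by
    rw [ks4, ks4]
    have sl : 0 ≤ s - 2 := by omega
    have zab := mul_nonneg sl hab
    have zac := mul_nonneg sl hac
    have zad := mul_nonneg sl had
    have zae := mul_nonneg sl hae
    have zah := mul_nonneg sl hah
    have zbc := mul_nonneg sl hbc
    have zbd := mul_nonneg sl hbd
    have zbh := mul_nonneg sl hbh
    have zcd := mul_nonneg sl hcd
    have zce := mul_nonneg sl hce
    have zde := mul_nonneg sl hde
    have zdh := mul_nonneg sl hdh
    have zeh := mul_nonneg sl heh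
    have yabhah := mul_nonneg hah (sub_nonneg.2 mb)
    have yabhbh := mul_nonneg hbh (sub_nonneg.2 ma)
    have ydehdh := mul_nonneg hdh (sub_nonneg.2 me)
    have ydeheh := mul_nonneg heh (sub_nonneg.2 md)
    have yabcbc := mul_nonneg hbc (sub_nonneg.2 ma)
    have yabdad := mul_nonneg had (sub_nonneg.2 mb)
    have yabdab := mul_nonneg hab (sub_nonneg.2 md)
    have yabdbd := mul_nonneg hbd (sub_nonneg.2 ma)
    have ybcdcd := mul_nonneg hcd (sub_nonneg.2 mb)
    have ycdece := mul_nonneg hce (sub_nonneg.2 md)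
    have yadead := mul_nonneg had (sub_nonneg.2 me)
    have yadeae := mul_nonneg hae (sub_nonneg.2 md)
    have yadede := mul_nonneg hde (sub_nonneg.2 ma)
    have yaceac := mul_nonneg hac (sub_nonneg.2 me)
    have xach := mul_nonneg hac hh
    have xadh := mul_nonneg had hh
    have xbce := mul_nonneg hbc he
    have xbch := mul_nonneg hbc hh
    have xbde := mul_nonneg hbd he
    have xbeh := mul_nonneg hbe hh
    have xcdh := mul_nonneg hcd hh
    have xceh := mul_nonneg hce hh
    have xabe := mul_nonneg hab he
    have w := mul_pos (show 0 < s by omega) hS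
    linarith
  have t3 : ∀ {a b d e : ℤ}, 0 ≤ a → 0 ≤ b → 0 ≤ d → 0 ≤ e → a ≤ s → b ≤ s →
      0 < c + d + e + h → K 3 a b 0 c s h d e 0 < K 3 a b 1 c (s-1) h d e 0 := by
    intro a b d e ha hb hd he ma mb hS
    rw [ks3]
    have p1 := mul_pos (show 0 < s - 1 by omega) hS
    have p2 := mul_nonneg hb he
    have := q3 (by omega) ha hb ma mb
    have := mul_nonneg hc hh
    linarith
  by_cases hp : K 4 a b 0 c s h d e 0 < K 4 a b 1 c (s-1) h d e 0
  · refine Imp.of a b 1 c (s-1) h d e 0 ha hb (by omega) hc (by omega) hh hd he le_rfl (by ring)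
      ?_ ?_ hp
    · rw [ks2]; omega
    · exact t3 ha hb hd he ma mb hS1
  · apply IB.r
    refine Imp.of d e 1 c (s-1) h a b 0 hd he (by omega) hc (by omega) hh ha hb le_rfl (by ring)
      ?_ ?_ (by linarith)
    · rw [ks2]; omega
    · exact t3 hd he ha hb md me hS2

set_option maxHeartbeats 2000000 in
lemma bal_h (hs : 2 ≤ s) (mh : s ≤ h) (ha : 0 ≤ a) (hb : 0 ≤ b) (hc : 0 ≤ c) (hd : 0 ≤ d)
    (he : 0 ≤ e) (ma : a ≤ h) (mb : b ≤ h) (mc : c ≤ h) (md : d ≤ h) (me : e ≤ h)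
    (hK : 0 < K 4 a b 0 c s h d e 0) : IB a b c s h d e := by
  have s0 : 0 ≤ s := by omega
  have hK' := hK
  rw [kz4] at hK'
  have hab := mul_nonneg ha hb
  have hac := mul_nonneg ha hc
  have had := mul_nonneg ha hd
  have hae := mul_nonneg ha he
  have has := mul_nonneg ha s0
  have hbc := mul_nonneg hb hc
  have hbd := mul_nonneg hb hd
  have hbe := mul_nonneg hb he
  have hbs := mul_nonneg hb s0
  have hcd := mul_nonneg hc hd
  have hce := mul_nonneg hc he
  have hcs := mul_nonneg hc s0
  have hds := mul_nonneg hd s0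
  have hde := mul_nonneg hd he
  have hes := mul_nonneg he s0
  have key : 0 < (K 4 a b 1 c s (h-1) d e 0 - K 4 a b 0 c s h d e 0) +
      (K 4 d e 1 c s (h-1) a b 0 - K 4 d e 0 c s h a b 0) := by
    rw [kh4, kh4]
    have yabc := mul_nonneg hbc (sub_nonneg.2 ma)
    have yabd := mul_nonneg had (sub_nonneg.2 mb)
    have yabe := mul_nonneg hbe (sub_nonneg.2 ma)
    have yabs := mul_nonneg has (sub_nonneg.2 mb)
    have yace := mul_nonneg hac (sub_nonneg.2 me)
    have yade := mul_nonneg hae (sub_nonneg.2 md)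
    have yaes := mul_nonneg hes (sub_nonneg.2 ma)
    have ybcd := mul_nonneg hcd (sub_nonneg.2 mb)
    have ybde := mul_nonneg hbd (sub_nonneg.2 me)
    have ybds := mul_nonneg hbs (sub_nonneg.2 md)
    have ycde := mul_nonneg hce (sub_nonneg.2 md)
    have ydes := mul_nonneg hds (sub_nonneg.2 me)
    have xacs := mul_nonneg hac s0
    have xads := mul_nonneg had s0
    have xbcs := mul_nonneg hbc s0
    have xcds := mul_nonneg hcd s0
    have xces := mul_nonneg hce s0
    have xbce := mul_nonneg hbc he
    have hP : 0 < a*c+a*d+a*e+a*s+b*c+b*d+b*e+b*s+c*d+c*e+d*s+e*s := by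
      by_contra hn
      have e1 : a*s + b*s + d*s + e*s = 0 := by linarith
      have e2 : a + b + d + e = 0 := by nlinarith
      have e3 : a = 0 := by linarith
      have e4 : b = 0 := by linarith
      have e5 : d = 0 := by linarith
      have e6 : e = 0 := by linarith
      simp [e3, e4, e5, e6] at hK'
    rcases eq_or_lt_of_le (show 2 ≤ h by omega) with h2 | h2
    · have s2 : s = 2 := by omega
      subst s2
      subst h2
      clear hK hP
      by_contra hn
      have f0 : 0 < a*c+a*d+b*c+c*d+c*e ∨ ¬ 0 < a*c+a*d+b*c+c*d+c*e := by tauto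
      rcases f0 with f0 | f0
      · linarith
      · have g1 : a*c = 0 := by linarith
        have g2 : a*d = 0 := by linarith
        have g3 : b*c = 0 := by linarith
        have g4 : c*d = 0 := by linarith
        have g5 : c*e = 0 := by linarith
        have c0 : c = 0 := by
          by_contra hc0
          simp [hc0] at g1 g3 g4 g5
          simp [g1, g3, g4, g5] at hK'
        subst c0
        rcases mul_eq_zero.1 g2 with z | z
        · subst z
          have t1 := mul_nonneg hbe (sub_nonneg.2 md)
          have t2 := mul_nonneg he (sub_nonneg.2 md)
          have : b = 0 ∧ d = 0 := by constructor <;> linarith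
          simp [this.1, this.2] at hK'
        · subst z
          have t1 := mul_nonneg hbe (sub_nonneg.2 ma)
          have t2 := mul_nonneg hb (sub_nonneg.2 ma)
          have : a = 0 ∧ e = 0 := by constructor <;> linarith
          simp [this.1, this.2] at hK'
    · have w := mul_pos (show 0 < h - 2 by omega) hP
      linarith
  have t3 : ∀ {a b d e : ℤ}, 0 ≤ a → 0 ≤ b → 0 ≤ d → 0 ≤ e → a ≤ h → b ≤ h →
      K 3 a b 0 c s h d e 0 < K 3 a b 1 c s (h-1) d e 0 := by
    intro a b d e ha hb hd he ma mb
    rw [kh3]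
    have p1 := mul_pos (show 0 < h - 1 by omega) (show 0 < c + d + e + s by omega)
    have := q3 (by omega) ha hb ma mb
    linarith
  by_cases hp : K 4 a b 0 c s h d e 0 < K 4 a b 1 c s (h-1) d e 0
  · refine Imp.of a b 1 c s (h-1) d e 0 ha hb (by omega) hc s0 (by omega) hd he le_rfl (by ring)
      ?_ ?_ hp
    · rw [kh2]; omega
    · exact t3 ha hb hd he ma mb
  · apply IB.r
    refine Imp.of d e 1 c s (h-1) a b 0 hd he (by omega) hc s0 (by omega) ha hb le_rfl (by ring)
      ?_ ?_ (by linarith)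
    · rw [kh2]; omega
    · exact t3 hd he ha hb md me

lemma bal (hs : 2 ≤ s) (ha : 0 ≤ a) (hb : 0 ≤ b) (hc : 0 ≤ c) (hh : 0 ≤ h) (hd : 0 ≤ d)
    (he : 0 ≤ e) (hK : 0 < K 4 a b 0 c s h d e 0) : IB a b c s h d e := by
  obtain ⟨i, -, m⟩ := Finset.exists_max_image (univ : Finset (Fin 7)) ![a, b, c, s, h, d, e]
    ⟨0, mem_univ _⟩
  simp only [mem_univ, Fin.forall_fin_succ, forall_true_left] at m
  fin_cases i <;> simp at m
  · apply bal_a <;> first | assumption | omega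
  · apply IB.cc
    rw [← kc4] at hK
    apply bal_a <;> first | assumption | omega
  · apply IB.cc
    rw [← kc4] at hK
    apply bal_s <;> first | assumption | omega
  · apply bal_s <;> first | assumption | omega
  · apply bal_h <;> first | assumption | omega
  · apply IB.r
    rw [← kr4] at hK
    apply bal_a <;> first | assumption | omega
  · apply IB.r
    apply IB.cc
    rw [← kr4, ← kc4] at hK
    apply bal_a <;> first | assumption | omega
end
end Multigraph

namespace Multigraph

section
variable (a2 a3 b1 b2 b3 r1 r2 : ℤ)
lemma kq2 : K 2 r2 a3 0 b3 r1 b2 b1 a2 0 = Q 2 0 a2 a3 b1 b2 b3 r1 r2 0 := by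
  simp only [K, Q, pI, fk332, fpr2, List.map_cons, List.map_nil, List.prod_cons, List.prod_nil,
    List.sum_cons, List.sum_nil, Matrix.cons_val]
  ring
lemma kq3 : K 3 r2 a3 0 b3 r1 b2 b1 a2 0 = Q 3 0 a2 a3 b1 b2 b3 r1 r2 0 := by
  simp only [K, Q, pI, fk333, fpr3, List.map_cons, List.map_nil, List.prod_cons, List.prod_nil,
    List.sum_cons, List.sum_nil, Matrix.cons_val]
  ring
lemma kq4 : K 4 r2 a3 0 b3 r1 b2 b1 a2 0 = Q 4 0 a2 a3 b1 b2 b3 r1 r2 0 := by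
  simp only [K, Q, pI, fk334, fpr4, List.map_cons, List.map_nil, List.prod_cons, List.prod_nil,
    List.sum_cons, List.sum_nil, Matrix.cons_val]
  ring
end
section
variable (x : Fin 9 → ℤ)
lemma reda2 : pI aL 2 x = Q 2 0 (x 2) (x 1) (x 8) (x 5) (x 4) (x 0 + x 3) (x 6) (x 7) := by
  simp only [Q, pI, fa2, fpr2, List.map_cons, List.map_nil, List.prod_cons, List.prod_nil,
    List.sum_cons, List.sum_nil, Matrix.cons_val]
  ring
lemma reda3 : pI aL 3 x = Q 3 0 (x 2) (x 1) (x 8) (x 5) (x 4) (x 0 + x 3) (x 6) (x 7) := by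
  simp only [Q, pI, fa3, fpr3, List.map_cons, List.map_nil, List.prod_cons, List.prod_nil,
    List.sum_cons, List.sum_nil, Matrix.cons_val]
  ring
lemma reda4 : pI aL 4 x = Q 4 0 (x 2) (x 1) (x 8) (x 5) (x 4) (x 0 + x 3) (x 6) (x 7) := by
  simp only [Q, pI, fa4, fpr4, List.map_cons, List.map_nil, List.prod_cons, List.prod_nil,
    List.sum_cons, List.sum_nil, Matrix.cons_val]
  ring
lemma redb2 : pI bL 2 x = Q 2 0 (x 7) (x 6) 0 (x 1) (x 0) (x 2 + x 5 + x 8) (x 3) (x 4) := by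
  simp only [Q, pI, fb2, fpr2, List.map_cons, List.map_nil, List.prod_cons, List.prod_nil,
    List.sum_cons, List.sum_nil, Matrix.cons_val]
  ring
lemma redb3 : pI bL 3 x = Q 3 0 (x 7) (x 6) 0 (x 1) (x 0) (x 2 + x 5 + x 8) (x 3) (x 4) := by
  simp only [Q, pI, fb3, fpr3, List.map_cons, List.map_nil, List.prod_cons, List.prod_nil,
    List.sum_cons, List.sum_nil, Matrix.cons_val]
  ring
lemma redb4 : pI bL 4 x = Q 4 0 (x 7) (x 6) 0 (x 1) (x 0) (x 2 + x 5 + x 8) (x 3) (x 4) := by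
  simp only [Q, pI, fb4, fpr4, List.map_cons, List.map_nil, List.prod_cons, List.prod_nil,
    List.sum_cons, List.sum_nil, Matrix.cons_val]
  ring
lemma reddd2 : pI ddL 2 x = Q 2 0 (x 6) (x 5) (x 1) (x 2) 0 (x 4 + x 7) (x 8) (x 0 + x 3) := by
  simp only [Q, pI, fdd2, fpr2, List.map_cons, List.map_nil, List.prod_cons, List.prod_nil,
    List.sum_cons, List.sum_nil, Matrix.cons_val]
  ring
lemma reddd3 : pI ddL 3 x = Q 3 0 (x 6) (x 5) (x 1) (x 2) 0 (x 4 + x 7) (x 8) (x 0 + x 3) := by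
  simp only [Q, pI, fdd3, fpr3, List.map_cons, List.map_nil, List.prod_cons, List.prod_nil,
    List.sum_cons, List.sum_nil, Matrix.cons_val]
  ring
lemma reddd4 : pI ddL 4 x = Q 4 0 (x 6) (x 5) (x 1) (x 2) 0 (x 4 + x 7) (x 8) (x 0 + x 3) := by
  simp only [Q, pI, fdd4, fpr4, List.map_cons, List.map_nil, List.prod_cons, List.prod_nil,
    List.sum_cons, List.sum_nil, Matrix.cons_val]
  ring
lemma redpr2 : pI prL 2 x = Q 2 (x 0) (x 1) (x 2) (x 3) (x 4) (x 5) (x 6) (x 7) (x 8) := by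
  simp only [Q, pI, fpr2, List.map_cons, List.map_nil, List.prod_cons, List.prod_nil,
    List.sum_cons, List.sum_nil, Matrix.cons_val]
lemma redpr3 : pI prL 3 x = Q 3 (x 0) (x 1) (x 2) (x 3) (x 4) (x 5) (x 6) (x 7) (x 8) := by
  simp only [Q, pI, fpr3, List.map_cons, List.map_nil, List.prod_cons, List.prod_nil,
    List.sum_cons, List.sum_nil, Matrix.cons_val]
lemma redpr4 : pI prL 4 x = Q 4 (x 0) (x 1) (x 2) (x 3) (x 4) (x 5) (x 6) (x 7) (x 8) := by
  simp only [Q, pI, fpr4, List.map_cons, List.map_nil, List.prod_cons, List.prod_nil,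
    List.sum_cons, List.sum_nil, Matrix.cons_val]
end

lemma prism_pos (a1 a2 a3 b1 b2 b3 r1 r2 r3 : ℤ) (ha1 : 0 ≤ a1) (ha2 : 0 ≤ a2) (ha3 : 0 ≤ a3)
    (hb1 : 0 ≤ b1) (hb2 : 0 ≤ b2) (hb3 : 0 ≤ b3) (hr1 : 0 < r1) (hr2 : 0 < r2) (hr3 : 0 < r3)
    (hQ : 0 < Q 4 a1 a2 a3 b1 b2 b3 r1 r2 r3) : IQ a1 a2 a3 b1 b2 b3 r1 r2 r3 := by
  have hp : 0 < a1+a2+a3+b1+b2+b3 := by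
    by_contra hn
    have e1 : a1 = 0 := by omega
    have e2 : a2 = 0 := by omega
    have e3 : a3 = 0 := by omega
    have e4 : b1 = 0 := by omega
    have e5 : b2 = 0 := by omega
    have e6 : b3 = 0 := by omega
    subst e1 e2 e3 e4 e5 e6
    simp [Q, pI, fpr4] at hQ
  refine prism_all (|a1-b1| + |a2-b2| + |a3-b3| + 1).toNat _ _ _ _ _ _ _ _ _ ha1 ha2 ha3 hb1 hb2
    hb3 hr1 hr2 hr3 hp ?_
  rw [Int.toNat_of_nonneg (by positivity)]
  omega

lemma prism_z (a2 a3 b1 b2 b3 r1 r2 : ℤ) (ha2 : 0 ≤ a2) (ha3 : 0 ≤ a3)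
    (hb1 : 0 ≤ b1) (hb2 : 0 ≤ b2) (hb3 : 0 ≤ b3) (hr1 : 2 ≤ r1) (hr2 : 0 ≤ r2)
    (hQ : 0 < Q 4 0 a2 a3 b1 b2 b3 r1 r2 0) : IQ 0 a2 a3 b1 b2 b3 r1 r2 0 := by
  rw [← kq4] at hQ
  have := bal hr1 hr2 ha3 hb3 hb2 hb1 ha2 hQ
  unfold IB at this
  unfold IQ
  rw [kq2, kq3, kq4] at this
  convert this using 1
  ring

lemma prism_any (a2 a3 b1 b2 b3 r1 r2 r3 : ℤ) (ha2 : 0 ≤ a2) (ha3 : 0 ≤ a3)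
    (hb1 : 0 ≤ b1) (hb2 : 0 ≤ b2) (hb3 : 0 ≤ b3) (hr1 : 2 ≤ r1) (hr2 : 0 ≤ r2) (hr3 : 0 ≤ r3)
    (hQ : 0 < Q 4 0 a2 a3 b1 b2 b3 r1 r2 r3) : IQ 0 a2 a3 b1 b2 b3 r1 r2 r3 := by
  rcases eq_or_lt_of_le hr3 with h3 | h3
  · subst h3
    exact prism_z _ _ _ _ _ _ _ ha2 ha3 hb1 hb2 hb3 hr1 hr2 hQ
  · rcases eq_or_lt_of_le hr2 with h2 | h2
    · subst h2
      rw [IQ_cy a3 0 a2 b3 b1 b2 r3 r1 0, ← IQ_sw]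
      rw [cyQ4 a3 0 a2 b3 b1 b2 r3 r1 0, ← swQ4] at hQ
      exact prism_z _ _ _ _ _ _ _ ha3 ha2 hb1 hb3 hb2 hr1 hr3 hQ
    · exact prism_pos _ _ _ _ _ _ _ _ _ le_rfl ha2 ha3 hb1 hb2 hb3 (by omega) h2 h3 hQ
end Multigraph

namespace Multigraph

lemma build {G : Multigraph} (hE : G.nE = G.nV + 3)
    (hI : Imp G.nE (G.cI 2) (G.cI 3) (G.cI 4)) :
    ∃ H : Multigraph, H.nV = G.nV ∧ H.nE = G.nE ∧ H.Connected ∧ H.Bridgeless ∧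
      G.cI 2 ≤ H.cI 2 ∧ G.cI 3 < H.cI 3 ∧ G.cI 4 < H.cI 4 := by
  obtain ⟨x, hx, hs, h2, h3, h4⟩ := hI
  let w : (mg k33L).E → ℕ := fun e => (x e).toNat
  have hw : (fun e : Fin 9 => ((w e : ℕ) : ℤ)) = x := by
    funext e
    exact Int.toNat_of_nonneg (hx e)
  have hc : ∀ i, ((subdivide (mg k33L) w).cI i : ℤ) = pI k33L i x := by
    intro i
    rw [cI_pI]
    exact congrArg _ hw
  rw [← hc] at h2 h3 h4
  have hsum : ∑ e : Fin 9, w e = G.nE := by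
    have : ((∑ e : Fin 9, w e : ℕ) : ℤ) = G.nE := by
      rw [← hs, ← hw]; push_cast; rfl
    exact_mod_cast this
  have : Nonempty (mg k33L).V := ⟨(0 : Fin 6)⟩
  have hz : ZeroAcyclic (mg k33L) w := by
    have hpos : 0 < (subdivide (mg k33L) w).cI 4 := by
      have : (0 : ℤ) ≤ G.cI 4 := by positivity
      exact_mod_cast lt_of_le_of_lt this h4
    unfold cI at hpos
    obtain ⟨F, hF⟩ := Finset.card_pos.1 hpos
    simp only [mem_filter, mem_univ, true_and] at hF
    obtain ⟨hF4, hF⟩ := hF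
    obtain ⟨hi, hF⟩ := (sub_conn_iff (mg k33L) w F).1 hF
    refine zeroAcyclic_of (mg k33L) w (F.image Sigma.fst) hF ?_ ?_
    · intro e he
      obtain ⟨y, _, rfl⟩ := mem_image.1 he
      exact y.2.pos
    · have hcd : (F.image Sigma.fst).card = 4 :=
        (card_image_of_injOn (fun a ha b hb => hi a ha b hb)).trans hF4
      rw [hcd]
      show Fintype.card (Fin 9) + 1 = Fintype.card (Fin 6) + 4
      simp
  have hnE : (subdivide (mg k33L) w).nE = G.nE := by
    rw [← hsum]
    show Fintype.card (Σ f : Fin 9, Fin (w f)) = _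
    simp
  refine ⟨subdivide (mg k33L) w, ?_, hnE, ?_, ?_, by exact_mod_cast h2, by exact_mod_cast h3,
    by exact_mod_cast h4⟩
  · have h5 : (subdivide (mg k33L) w).nV = Fintype.card (Quot (zeroRel (mg k33L) w)) +
        ∑ f : Fin 9, (w f - 1) := by
      show Fintype.card (Quot (zeroRel (mg k33L) w) ⊕ (Σ f : Fin 9, Fin (w f - 1))) = _
      simp
    have h6 : Fintype.card (Quot (zeroRel (mg k33L) w)) +
        (univ.filter fun e : Fin 9 => w e = 0).card = 6 := by
      have h := hz
      unfold ZeroAcyclic at h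
      rw [show Fintype.card (mg k33L).V = 6 from Fintype.card_fin 6] at h
      exact h
    have h7 : ∑ f : Fin 9, (w f - 1) + 9 = ∑ f : Fin 9, w f +
        (univ.filter fun e : Fin 9 => w e = 0).card := by
      have h8 : ∀ f : Fin 9, (w f - 1) + 1 = w f + if w f = 0 then 1 else 0 := by
        intro f; split_ifs <;> omega
      rw [card_filter, ← sum_add_distrib, ← sum_congr rfl (fun f _ => h8 f), sum_add_distrib]
      simp
    omega
  · have := (sub_conn_iff (mg k33L) w ∅).2 ⟨by simp, by
      rw [image_empty, sdiff_empty]; exact mg_conn k33L (by decide +kernel)⟩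
    exact this.mono (subset_univ _)
  · intro (y : Σ f : (mg k33L).E, Fin (w f)) hy
    refine hy ((sub_conn_iff (mg k33L) w {y}).2 ⟨by
      intro a ha b hb _
      rw [mem_singleton.1 ha, mem_singleton.1 hb], ?_⟩)
    rw [image_singleton]
    refine (chk_iff k33L [y.1] {y.1} (by intro z; exact mem_singleton.trans List.mem_singleton.symm)).2 ?_
    have : ∀ e : Fin 9, chk k33L [e] = true := by decide +kernel
    exact this _

lemma cI4_pos {G : Multigraph} [Nonempty G.V] (hG : G.Connected) (hE : G.nE = G.nV + 3) :
    0 < G.cI 4 := by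
  obtain ⟨T, -, hT, hc⟩ := ConnOn.exists_tree hG
  apply Finset.card_pos.2
  refine ⟨univ \ T, ?_⟩
  simp only [mem_filter, mem_univ, true_and]
  constructor
  · rw [card_sdiff_of_subset (subset_univ T), card_univ]
    have : Fintype.card G.E = G.nE := rfl
    omega
  · exact hT.mono (fun x hx => by simp [hx])

lemma inv_symm {G H : Multigraph} (f : MGIso G H) : Nonempty (MGIso H G) := by
  refine ⟨⟨f.vMap.symm, f.eMap.symm, ?_⟩⟩
  intro e
  obtain ⟨e, rfl⟩ := f.eMap.surjective e
  rcases f.ends_eq e with ⟨h1, h2⟩ | ⟨h1, h2⟩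
  · left; rw [h1, h2]; simp
  · right; rw [h1, h2]; simp

lemma ws_vals {G : Multigraph} {L : List (ℕ × ℕ)} {w : Fin 9 → ℕ}
    (h : IsWeakSubdivision G (mg L) w) :
    (∀ i, (G.cI i : ℤ) = pI L i (fun e => (w e : ℤ))) ∧ (G.nE : ℤ) = ∑ e : Fin 9, (w e : ℤ) := by
  obtain ⟨-, ⟨f⟩⟩ := h
  obtain ⟨g⟩ := inv_symm f
  constructor
  · intro i
    refine Eq.trans ?_ (cI_pI L w i)
    exact_mod_cast le_antisymm (cI_iso f i) (cI_iso g i)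
  · have h1 : G.nE = Fintype.card (Σ e : Fin 9, Fin (w e)) := Fintype.card_congr f.eMap
    rw [h1]
    simp

lemma imp_pr {G : Multigraph} [Nonempty G.V] (hG : G.Connected) (hE : G.nE = G.nV + 3)
    (hn : ¬ ∃ w : K33.E → ℕ, IsWeakSubdivision G K33 w) (h : HasM G prL univ 4) :
    Imp G.nE (G.cI 2) (G.cI 3) (G.cI 4) := by
  obtain ⟨w, hw, hz⟩ := mg_ws hG hE prL (by decide +kernel) (by decide +kernel) (by decide +kernel) h
  obtain ⟨hc, hs⟩ := ws_vals hw
  have h4 := cI4_pos hG hE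
  have h4' : (0 : ℤ) < G.cI 4 := by exact_mod_cast h4
  have hk : ¬ HasM G k33L univ 4 := fun h => hn (k33_ws hG hE h)
  have z6 : w 6 ≠ 0 := fun h0 => hk (hz 6 [0,1,3,4,5,2] k33L (by decide +kernel) h0)
  have z7 : w 7 ≠ 0 := fun h0 => hk (hz 7 [0,1,3,4,5,2] k33L (by decide +kernel) h0)
  have z8 : w 8 ≠ 0 := fun h0 => hk (hz 8 [0,3,1,4,2,5] k33L (by decide +kernel) h0)
  simp only [hc] at h4' ⊢
  rw [hs]
  rw [redpr4] at h4'
  rw [redpr2, redpr3, redpr4]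
  have := prism_pos _ _ _ _ _ _ _ _ _ (by omega) (by omega) (by omega) (by omega) (by omega)
    (by omega) (by omega) (by omega) (by omega) h4'
  unfold IQ at this
  convert this using 1
  simp [Fin.sum_univ_succ]; ring

lemma imp_a {G : Multigraph} [Nonempty G.V] (hG : G.Connected) (hE : G.nE = G.nV + 3)
    (hn : ¬ ∃ w : K33.E → ℕ, IsWeakSubdivision G K33 w) (h : HasM G aL univ 4) :
    Imp G.nE (G.cI 2) (G.cI 3) (G.cI 4) := by
  obtain ⟨w, hw, hz⟩ := mg_ws hG hE aL (by decide +kernel) (by decide +kernel) (by decide +kernel) h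
  by_cases z0 : w 0 = 0
  · exact imp_pr hG hE hn (hz 0 [0,4,3,5,2,1] prL (by decide +kernel) z0)
  by_cases z3 : w 3 = 0
  · exact imp_pr hG hE hn (hz 3 [0,4,1,2,3,5] prL (by decide +kernel) z3)
  obtain ⟨hc, hs⟩ := ws_vals hw
  have h4 := cI4_pos hG hE
  have h4' : (0 : ℤ) < G.cI 4 := by exact_mod_cast h4
  simp only [hc] at h4' ⊢
  rw [hs]
  rw [reda4] at h4'
  rw [reda2, reda3, reda4]
  have := prism_any _ _ _ _ _ _ _ _ (by omega) (by omega) (by omega) (by omega) (by omega)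
    (by omega) (by omega) (by omega) h4'
  unfold IQ at this
  convert this using 1
  simp [Fin.sum_univ_succ]; ring

lemma imp_b {G : Multigraph} [Nonempty G.V] (hG : G.Connected) (hE : G.nE = G.nV + 3)
    (hn : ¬ ∃ w : K33.E → ℕ, IsWeakSubdivision G K33 w) (h : HasM G bL univ 4) :
    Imp G.nE (G.cI 2) (G.cI 3) (G.cI 4) := by
  obtain ⟨w, hw, hz⟩ := mg_ws hG hE bL (by decide +kernel) (by decide +kernel) (by decide +kernel) h
  by_cases z2 : w 2 = 0
  · exact imp_a hG hE hn (hz 2 [0,2,3,1,5,4] aL (by decide +kernel) z2)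
  by_cases z5 : w 5 = 0
  · exact imp_a hG hE hn (hz 5 [4,5,1,2,3,0] aL (by decide +kernel) z5)
  obtain ⟨hc, hs⟩ := ws_vals hw
  have h4 := cI4_pos hG hE
  have h4' : (0 : ℤ) < G.cI 4 := by exact_mod_cast h4
  simp only [hc] at h4' ⊢
  rw [hs]
  rw [redb4] at h4'
  rw [redb2, redb3, redb4]
  have := prism_any _ _ _ _ _ _ _ _ (by omega) (by omega) (by omega) (by omega) (by omega)
    (by omega) (by omega) (by omega) h4'
  unfold IQ at this
  convert this using 1
  simp [Fin.sum_univ_succ]; ring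

lemma imp_dd {G : Multigraph} [Nonempty G.V] (hG : G.Connected) (hE : G.nE = G.nV + 3)
    (hn : ¬ ∃ w : K33.E → ℕ, IsWeakSubdivision G K33 w) (h : HasM G ddL univ 4) :
    Imp G.nE (G.cI 2) (G.cI 3) (G.cI 4) := by
  obtain ⟨w, hw, hz⟩ := mg_ws hG hE ddL (by decide +kernel) (by decide +kernel) (by decide +kernel) h
  by_cases z4 : w 4 = 0
  · exact imp_a hG hE hn (hz 4 [0,1,4,5,2,3] aL (by decide +kernel) z4)
  by_cases z7 : w 7 = 0
  · exact imp_a hG hE hn (hz 7 [0,1,4,5,2,3] aL (by decide +kernel) z7)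
  obtain ⟨hc, hs⟩ := ws_vals hw
  have h4 := cI4_pos hG hE
  have h4' : (0 : ℤ) < G.cI 4 := by exact_mod_cast h4
  simp only [hc] at h4' ⊢
  rw [hs]
  rw [reddd4] at h4'
  rw [reddd2, reddd3, reddd4]
  have := prism_any _ _ _ _ _ _ _ _ (by omega) (by omega) (by omega) (by omega) (by omega)
    (by omega) (by omega) (by omega) h4'
  unfold IQ at this
  convert this using 1
  simp [Fin.sum_univ_succ]; ring

lemma improve {G : Multigraph} [Nonempty G.V] (hG : G.Connected) (hE : G.nE = G.nV + 3)
    (hn : ¬ ∃ w : K33.E → ℕ, IsWeakSubdivision G K33 w) :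
    ∃ H : Multigraph, H.nV = G.nV ∧ H.nE = G.nE ∧ H.Connected ∧ H.Bridgeless ∧
      G.cI 2 ≤ H.cI 2 ∧ G.cI 3 < H.cI 3 ∧ G.cI 4 < H.cI 4 := by
  by_cases hb : G.Bridgeless
  · apply build hE
    rcases five_models hG hb hE with h | h | h | h | h
    · exact absurd (k33_ws hG hE h) hn
    · exact imp_pr hG hE hn h
    · exact imp_a hG hE hn h
    · exact imp_b hG hE hn h
    · exact imp_dd hG hE hn h
  · exact bridge_full _ G le_rfl hG hE hb
end Multigraph

theorem p_optimal_k3_is_K33_subdivision (n : ℕ) (hn : 1 ≤ n) :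
    (∀ G : Multigraph, memG G n (n + 3) →
      (¬ ∃ w : K33.E → ℕ, IsWeakSubdivision G K33 w) →
      ∃ H : Multigraph, memG H n (n + 3) ∧ H.Bridgeless ∧
        H.d 2 ≤ G.d 2 ∧ H.d 3 < G.d 3 ∧ H.d 4 < G.d 4) ∧
    (∀ p : ℝ, 0 < p → p < 1 → ∀ G : Multigraph, pOptimal G n (n + 3) p →
      ∃ w : K33.E → ℕ, IsWeakSubdivision G K33 w) := by
  have ne : ∀ G : Multigraph, G.nV = n → Nonempty G.V := by
    intro G h
    apply Fintype.card_pos_iff.1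
    have : Fintype.card G.V = n := h
    omega
  constructor
  · intro G ⟨hV, hE, hc⟩ hno
    have := ne G hV
    obtain ⟨H, hHV, hHE, hHc, hHb, h2, h3, h4⟩ := Multigraph.improve hc (by omega) hno
    refine ⟨H, ⟨by omega, by omega, hHc⟩, hHb, ?_⟩
    have k := fun i => Multigraph.d_add_cI (G := G) i
    have k' := fun i => Multigraph.d_add_cI (G := H) i
    rw [hHE] at k'
    have := k 2; have := k' 2; have := k 3; have := k' 3; have := k 4; have := k' 4
    refine ⟨?_, ?_, ?_⟩ <;> omega
  · intro p hp hp1 G ⟨⟨hV, hE, hc⟩, hopt⟩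
    by_contra hno
    have := ne G hV
    obtain ⟨H, hHV, hHE, hHc, hHb, h2, h3, h4⟩ := Multigraph.improve hc (by omega) hno
    have := ne H (by omega)
    have := Multigraph.rel_lt hHV (by omega) hHE hHc hHb h2 h3 h4 p hp hp1
    have := hopt H ⟨by omega, by omega, hHc⟩
    linarith
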